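/- Assume, in addition to the standing assumptions for existence, that r ↦ g(t,x,r) is decreasing for every t ≥ 0 and x ∈ Bd(D), and that there is a continuous function m : [0,∞) → [0,∞) with m(0) = 0 such that |f(t,x,r,p) − f(t,y,r,p)| ≤ m(|x − y|(1 + |p|)) for all t ≥ 0, x, y ∈ cl(D), r ∈ ℝ, p ∈ ℝ^d. Let T > 0, let u be a viscosity subsolution and v a viscosity supersolution of the parabolic variational inequality with u(0,x) = v(0,x) = h(x) for all x ∈ cl(D). Then u(t,x) ≤ v(t,x) for all (t,x) ∈ [0,T]×cl(D). -/

import Mathlib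

open Filter Topology Matrix

noncomputable section

/-- Euclidean dot product on `Fin d → ℝ`. -/
def dotp {d : ℕ} (v w : Fin d → ℝ) : ℝ := ∑ i, v i * w i

/-- Euclidean norm on `Fin d → ℝ`. -/
def eunorm {d : ℕ} (v : Fin d → ℝ) : ℝ := Real.sqrt (∑ i, (v i)^2)

/-- Frobenius norm of a matrix. -/
def matNorm {d : ℕ} (M : Matrix (Fin d) (Fin d) ℝ) : ℝ :=
  Real.sqrt (∑ i, ∑ j, (M i j)^2)

/-- Gradient vector of a real function on `Fin d → ℝ`. -/
def gradVec {d : ℕ} (ℓ : (Fin d → ℝ) → ℝ) (x : Fin d → ℝ) : Fin d → ℝ :=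
  fun i => fderiv ℝ ℓ x (Pi.single i 1)

/-- Subdifferential of a proper convex function `φ : ℝ → EReal`. -/
def subd (φ : ℝ → EReal) (x : ℝ) : Set ℝ :=
  {v | ∀ y : ℝ, ((v * (y - x) : ℝ) : EReal) + φ x ≤ φ y}

/-- `φ : ℝ → (−∞,+∞]` is proper, convex and lower semicontinuous. -/
def ProperConvexLsc (φ : ℝ → EReal) : Prop :=
  (∃ r : ℝ, φ r ≠ ⊤) ∧ (∀ r : ℝ, φ r ≠ ⊥) ∧ LowerSemicontinuous φ ∧
    ∀ x y a b : ℝ, 0 ≤ a → 0 ≤ b → a + b = 1 →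
      φ (a * x + b * y) ≤ (a : EReal) * φ x + (b : EReal) * φ y

/-- Left derivative of a convex `φ : ℝ → EReal` (the limit as `h ↓ 0` of the
difference quotients `(φ(y) − φ(y−h))/h`, which is their supremum). -/
def leftD (φ : ℝ → EReal) (y : ℝ) : EReal :=
  ⨆ h : Set.Ioi (0:ℝ), (((1 : ℝ)/(h : ℝ)) : EReal) * (φ y - φ (y - (h:ℝ)))

/-- Right derivative of a convex `φ : ℝ → EReal` (the limit as `h ↓ 0` of the
difference quotients `(φ(y+h) − φ(y))/h`, which is their infimum). -/
def rightD (φ : ℝ → EReal) (y : ℝ) : EReal :=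
  ⨅ h : Set.Ioi (0:ℝ), (((1 : ℝ)/(h : ℝ)) : EReal) * (φ (y + (h:ℝ)) - φ y)

/-- `(p,q,X)` belongs to the parabolic superjet `P^{2,+}u(t,x)` relative to
`[0,∞) × clD`. -/
def InSuperjet {d : ℕ} (clD : Set (Fin d → ℝ)) (u : ℝ → (Fin d → ℝ) → ℝ)
    (t : ℝ) (x : Fin d → ℝ) (p : ℝ) (q : Fin d → ℝ)
    (X : Matrix (Fin d) (Fin d) ℝ) : Prop :=
  X.IsSymm ∧
  ∃ o : ℝ → ℝ, ContinuousOn o (Set.Ici 0) ∧ o 0 = 0 ∧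
    Tendsto (fun r => o r / r) (𝓝[>] (0:ℝ)) (𝓝 0) ∧
    ∃ δ > (0:ℝ), ∀ s : ℝ, 0 ≤ s → ∀ y ∈ clD,
      |s - t| < δ → eunorm (y - x) < δ →
      u s y ≤ u t x + p * (s - t) + dotp q (y - x)
        + (1/2) * dotp (X.mulVec (y - x)) (y - x)
        + o (|s - t| + (eunorm (y - x))^2)

/-- `(p,q,X)` belongs to the parabolic subjet `P^{2,−}u(t,x)` relative to
`[0,∞) × clD`. -/
def InSubjet {d : ℕ} (clD : Set (Fin d → ℝ)) (u : ℝ → (Fin d → ℝ) → ℝ)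
    (t : ℝ) (x : Fin d → ℝ) (p : ℝ) (q : Fin d → ℝ)
    (X : Matrix (Fin d) (Fin d) ℝ) : Prop :=
  X.IsSymm ∧
  ∃ o : ℝ → ℝ, ContinuousOn o (Set.Ici 0) ∧ o 0 = 0 ∧
    Tendsto (fun r => o r / r) (𝓝[>] (0:ℝ)) (𝓝 0) ∧
    ∃ δ > (0:ℝ), ∀ s : ℝ, 0 ≤ s → ∀ y ∈ clD,
      |s - t| < δ → eunorm (y - x) < δ →
      u t x + p * (s - t) + dotp q (y - x)
        + (1/2) * dotp (X.mulVec (y - x)) (y - x)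
        + o (|s - t| + (eunorm (y - x))^2) ≤ u s y

/-- `V(t,x,p,q,X) = p − ½Tr((σσ*)(t,x)X) − ⟨b(t,x),q⟩ − f(t,x,u(t,x),qσ(t,x))`. -/
def Vop {d : ℕ} (b : ℝ → (Fin d → ℝ) → (Fin d → ℝ))
    (σ : ℝ → (Fin d → ℝ) → Matrix (Fin d) (Fin d) ℝ)
    (f : ℝ → (Fin d → ℝ) → ℝ → (Fin d → ℝ) → ℝ)
    (u : ℝ → (Fin d → ℝ) → ℝ)
    (t : ℝ) (x : Fin d → ℝ) (p : ℝ) (q : Fin d → ℝ)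
    (X : Matrix (Fin d) (Fin d) ℝ) : ℝ :=
  p - (1/2) * Matrix.trace (σ t x * (σ t x)ᵀ * X) - dotp (b t x) q
    - f t x (u t x) (Matrix.vecMul q (σ t x))

/-- Viscosity subsolution of the parabolic variational inequality. -/
def IsViscSubsolution {d : ℕ} (ℓ : (Fin d → ℝ) → ℝ)
    (b : ℝ → (Fin d → ℝ) → (Fin d → ℝ))
    (σ : ℝ → (Fin d → ℝ) → Matrix (Fin d) (Fin d) ℝ)
    (f : ℝ → (Fin d → ℝ) → ℝ → (Fin d → ℝ) → ℝ)
    (g : ℝ → (Fin d → ℝ) → ℝ → ℝ)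
    (h : (Fin d → ℝ) → ℝ)
    (φ ψ : ℝ → EReal)
    (u : ℝ → (Fin d → ℝ) → ℝ) : Prop :=
  ContinuousOn (fun tx : ℝ × (Fin d → ℝ) => u tx.1 tx.2)
      (Set.Ici 0 ×ˢ {x | ℓ x ≤ 0}) ∧
  (∀ x, ℓ x ≤ 0 → u 0 x = h x) ∧
  (∀ t > (0:ℝ), ∀ x, ℓ x ≤ 0 → φ (u t x) ≠ ⊤) ∧
  (∀ t > (0:ℝ), ∀ x, ℓ x = 0 → ψ (u t x) ≠ ⊤) ∧
  (∀ t > (0:ℝ), ∀ x, ℓ x ≤ 0 → ∀ p q X,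
    InSuperjet {x | ℓ x ≤ 0} u t x p q X →
      (ℓ x < 0 →
        ((Vop b σ f u t x p q X : ℝ) : EReal) + leftD φ (u t x) ≤ 0) ∧
      (ℓ x = 0 →
        (((Vop b σ f u t x p q X : ℝ) : EReal) + leftD φ (u t x) ≤ 0 ∨
          ((dotp (gradVec ℓ x) q - g t x (u t x) : ℝ) : EReal)
            + leftD ψ (u t x) ≤ 0)))

/-- Viscosity supersolution of the parabolic variational inequality. -/
def IsViscSupersolution {d : ℕ} (ℓ : (Fin d → ℝ) → ℝ)
    (b : ℝ → (Fin d → ℝ) → (Fin d → ℝ))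
    (σ : ℝ → (Fin d → ℝ) → Matrix (Fin d) (Fin d) ℝ)
    (f : ℝ → (Fin d → ℝ) → ℝ → (Fin d → ℝ) → ℝ)
    (g : ℝ → (Fin d → ℝ) → ℝ → ℝ)
    (h : (Fin d → ℝ) → ℝ)
    (φ ψ : ℝ → EReal)
    (u : ℝ → (Fin d → ℝ) → ℝ) : Prop :=
  ContinuousOn (fun tx : ℝ × (Fin d → ℝ) => u tx.1 tx.2)
      (Set.Ici 0 ×ˢ {x | ℓ x ≤ 0}) ∧
  (∀ x, ℓ x ≤ 0 → u 0 x = h x) ∧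
  (∀ t > (0:ℝ), ∀ x, ℓ x ≤ 0 → φ (u t x) ≠ ⊤) ∧
  (∀ t > (0:ℝ), ∀ x, ℓ x = 0 → ψ (u t x) ≠ ⊤) ∧
  (∀ t > (0:ℝ), ∀ x, ℓ x ≤ 0 → ∀ p q X,
    InSubjet {x | ℓ x ≤ 0} u t x p q X →
      (ℓ x < 0 →
        0 ≤ ((Vop b σ f u t x p q X : ℝ) : EReal) + rightD φ (u t x)) ∧
      (ℓ x = 0 →
        (0 ≤ ((Vop b σ f u t x p q X : ℝ) : EReal) + rightD φ (u t x) ∨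
          0 ≤ ((dotp (gradVec ℓ x) q - g t x (u t x) : ℝ) : EReal)
            + rightD ψ (u t x))))

/-!
If `u > v` somewhere, the discounted difference `(u - v - δ ℓ) exp (-ρ t)` has a positive maximum
at a positive time, so that `u - v` is touched from above by `θ exp (ρ t) + δ ℓ`. Doubling the
variables around the maximum produces coupled semijets of `u` and `v` at nearby points. The theorem
on sums behind this needs no Aleksandrov theorem: Lasry–Lions regularizations are `C^{1,1}`, so
Rademacher's theorem differentiates their gradients almost everywhere, and Jensen's lemma finds
points of twice differentiability among the maxima of small tilts.

Since the one-sided slopes of a convex function increase and `u > v`, some number separates the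
left slopes of `ψ` at `u` from its right slopes at `v`. Tilting the gradients of the jets by a
multiple of `∇ℓ` adapted to this number makes both boundary alternatives fail, and `δ ℓ` provides
the strictness. Both interior inequalities therefore hold; their difference has the slopes of `φ`
with the favourable sign and bounds the time slope `θ ρ exp (ρ t)` of the touching function by terms
of order `δ` plus `α (u - v)`, which is absurd for `ρ > α` and small `δ`.
-/

/-! ### Lasry–Lions regularization -/

section Regularization

variable {E : Type*} [NormedAddCommGroup E]

/-- Sup-convolution of `u` restricted to `K` with the kernel `c / 2 * ‖x - y‖ ^ 2`. As a real
supremum it is only meaningful where it is bounded above, in particular for continuous `u` on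
compact `K`. -/
def supConv (K : Set E) (c : ℝ) (u : E → ℝ) (y : E) : ℝ :=
  ⨆ x : K, u x - c / 2 * ‖(x : E) - y‖ ^ 2

/-- Moreau envelope (inf-convolution) of `G` with the kernel `c * ‖y - ξ‖ ^ 2`. As a real infimum
it is only meaningful where it is bounded below, in particular where a proximal point exists. -/
def moreauEnvelope (c : ℝ) (G : E → ℝ) (ξ : E) : ℝ :=
  ⨅ y, G y + c * ‖y - ξ‖ ^ 2

/-- `y` is a proximal point of `ξ`: it realizes the infimum in `moreauEnvelope c G ξ`. -/
def IsProximalPoint (c : ℝ) (G : E → ℝ) (ξ y : E) : Prop :=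
  ∀ z, G y + c * ‖y - ξ‖ ^ 2 ≤ G z + c * ‖z - ξ‖ ^ 2

variable {K : Set E} {c : ℝ} {u G : E → ℝ}

/-- Lasry–Lions regularization of `u` on `K`: the Moreau envelope of the sup-convolution. The
kernel of the second step is twice as strong as that of the first, which makes the
result `C^{1,1}`. -/
def lasryLions (K : Set E) (c : ℝ) (u : E → ℝ) : E → ℝ :=
  moreauEnvelope c (supConv K c u)

theorem bddAbove_supConv (hK : IsCompact K) (hu : ContinuousOn u K) (y : E) :
    BddAbove (Set.range fun x : K => u x - c / 2 * ‖(x : E) - y‖ ^ 2) := by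
  have hcont : ContinuousOn (fun x => u x - c / 2 * ‖x - y‖ ^ 2) K := hu.sub (by fun_prop)
  simpa only [Set.image_eq_range] using hK.bddAbove_image hcont

theorem le_supConv (hK : IsCompact K) (hu : ContinuousOn u K) {x : E} (hx : x ∈ K) (y : E) :
    u x - c / 2 * ‖x - y‖ ^ 2 ≤ supConv K c u y :=
  le_ciSup (bddAbove_supConv hK hu y) ⟨x, hx⟩

theorem exists_supConv_eq (hK : IsCompact K) (hne : K.Nonempty) (hu : ContinuousOn u K) (y : E) :
    ∃ x ∈ K, supConv K c u y = u x - c / 2 * ‖x - y‖ ^ 2 := by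
  obtain ⟨x, hx, hmax⟩ := hK.exists_isMaxOn (f := fun x => u x - c / 2 * ‖x - y‖ ^ 2) hne
    (hu.sub (by fun_prop))
  have : Nonempty K := hne.to_subtype
  exact ⟨x, hx, (ciSup_le fun z => hmax z.2).antisymm (le_supConv hK hu hx y)⟩

theorem IsProximalPoint.moreauEnvelope_le {ξ y : E} (hy : IsProximalPoint c G ξ y) (z : E) :
    moreauEnvelope c G ξ ≤ G z + c * ‖z - ξ‖ ^ 2 :=
  ciInf_le ⟨_, Set.forall_mem_range.2 hy⟩ z

theorem IsProximalPoint.moreauEnvelope_eq {ξ y : E} (hy : IsProximalPoint c G ξ y) :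
    moreauEnvelope c G ξ = G y + c * ‖y - ξ‖ ^ 2 :=
  (hy.moreauEnvelope_le y).antisymm (le_ciInf hy)

theorem IsProximalPoint.exists_lasryLions_le (hK : IsCompact K) (hne : K.Nonempty)
    (hu : ContinuousOn u K) {ξ y : E} (hy : IsProximalPoint c (supConv K c u) ξ y) :
    ∃ x ∈ K, lasryLions K c u ξ ≤ u x - c / 2 * ‖x - ξ‖ ^ 2 := by
  obtain ⟨x, hx, hxξ⟩ := exists_supConv_eq hK hne hu ξ
  exact ⟨x, hx, hxξ ▸ (hy.moreauEnvelope_le ξ).trans_eq (by simp)⟩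

variable [InnerProductSpace ℝ E]

/-- `p` is a (global) proximal subgradient of `G` at `y` with constant `c`. Having one at every
point means that `G` is `c`-semiconvex. -/
def IsProximalSubgradient (c : ℝ) (G : E → ℝ) (p y : E) : Prop :=
  ∀ z, G y + inner ℝ p (z - y) - c / 2 * ‖z - y‖ ^ 2 ≤ G z

theorem isProximalSubgradient_supConv (hK : IsCompact K) (hu : ContinuousOn u K) {x y : E}
    (hx : x ∈ K) (hxy : supConv K c u y = u x - c / 2 * ‖x - y‖ ^ 2) :
    IsProximalSubgradient c (supConv K c u) (c • (x - y)) y := by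
  intro z
  have hexpand : ‖x - z‖ ^ 2 = ‖x - y‖ ^ 2 - 2 * inner ℝ (x - y) (z - y) + ‖z - y‖ ^ 2 := by
    rw [← norm_sub_sq_real, sub_sub_sub_cancel_right]
  have hle := le_supConv (c := c) hK hu hx z
  rw [hexpand] at hle
  rw [hxy, real_inner_smul_left]
  linarith

theorem IsProximalSubgradient.lowerSemicontinuousAt {p y : E} (hp : IsProximalSubgradient c G p y) :
    LowerSemicontinuousAt G y := by
  intro a ha
  have hcont : Continuous fun z => G y + inner ℝ p (z - y) - c / 2 * ‖z - y‖ ^ 2 := by fun_prop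
  have hnear : ∀ᶠ z in 𝓝 y, a < G y + inner ℝ p (z - y) - c / 2 * ‖z - y‖ ^ 2 :=
    (hcont.tendsto y).eventually_const_lt (by simpa using ha)
  filter_upwards [hnear] with z hz using hz.trans_le (hp z)

theorem exists_isProximalPoint [FiniteDimensional ℝ E] (hc : 0 < c)
    (hG : ∀ y, ∃ p, IsProximalSubgradient c G p y) (ξ : E) : ∃ y, IsProximalPoint c G ξ y := by
  obtain ⟨p, hp⟩ := hG ξ
  have hlsc : LowerSemicontinuous fun y => G y + c * ‖y - ξ‖ ^ 2 :=
    LowerSemicontinuous.add (fun y => (hG y).choose_spec.lowerSemicontinuousAt)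
      (Continuous.lowerSemicontinuous (by fun_prop))
  have hball : ξ ∈ Metric.closedBall ξ (2 * ‖p‖ / c) :=
    Metric.mem_closedBall_self (by positivity)
  obtain ⟨y, -, hy⟩ := (hlsc.lowerSemicontinuousOn _).exists_isMinOn ⟨ξ, hball⟩
    (isCompact_closedBall ξ (2 * ‖p‖ / c))
  refine ⟨y, fun z => ?_⟩
  by_cases hz : z ∈ Metric.closedBall ξ (2 * ‖p‖ / c)
  · exact hy hz
  · refine (hy hball).trans ?_
    have hfar : 2 * ‖p‖ < c * ‖z - ξ‖ := by
      rw [Metric.mem_closedBall, dist_eq_norm, not_le, div_lt_iff₀ hc] at hz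
      linarith
    have hinner := (abs_le.1 (abs_real_inner_le_norm p (z - ξ))).1
    have hcoercive : 2 * ‖p‖ * ‖z - ξ‖ ≤ c * ‖z - ξ‖ * ‖z - ξ‖ := by gcongr
    have hpz := hp z
    simp only [sub_self, norm_zero]
    linarith

/-- The midpoint of `y` and `z`, where `G` has a proximal subgradient, witnesses the strong
convexity of `G + c * ‖· - ξ‖ ^ 2`. -/
theorem IsProximalPoint.add_le {ξ y : E} (hG : ∀ y, ∃ p, IsProximalSubgradient c G p y)
    (hy : IsProximalPoint c G ξ y) (z : E) :
    G y + c * ‖y - ξ‖ ^ 2 + c / 4 * ‖z - y‖ ^ 2 ≤ G z + c * ‖z - ξ‖ ^ 2 := by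
  obtain ⟨a, ha⟩ : ∃ a, a = (1 / 2 : ℝ) • (y + z) := ⟨_, rfl⟩
  obtain ⟨h, hh⟩ : ∃ h, h = (1 / 2 : ℝ) • (z - y) := ⟨_, rfl⟩
  obtain ⟨p, hp⟩ := hG a
  have hpy := hp y
  have hpz := hp z
  have hmid := hy a
  rw [show y - a = -h by rw [ha, hh]; module, inner_neg_right, norm_neg] at hpy
  rw [show z - a = h by rw [ha, hh]; module] at hpz
  rw [show y - ξ = (a - ξ) - h by rw [ha, hh]; module, norm_sub_sq_real] at hmid ⊢
  rw [show z - ξ = (a - ξ) + h by rw [ha, hh]; module, norm_add_sq_real,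
    show z - y = (2 : ℝ) • h by rw [hh]; module, norm_smul, mul_pow, Real.norm_two]
  linarith

theorem IsProximalPoint.norm_sub_le (hc : 0 < c) (hG : ∀ y, ∃ p, IsProximalSubgradient c G p y)
    {ξ ξ' y y' : E} (hy : IsProximalPoint c G ξ y) (hy' : IsProximalPoint c G ξ' y') :
    ‖y - y'‖ ≤ 4 * ‖ξ - ξ'‖ := by
  have hgrow := hy.add_le hG y'
  have hgrow' := hy'.add_le hG y
  have hpolar : ‖y' - ξ‖ ^ 2 - ‖y - ξ‖ ^ 2 + ‖y - ξ'‖ ^ 2 - ‖y' - ξ'‖ ^ 2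
      = 2 * inner ℝ (y - y') (ξ - ξ') := by
    simp only [norm_sub_sq_real, inner_sub_left, inner_sub_right]
    ring
  rw [norm_sub_rev y' y] at hgrow
  have hsq : c * ‖y - y'‖ ^ 2 ≤ c * (4 * inner ℝ (y - y') (ξ - ξ')) := by
    linear_combination 2 * hgrow + 2 * hgrow' + 2 * c * hpolar
  have hcs := real_inner_le_norm (y - y') (ξ - ξ')
  have hle : ‖y - y'‖ * ‖y - y'‖ ≤ ‖y - y'‖ * (4 * ‖ξ - ξ'‖) := by
    linarith [le_of_mul_le_mul_left hsq hc]
  rcases (norm_nonneg (y - y')).eq_or_lt with h0 | hpos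
  · rw [← h0]
    positivity
  · exact le_of_mul_le_mul_left hle hpos

theorem IsProximalPoint.moreauEnvelope_le_quadratic {ξ ξ' y y' : E}
    (hy : IsProximalPoint c G ξ y) (hy' : IsProximalPoint c G ξ' y') :
    moreauEnvelope c G ξ' ≤ moreauEnvelope c G ξ + inner ℝ ((2 * c) • (ξ - y)) (ξ' - ξ)
      + c * ‖ξ' - ξ‖ ^ 2 := by
  have hle := hy'.moreauEnvelope_le y
  rw [show y - ξ' = -((ξ - y) + (ξ' - ξ)) by abel, norm_neg, norm_add_sq_real] at hle
  rw [hy.moreauEnvelope_eq, real_inner_smul_left, norm_sub_rev y ξ]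
  linarith

theorem hasFDerivAt_of_le_quadratic {H : E → ℝ} {g : E → E} {C : NNReal}
    (hH : ∀ ξ ξ', H ξ' ≤ H ξ + inner ℝ (g ξ) (ξ' - ξ) + c * ‖ξ' - ξ‖ ^ 2)
    (hg : LipschitzWith C g) (ξ : E) :
    HasFDerivAt H (innerSL ℝ (g ξ)) ξ := by
  rw [hasFDerivAt_iff_isLittleO_nhds_zero]
  have hbound : (fun h => H (ξ + h) - H ξ - innerSL ℝ (g ξ) h) =O[𝓝 0] fun h => ‖h‖ ^ 2 := by
    refine Asymptotics.IsBigO.of_bound (|c| + C) (Eventually.of_forall fun h => ?_)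
    have hup := hH ξ (ξ + h)
    have hdown := hH (ξ + h) ξ
    rw [sub_add_cancel_left, inner_neg_right, norm_neg] at hdown
    have hcs : inner ℝ (g (ξ + h) - g ξ) h ≥ -(C * ‖h‖ ^ 2) := by
      have hlip := mul_le_mul_of_nonneg_right (hg.norm_sub_le (ξ + h) ξ) (norm_nonneg h)
      rw [add_sub_cancel_left] at hlip
      linarith [(abs_le.1 (abs_real_inner_le_norm (g (ξ + h) - g ξ) h)).1]
    rw [inner_sub_left] at hcs
    have hc := mul_le_mul_of_nonneg_right (le_abs_self c) (sq_nonneg ‖h‖)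
    have hc0 : 0 ≤ |c| * ‖h‖ ^ 2 := by positivity
    have hC0 : 0 ≤ C * ‖h‖ ^ 2 := by positivity
    rw [add_sub_cancel_left] at hup
    rw [innerSL_apply_apply, norm_pow, norm_norm, Real.norm_eq_abs, abs_le]
    constructor <;> linarith
  exact hbound.trans_isLittleO (Asymptotics.isLittleO_norm_pow_id one_lt_two)

/-- Gradient of the Moreau envelope at `ξ`, expressed through a selection `Y` of proximal
points. -/
def moreauGradient (c : ℝ) (Y : E → E) (ξ : E) : E :=
  (2 * c) • (ξ - Y ξ)

/-- `Y` is the proximal map of `G`: a Lipschitz selection of proximal points, which yields the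
gradient of the Moreau envelope. -/
structure IsProximalMap (c : ℝ) (G : E → ℝ) (Y : E → E) : Prop where
  lipschitzWith : LipschitzWith 4 Y
  isProximalPoint : ∀ ξ, IsProximalPoint c G ξ (Y ξ)
  hasFDerivAt : ∀ ξ, HasFDerivAt (moreauEnvelope c G) (innerSL ℝ (moreauGradient c Y ξ)) ξ

theorem lipschitzWith_moreauGradient {Y : E → E} {C : NNReal} (hY : LipschitzWith C Y) (c : ℝ) :
    LipschitzWith (‖2 * c‖₊ * (1 + C)) (moreauGradient c Y) :=
  (lipschitzWith_smul (2 * c)).comp (LipschitzWith.id.sub hY)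

theorem exists_isProximalMap [FiniteDimensional ℝ E] (hc : 0 < c)
    (hG : ∀ y, ∃ p, IsProximalSubgradient c G p y) : ∃ Y, IsProximalMap c G Y := by
  choose Y hY using exists_isProximalPoint hc hG
  have hlip : LipschitzWith 4 Y := LipschitzWith.of_dist_le_mul fun ξ ξ' => by
    simpa only [dist_eq_norm, NNReal.coe_ofNat] using (hY ξ).norm_sub_le hc hG (hY ξ')
  exact ⟨Y, hlip, hY, hasFDerivAt_of_le_quadratic
    (fun ξ ξ' => (hY ξ).moreauEnvelope_le_quadratic (hY ξ')) (lipschitzWith_moreauGradient hlip c)⟩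

theorem exists_isProximalMap_supConv [FiniteDimensional ℝ E] (hK : IsCompact K) (hne : K.Nonempty)
    (hu : ContinuousOn u K) (hc : 0 < c) : ∃ Y, IsProximalMap c (supConv K c u) Y :=
  exists_isProximalMap hc fun y =>
    have ⟨_, hx, hxy⟩ := exists_supConv_eq hK hne hu y
    ⟨_, isProximalSubgradient_supConv hK hu hx hxy⟩

theorem IsProximalPoint.le_lasryLions (hK : IsCompact K) (hu : ContinuousOn u K) (hc : 0 < c)
    {ξ y : E} (hy : IsProximalPoint c (supConv K c u) ξ y) {x : E} (hx : x ∈ K) :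
    u x - c * ‖x - ξ‖ ^ 2 ≤ lasryLions K c u ξ := by
  rw [lasryLions, hy.moreauEnvelope_eq]
  have hle := le_supConv (c := c) hK hu hx y
  have hpar := parallelogram_law_with_norm ℝ (x - ξ) (y - ξ)
  rw [sub_sub_sub_cancel_right] at hpar
  have hsq : ‖x - y‖ ^ 2 ≤ 2 * (‖x - ξ‖ ^ 2 + ‖y - ξ‖ ^ 2) := by
    nlinarith [mul_self_nonneg ‖x - ξ + (y - ξ)‖]
  linarith [mul_le_mul_of_nonneg_left hsq hc.le]

/-- If the regularization is touched from above at `ξ` by a paraboloid flatter than its kernel,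
then `ξ` is the midpoint of `Y ξ` and the maximizer defining `supConv K c u (Y ξ)`:
otherwise that midpoint would violate the bound. -/
theorem IsProximalMap.lasryLions_eq (hK : IsCompact K) (hne : K.Nonempty)
    (hu : ContinuousOn u K) (hc : 0 < c) {Y : E → E} (hY : IsProximalMap c (supConv K c u) Y)
    {b : ℝ} (hb : b < 2 * c) {ξ : E} (hle : ∀ w, lasryLions K c u (ξ + w) ≤
      lasryLions K c u ξ + inner ℝ (moreauGradient c Y ξ) w + b / 2 * ‖w‖ ^ 2) :
    (2 : ℝ) • ξ - Y ξ ∈ K ∧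
      lasryLions K c u ξ = u ((2 : ℝ) • ξ - Y ξ) - c * ‖(2 : ℝ) • ξ - Y ξ - ξ‖ ^ 2 := by
  obtain ⟨y, hyξ⟩ : ∃ y, y = Y ξ := ⟨_, rfl⟩
  have hy : IsProximalPoint c (supConv K c u) ξ y := hyξ ▸ hY.isProximalPoint ξ
  rw [moreauGradient, ← hyξ] at hle
  rw [← hyξ]
  obtain ⟨x, hx, hxy⟩ := exists_supConv_eq (c := c) hK hne hu y
  obtain ⟨η, hη⟩ : ∃ η, η = (1 / 2 : ℝ) • (x + y) := ⟨_, rfl⟩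
  have hyη : supConv K c u y + c * ‖y - η‖ ^ 2 ≤ lasryLions K c u η := by
    obtain ⟨z, hz⟩ : ∃ z, IsProximalPoint c (supConv K c u) η z := ⟨_, hY.isProximalPoint η⟩
    have hsub := isProximalSubgradient_supConv hK hu hx hxy z
    rw [show x - y = (2 : ℝ) • (η - y) by rw [hη]; module, smul_smul,
      real_inner_smul_left] at hsub
    rw [lasryLions, hz.moreauEnvelope_eq, show z - η = (z - y) - (η - y) by abel,
      norm_sub_sq_real (z - y), norm_sub_rev y η, real_inner_comm]
    nlinarith [mul_nonneg hc.le (sq_nonneg ‖z - y‖)]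
  have hηξ : η = ξ := by
    have hle := hyη.trans (add_sub_cancel ξ η ▸ hle (η - ξ))
    rw [lasryLions, hy.moreauEnvelope_eq, show y - η = -((ξ - y) + (η - ξ)) by abel, norm_neg,
      norm_add_sq_real, norm_sub_rev ξ y, real_inner_smul_left] at hle
    have hsq : (2 * c - b) * ‖η - ξ‖ ^ 2 ≤ 0 := by linarith
    have hnorm : ‖η - ξ‖ ^ 2 ≤ 0 := nonpos_of_mul_nonpos_right hsq (by linarith)
    rwa [sq_nonpos_iff, norm_eq_zero, sub_eq_zero] at hnorm
  have hxξ : (2 : ℝ) • ξ - y = x := by rw [← hηξ, hη]; module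
  rw [hxξ]
  refine ⟨hx, ?_⟩
  rw [lasryLions, hy.moreauEnvelope_eq, hxy, ← hηξ, hη,
    show y - (1 / 2 : ℝ) • (x + y) = -((1 / 2 : ℝ) • (x - y)) by module, norm_neg,
    show x - (1 / 2 : ℝ) • (x + y) = (1 / 2 : ℝ) • (x - y) by module, norm_smul]
  norm_num
  ring

end Regularization

/-! ### Second-order calculus and Jensen's lemma -/

section Jensen

variable {E : Type*} [NormedAddCommGroup E] [InnerProductSpace ℝ E]

theorem isLittleO_taylor_two {H : E → ℝ} {g : E → E} {A : E →L[ℝ] E} {ξ : E}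
    (hH : ∀ ξ, HasFDerivAt H (innerSL ℝ (g ξ)) ξ) (hA : HasFDerivAt g A ξ) :
    (fun h => H (ξ + h) - H ξ - inner ℝ (g ξ) h - 1 / 2 * inner ℝ (A h) h)
      =o[𝓝 0] fun h => ‖h‖ ^ 2 := by
  rw [Asymptotics.isLittleO_iff]
  intro ε hε
  rw [hasFDerivAt_iff_isLittleO_nhds_zero, Asymptotics.isLittleO_iff] at hA
  obtain ⟨r, hr, hsmall⟩ := Metric.eventually_nhds_iff_ball.1 (hA hε)
  filter_upwards [Metric.ball_mem_nhds 0 hr] with h hh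
  have hderiv : ∀ τ ∈ Set.Icc (0 : ℝ) 1, HasDerivWithinAt
      (fun τ : ℝ => H (ξ + τ • h) - τ * inner ℝ (g ξ) h - τ ^ 2 / 2 * inner ℝ (A h) h)
      (inner ℝ (g (ξ + τ • h) - g ξ - A (τ • h)) h) (Set.Icc 0 1) τ := fun τ _ => by
    have hline : HasDerivAt (fun τ : ℝ => ξ + τ • h) h τ := by
      simpa using ((hasDerivAt_id τ).smul_const h).const_add ξ
    have hquad : HasDerivAt (fun τ : ℝ => τ ^ 2 / 2) τ τ := by
      simpa using ((hasDerivAt_id τ).pow 2).div_const 2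
    refine ((((hH _).comp_hasDerivAt τ hline).sub ((hasDerivAt_id τ).mul_const _)).sub
      (hquad.mul_const _)).hasDerivWithinAt.congr_deriv ?_
    simp [inner_sub_left, real_inner_smul_left]
  have hbound : ∀ τ ∈ Set.Ico (0 : ℝ) 1,
      ‖inner ℝ (g (ξ + τ • h) - g ξ - A (τ • h)) h‖ ≤ ε * ‖h‖ ^ 2 := fun τ hτ => by
    have hτh : ‖τ • h‖ ≤ ‖h‖ := by
      rw [norm_smul, Real.norm_of_nonneg hτ.1]
      exact mul_le_of_le_one_left (norm_nonneg h) hτ.2.le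
    have hball : τ • h ∈ Metric.ball 0 r :=
      mem_ball_zero_iff.2 (hτh.trans_lt (mem_ball_zero_iff.1 hh))
    calc _ ≤ ‖g (ξ + τ • h) - g ξ - A (τ • h)‖ * ‖h‖ := norm_inner_le_norm _ _
      _ ≤ ε * ‖h‖ * ‖h‖ := by gcongr; exact (hsmall _ hball).trans (by gcongr)
      _ = ε * ‖h‖ ^ 2 := by ring
  have hmvt := norm_image_sub_le_of_norm_deriv_le_segment_01' hderiv hbound
  simp only [one_smul, zero_smul, add_zero] at hmvt
  rw [norm_pow, norm_norm]
  refine (congrArg norm ?_).trans_le hmvt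
  ring

theorem eq_of_hasFDerivAt_of_le_quadratic {H : E → ℝ} {g p ξ : E} {C : ℝ}
    (hH : HasFDerivAt H (innerSL ℝ g) ξ)
    (hle : ∀ w, H (ξ + w) ≤ H ξ + inner ℝ p w + C * ‖w‖ ^ 2) : g = p := by
  have hmax : IsLocalMax (fun w => H (ξ + w) - inner ℝ p w - C * ‖w‖ ^ 2) 0 :=
    Eventually.of_forall fun w => by
      simp only [add_zero, inner_zero_right, sub_zero, norm_zero]
      linarith [hle w]
  have hshift : HasFDerivAt (fun w => H (ξ + w)) (innerSL ℝ g) 0 := by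
    rw [hasFDerivAt_comp_add_left, add_zero]
    exact hH
  have hderiv := (hshift.sub (innerSL ℝ p).hasFDerivAt).sub
    ((hasStrictFDerivAt_norm_sq (0 : E)).hasFDerivAt.const_mul C)
  have hzero := hmax.hasFDerivAt_eq_zero hderiv
  simp only [map_zero, smul_zero, sub_zero, ← map_sub] at hzero
  rw [← sub_eq_zero, ← norm_eq_zero, ← innerSL_apply_norm ℝ, hzero, norm_zero]

theorem inner_apply_self_le_of_isLittleO {H : E → ℝ} {g ξ : E} {A B : E →L[ℝ] E}
    (hA : (fun h => H (ξ + h) - H ξ - inner ℝ g h - 1 / 2 * inner ℝ (A h) h)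
      =o[𝓝 0] fun h => ‖h‖ ^ 2)
    (hB : ∀ h, H (ξ + h) ≤ H ξ + inner ℝ g h + 1 / 2 * inner ℝ (B h) h) (w : E) :
    inner ℝ (A w) w ≤ inner ℝ (B w) w := by
  refine le_of_forall_pos_le_add fun ε hε => ?_
  obtain ⟨δ, hδ, hδε⟩ : ∃ δ > 0, δ * (2 * ‖w‖ ^ 2) ≤ ε :=
    ⟨ε / (2 * ‖w‖ ^ 2 + 1), by positivity, by
      rw [div_mul_eq_mul_div, div_le_iff₀ (by positivity)]; nlinarith⟩
  have hlim : Tendsto (fun τ : ℝ => τ • w) (𝓝[>] 0) (𝓝 0) :=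
    tendsto_nhdsWithin_of_tendsto_nhds (Continuous.tendsto' (by fun_prop) _ _ (zero_smul ℝ w))
  obtain ⟨τ, hsmall, hτ⟩ :=
    ((hlim.eventually (Asymptotics.isLittleO_iff.1 hA hδ)).and self_mem_nhdsWithin).exists
  have hlow := (abs_le.1 hsmall).1
  have hup := hB (τ • w)
  rw [norm_pow, norm_norm, norm_smul, mul_pow, Real.norm_eq_abs, sq_abs] at hlow
  simp only [map_smul, real_inner_smul_left, real_inner_smul_right] at hlow hup
  refine le_of_mul_le_mul_left ?_ (pow_pos hτ 2)
  linarith [mul_le_mul_of_nonneg_left hδε (sq_nonneg τ)]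

theorem inner_apply_self_le_opNorm_mul (B : E →L[ℝ] E) (w : E) :
    inner ℝ (B w) w ≤ ‖B‖ * ‖w‖ ^ 2 :=
  calc inner ℝ (B w) w ≤ ‖B w‖ * ‖w‖ := real_inner_le_norm _ _
    _ ≤ ‖B‖ * ‖w‖ * ‖w‖ := by gcongr; exact B.le_opNorm w
    _ = ‖B‖ * ‖w‖ ^ 2 := by ring

variable [FiniteDimensional ℝ E]

theorem exists_mem_ball_notMem_image_not_differentiableAt {g S : E → E} {C C' : NNReal}
    (hg : LipschitzWith C g) (hS : LipschitzWith C' S) {r : ℝ} (hr : 0 < r) :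
    ∃ p ∈ Metric.ball (0 : E) r, p ∉ S '' {z | ¬DifferentiableAt ℝ g z} := by
  borelize E
  let μ : MeasureTheory.Measure E := .hausdorffMeasure (Module.finrank ℝ E : ℝ)
  have : μ.IsAddHaarMeasure := MeasureTheory.isAddHaarMeasure_hausdorffMeasure
  have hnull : μ {z | ¬DifferentiableAt ℝ g z} = 0 := hg.ae_differentiableAt (μ := μ)
  have himage : μ (S '' {z | ¬DifferentiableAt ℝ g z}) = 0 := by
    refine le_zero_iff.1 ((hS.hausdorffMeasure_image_le (Nat.cast_nonneg _) _).trans_eq ?_)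
    exact mul_eq_zero_of_right _ hnull
  by_contra! hsub
  exact (Metric.measure_ball_pos μ 0 hr).ne' (MeasureTheory.measure_mono_null hsub himage)

theorem exists_norm_le_forall_le_add_inner {H : E → ℝ} (hH : Continuous H) (hH0 : H 0 = 0)
    {B : E →L[ℝ] E} (hB : (B : E →ₗ[ℝ] E).IsSymmetric) {ε : ℝ} (hε : 0 < ε)
    (hle : ∀ z, H z + ε * ‖z‖ ^ 2 ≤ 1 / 2 * inner ℝ (B z) z) (p : E) :
    ∃ z, ‖z‖ ≤ ‖p‖ / ε ∧
      ∀ w, H (z + w) ≤ H z + inner ℝ (B z + p) w + 1 / 2 * inner ℝ (B w) w := by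
  obtain ⟨J, hJ⟩ : ∃ J : E → ℝ, ∀ z, J z = H z - 1 / 2 * inner ℝ (B z) z - inner ℝ p z :=
    ⟨_, fun _ => rfl⟩
  have hJcont : Continuous J := by
    rw [funext hJ]
    fun_prop
  have hJ0 : J 0 = 0 := by simp [hJ, hH0]
  have hball : (0 : E) ∈ Metric.closedBall 0 (‖p‖ / ε) :=
    Metric.mem_closedBall_self (by positivity)
  obtain ⟨z, hz, hmax⟩ :=
    (isCompact_closedBall (0 : E) (‖p‖ / ε)).exists_isMaxOn ⟨0, hball⟩ hJcont.continuousOn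
  have hglobal : ∀ z', J z' ≤ J z := fun z' => by
    by_cases hz' : z' ∈ Metric.closedBall 0 (‖p‖ / ε)
    · exact hmax hz'
    · have hfar : ‖p‖ < ‖z'‖ * ε := by
        rwa [mem_closedBall_zero_iff, not_le, div_lt_iff₀ hε] at hz'
      have hcs := (abs_le.1 (abs_real_inner_le_norm p z')).1
      have hz0 : 0 ≤ J z := hJ0.symm.trans_le (hmax hball)
      rw [hJ z']
      nlinarith [hle z', mul_le_mul_of_nonneg_right hfar.le (norm_nonneg z')]
  refine ⟨z, mem_closedBall_zero_iff.1 hz, fun w => ?_⟩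
  have hsymm : inner ℝ (B w) z = inner ℝ (B z) w := by rw [hB.apply_clm, real_inner_comm]
  have hzw := hglobal (z + w)
  simp only [hJ, map_add, inner_add_left, inner_add_right, hsymm] at hzw
  rw [inner_add_left]
  linarith

/-- **Jensen's lemma.** Each small tilt `p` is the value of `g - B` at a maximum point of the tilted
`H` minus paraboloid. Points of non-differentiability of `g` are mapped by `g - B` to a null set,
which misses some tilt. -/
theorem frequently_differentiableAt_and_le {H : E → ℝ} {g : E → E} {C : NNReal}
    (hg : LipschitzWith C g) (hH : ∀ z, HasFDerivAt H (innerSL ℝ (g z)) z) (hH0 : H 0 = 0)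
    {B : E →L[ℝ] E} (hB : (B : E →ₗ[ℝ] E).IsSymmetric) {ε : ℝ} (hε : 0 < ε)
    (hle : ∀ z, H z + ε * ‖z‖ ^ 2 ≤ 1 / 2 * inner ℝ (B z) z) :
    ∃ᶠ z in 𝓝 0, DifferentiableAt ℝ g z ∧
      ∀ w, H (z + w) ≤ H z + inner ℝ (g z) w + 1 / 2 * inner ℝ (B w) w := by
  rw [Metric.nhds_basis_ball.frequently_iff]
  intro r hr
  obtain ⟨p, hp, hpS⟩ := exists_mem_ball_notMem_image_not_differentiableAt hg
    (hg.sub B.lipschitz) (mul_pos hr hε)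
  have hcont : Continuous H := continuous_iff_continuousAt.2 fun z => (hH z).continuousAt
  obtain ⟨z, hz, hmax⟩ := exists_norm_le_forall_le_add_inner hcont hH0 hB hε hle p
  have hgz : g z = B z + p := eq_of_hasFDerivAt_of_le_quadratic (C := ‖B‖ / 2) (hH z) fun w => by
    linarith [hmax w, inner_apply_self_le_opNorm_mul B w]
  refine ⟨z, ?_, by_contra fun hdiff => hpS ⟨z, hdiff, ?_⟩, hgz ▸ hmax⟩
  · rw [mem_ball_zero_iff] at hp ⊢
    exact hz.trans_lt ((div_lt_iff₀ hε).2 hp)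
  · simp [hgz]

end Jensen

/-! ### The theorem on sums -/

section TheoremOnSums

/-- Near `x` within `K`, the function `u` lies below the paraboloid through `(x, u x)` with
gradient `q` and Hessian `A`. -/
def HasQuadraticMajorantWithinAt {E : Type*} [NormedAddCommGroup E] [InnerProductSpace ℝ E]
    (u : E → ℝ) (q : E) (A : E →L[ℝ] E) (K : Set E) (x : E) : Prop :=
  ∀ᶠ y in 𝓝[K] x, u y ≤ u x + inner ℝ q (y - x) + 1 / 2 * inner ℝ (A (y - x)) (y - x)

theorem inner_add_smul_id_apply {E : Type*} [NormedAddCommGroup E] [InnerProductSpace ℝ E]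
    (A : E →L[ℝ] E) (k : ℝ) (w : E) :
    inner ℝ ((A + k • ContinuousLinearMap.id ℝ E) w) w = inner ℝ (A w) w + k * ‖w‖ ^ 2 := by
  simp [inner_add_left, real_inner_smul_left]

theorem norm_add_smul_id_le {E : Type*} [NormedAddCommGroup E] [InnerProductSpace ℝ E]
    (A : E →L[ℝ] E) {k : ℝ} (hk : 0 ≤ k) : ‖A + k • ContinuousLinearMap.id ℝ E‖ ≤ ‖A‖ + k := by
  refine (norm_add_le _ _).trans (add_le_add le_rfl ?_)
  rw [norm_smul, Real.norm_of_nonneg hk]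
  exact mul_le_of_le_one_right hk ContinuousLinearMap.norm_id_le

theorem IsProximalMap.mem_and_hasQuadraticMajorantWithinAt {E : Type*} [NormedAddCommGroup E]
    [InnerProductSpace ℝ E] {K : Set E} (hK : IsCompact K) (hne : K.Nonempty) {u : E → ℝ}
    (hu : ContinuousOn u K) {c : ℝ} (hc : 0 < c) {Y : E → E}
    (hY : IsProximalMap c (supConv K c u) Y) {b : ℝ} (hb : b < 2 * c) {ξ : E}
    (hle : ∀ w, lasryLions K c u (ξ + w) ≤
      lasryLions K c u ξ + inner ℝ (moreauGradient c Y ξ) w + b / 2 * ‖w‖ ^ 2)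
    {A : E →L[ℝ] E} (hA : HasFDerivAt (moreauGradient c Y) A ξ) {k : ℝ} (hk : 0 < k) :
    (2 : ℝ) • ξ - Y ξ ∈ K ∧ HasQuadraticMajorantWithinAt u (moreauGradient c Y ξ)
      (A + k • ContinuousLinearMap.id ℝ E) K ((2 : ℝ) • ξ - Y ξ) := by
  obtain ⟨hx, heq⟩ := hY.lasryLions_eq hK hne hu hc hb hle
  refine ⟨hx, ?_⟩
  generalize (2 : ℝ) • ξ - Y ξ = x at heq ⊢
  have hshift : Tendsto (fun y => y - x) (𝓝[K] x) (𝓝 0) :=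
    tendsto_nhdsWithin_of_tendsto_nhds (Continuous.tendsto' (by fun_prop) _ _ (sub_self x))
  have hsmall := hshift.eventually
    (Asymptotics.isLittleO_iff.1 (isLittleO_taylor_two hY.hasFDerivAt hA) (half_pos hk))
  filter_upwards [hsmall, self_mem_nhdsWithin] with y hy hyK
  have hlow := (hY.isProximalPoint (ξ + (y - x))).le_lasryLions hK hu hc hyK
  rw [show y - (ξ + (y - x)) = x - ξ by abel] at hlow
  rw [norm_pow, norm_norm] at hy
  rw [inner_add_smul_id_apply]
  have hup := (abs_le.1 hy).2
  rw [lasryLions] at hlow heq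
  linarith

theorem inner_apply_add_le {E : Type*} [NormedAddCommGroup E] [InnerProductSpace ℝ E]
    {N : E →L[ℝ] E} (hN : (N : E →ₗ[ℝ] E).IsSymmetric) {k : ℝ} (hk : 0 < k) (z e : E) :
    inner ℝ (N (z + e)) (z + e) ≤
      inner ℝ (N z) z + k * ‖z‖ ^ 2 + (‖N‖ ^ 2 / k + ‖N‖) * ‖e‖ ^ 2 := by
  have hsymm : inner ℝ (N e) z = inner ℝ (N z) e := by rw [hN.apply_clm, real_inner_comm]
  have hcross : inner ℝ (N z) e ≤ ‖N‖ * ‖z‖ * ‖e‖ :=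
    (real_inner_le_norm _ _).trans (by gcongr; exact N.le_opNorm z)
  have hyoung : 2 * (‖N‖ * ‖z‖ * ‖e‖) ≤ k * ‖z‖ ^ 2 + ‖N‖ ^ 2 / k * ‖e‖ ^ 2 := by
    have hsq : k * ‖z‖ ^ 2 + ‖N‖ ^ 2 / k * ‖e‖ ^ 2 - 2 * (‖N‖ * ‖z‖ * ‖e‖)
        = (k * ‖z‖ - ‖N‖ * ‖e‖) ^ 2 / k := by field_simp; ring
    have hnonneg : 0 ≤ (k * ‖z‖ - ‖N‖ * ‖e‖) ^ 2 / k := by positivity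
    linarith
  rw [map_add, inner_add_left, inner_add_right, inner_add_right, hsymm]
  linarith [inner_apply_self_le_opNorm_mul N e]

variable {E₁ E₂ : Type*} [NormedAddCommGroup E₁] [InnerProductSpace ℝ E₁]
  [NormedAddCommGroup E₂] [InnerProductSpace ℝ E₂]

theorem hasFDerivAt_fst_add_snd {H₁ : E₁ → ℝ} {H₂ : E₂ → ℝ} {g₁ : E₁} {g₂ : E₂}
    {z : WithLp 2 (E₁ × E₂)} (h₁ : HasFDerivAt H₁ (innerSL ℝ g₁) z.fst)
    (h₂ : HasFDerivAt H₂ (innerSL ℝ g₂) z.snd) :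
    HasFDerivAt (fun z : WithLp 2 (E₁ × E₂) => H₁ z.fst + H₂ z.snd)
      (innerSL ℝ (WithLp.toLp 2 (g₁, g₂))) z := by
  refine ((h₁.comp z (WithLp.fstL 2 ℝ E₁ E₂).hasFDerivAt).add
    (h₂.comp z (WithLp.sndL 2 ℝ E₁ E₂).hasFDerivAt)).congr_fderiv ?_
  ext w
  simp [WithLp.prod_inner_apply]

theorem exists_lipschitzWith_toLp {g₁ : E₁ → E₁} {g₂ : E₂ → E₂} {C₁ C₂ : NNReal}
    (h₁ : LipschitzWith C₁ g₁) (h₂ : LipschitzWith C₂ g₂) :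
    ∃ C, LipschitzWith C fun z : WithLp 2 (E₁ × E₂) =>
      (WithLp.toLp 2 (g₁ z.fst, g₂ z.snd) : WithLp 2 (E₁ × E₂)) :=
  ⟨_, (WithLp.prodContinuousLinearEquiv 2 ℝ E₁ E₂).symm.lipschitz.comp
    ((h₁.comp (WithLp.fstL 2 ℝ E₁ E₂).lipschitz).prodMk
      (h₂.comp (WithLp.sndL 2 ℝ E₁ E₂).lipschitz))⟩

theorem exists_hasFDerivAt_toLp {g₁ : E₁ → E₁} {g₂ : E₂ → E₂} {z : WithLp 2 (E₁ × E₂)}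
    {A₁ : E₁ →L[ℝ] E₁} {A₂ : E₂ →L[ℝ] E₂} (h₁ : HasFDerivAt g₁ A₁ z.fst)
    (h₂ : HasFDerivAt g₂ A₂ z.snd) :
    ∃ A : WithLp 2 (E₁ × E₂) →L[ℝ] WithLp 2 (E₁ × E₂),
      HasFDerivAt (fun z : WithLp 2 (E₁ × E₂) =>
        (WithLp.toLp 2 (g₁ z.fst, g₂ z.snd) : WithLp 2 (E₁ × E₂))) A z ∧
      ∀ w, A w = WithLp.toLp 2 (A₁ w.fst, A₂ w.snd) := by
  have hpair := (h₁.comp z (WithLp.fstL 2 ℝ E₁ E₂).hasFDerivAt).prodMk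
    (h₂.comp z (WithLp.sndL 2 ℝ E₁ E₂).hasFDerivAt)
  exact ⟨_, (WithLp.prodContinuousLinearEquiv 2 ℝ E₁ E₂).symm.hasFDerivAt.comp z hpair,
    fun _ => rfl⟩

theorem differentiableAt_fst_and_snd {g₁ : E₁ → E₁} {g₂ : E₂ → E₂} {z : WithLp 2 (E₁ × E₂)}
    (h : DifferentiableAt ℝ (fun z : WithLp 2 (E₁ × E₂) =>
      (WithLp.toLp 2 (g₁ z.fst, g₂ z.snd) : WithLp 2 (E₁ × E₂))) z) :
    DifferentiableAt ℝ g₁ z.fst ∧ DifferentiableAt ℝ g₂ z.snd := by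
  let e := WithLp.prodContinuousLinearEquiv 2 ℝ E₁ E₂
  have h' : DifferentiableAt ℝ (fun p : E₁ × E₂ => (g₁ p.1, g₂ p.2)) (z.fst, z.snd) :=
    (e.differentiableAt.comp z h).comp (e z) e.symm.differentiableAt
  exact ⟨(h'.comp z.fst (f := fun x => (x, z.snd)) (by fun_prop)).fst,
    (h'.comp z.snd (f := fun y => (z.fst, y)) (by fun_prop)).snd⟩

theorem lasryLions_add_lasryLions_le {K₁ : Set E₁} {K₂ : Set E₂} (hK₁ : IsCompact K₁)
    (hK₂ : IsCompact K₂) (hne₁ : K₁.Nonempty) (hne₂ : K₂.Nonempty) {u₁ : E₁ → ℝ} {u₂ : E₂ → ℝ}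
    (hu₁ : ContinuousOn u₁ K₁) (hu₂ : ContinuousOn u₂ K₂) {c : ℝ} {Y₁ : E₁ → E₁} {Y₂ : E₂ → E₂}
    (hY₁ : IsProximalMap c (supConv K₁ c u₁) Y₁) (hY₂ : IsProximalMap c (supConv K₂ c u₂) Y₂)
    {N : WithLp 2 (E₁ × E₂) →L[ℝ] WithLp 2 (E₁ × E₂)}
    (hN : (N : WithLp 2 (E₁ × E₂) →ₗ[ℝ] WithLp 2 (E₁ × E₂)).IsSymmetric)
    (hle : ∀ x ∈ K₁, ∀ y ∈ K₂,
      u₁ x + u₂ y ≤ 1 / 2 * inner ℝ (N (WithLp.toLp 2 (x, y))) (WithLp.toLp 2 (x, y)))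
    {k : ℝ} (hk : 0 < k) (hc : ‖N‖ ^ 2 / k + ‖N‖ ≤ c) (z : WithLp 2 (E₁ × E₂)) :
    lasryLions K₁ c u₁ z.fst + lasryLions K₂ c u₂ z.snd ≤
      1 / 2 * inner ℝ (N z) z + k / 2 * ‖z‖ ^ 2 := by
  obtain ⟨x, hx, hux⟩ := (hY₁.isProximalPoint z.fst).exists_lasryLions_le hK₁ hne₁ hu₁
  obtain ⟨y, hy, huy⟩ := (hY₂.isProximalPoint z.snd).exists_lasryLions_le hK₂ hne₂ hu₂
  have hxy := hle x hx y hy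
  have hquad := inner_apply_add_le hN hk z (WithLp.toLp 2 (x, y) - z)
  have hce := mul_le_mul_of_nonneg_right hc (sq_nonneg ‖WithLp.toLp 2 (x, y) - z‖)
  rw [add_sub_cancel] at hquad
  rw [WithLp.prod_norm_sq_eq_of_L2 (WithLp.toLp 2 (x, y) - z), WithLp.sub_fst,
    WithLp.sub_snd] at hce hquad
  simp only [WithLp.toLp_fst, WithLp.toLp_snd] at hce hquad
  linarith

theorem eventually_norm_lt_of_moreauGradient_zero {E : Type*} [NormedAddCommGroup E]
    [InnerProductSpace ℝ E] {c : ℝ} (hc : 0 < c) {Y : E → E} {C : NNReal}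
    (hY : LipschitzWith C Y) (h0 : moreauGradient c Y 0 = 0) {κ : ℝ} (hκ : 0 < κ) :
    ∀ᶠ ξ in 𝓝 0, ‖(2 : ℝ) • ξ - Y ξ‖ < κ ∧ ‖moreauGradient c Y ξ‖ < κ := by
  have hY0 : Y 0 = 0 := by
    simpa [moreauGradient, hc.ne'] using h0
  have hYc : Continuous Y := hY.continuous
  have hgc : Continuous (moreauGradient c Y) := (lipschitzWith_moreauGradient hY c).continuous
  refine (Tendsto.eventually_lt_const hκ ?_).and (Tendsto.eventually_lt_const hκ ?_)
  · exact Continuous.tendsto' (by fun_prop) _ _ (by simp [hY0])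
  · exact Continuous.tendsto' (by fun_prop) _ _ (by simp [h0])

section Splitting

variable {H₁ : E₁ → ℝ} {H₂ : E₂ → ℝ} {g₁ : E₁ → E₁} {g₂ : E₂ → E₂}
  {B : WithLp 2 (E₁ × E₂) →L[ℝ] WithLp 2 (E₁ × E₂)}

theorem le_quadratic_of_add_le {z p : WithLp 2 (E₁ × E₂)}
    (hle : ∀ w : WithLp 2 (E₁ × E₂), H₁ (z.fst + w.fst) + H₂ (z.snd + w.snd) ≤
      H₁ z.fst + H₂ z.snd + inner ℝ p w + 1 / 2 * inner ℝ (B w) w) :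
    (∀ w, H₁ (z.fst + w) ≤ H₁ z.fst + inner ℝ p.fst w + ‖B‖ / 2 * ‖w‖ ^ 2) ∧
      ∀ w, H₂ (z.snd + w) ≤ H₂ z.snd + inner ℝ p.snd w + ‖B‖ / 2 * ‖w‖ ^ 2 := by
  constructor <;> intro w
  · have hw := hle (WithLp.toLp 2 (w, 0))
    have hB := inner_apply_self_le_opNorm_mul B (WithLp.toLp 2 (w, 0))
    have hp : inner ℝ p (WithLp.toLp 2 (w, 0)) = inner ℝ p.fst w :=
      (congrArg _ (inner_zero_right p.snd)).trans (add_zero _)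
    simp only [WithLp.toLp_fst, WithLp.toLp_snd, add_zero, WithLp.norm_toLp_fst, hp] at hw hB
    linarith
  · have hw := hle (WithLp.toLp 2 (0, w))
    have hB := inner_apply_self_le_opNorm_mul B (WithLp.toLp 2 (0, w))
    have hp : inner ℝ p (WithLp.toLp 2 (0, w)) = inner ℝ p.snd w :=
      (congrArg (· + _) (inner_zero_right p.fst)).trans (zero_add _)
    simp only [WithLp.toLp_fst, WithLp.toLp_snd, add_zero, WithLp.norm_toLp_snd, hp] at hw hB
    linarith

theorem inner_apply_add_inner_apply_le {z : WithLp 2 (E₁ × E₂)}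
    (h₁ : ∀ x, HasFDerivAt H₁ (innerSL ℝ (g₁ x)) x) (h₂ : ∀ y, HasFDerivAt H₂ (innerSL ℝ (g₂ y)) y)
    {A₁ : E₁ →L[ℝ] E₁} {A₂ : E₂ →L[ℝ] E₂} (hA₁ : HasFDerivAt g₁ A₁ z.fst)
    (hA₂ : HasFDerivAt g₂ A₂ z.snd)
    (hle : ∀ w : WithLp 2 (E₁ × E₂), H₁ (z.fst + w.fst) + H₂ (z.snd + w.snd) ≤
      H₁ z.fst + H₂ z.snd + inner ℝ (WithLp.toLp 2 (g₁ z.fst, g₂ z.snd)) w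
        + 1 / 2 * inner ℝ (B w) w) (w : WithLp 2 (E₁ × E₂)) :
    inner ℝ (A₁ w.fst) w.fst + inner ℝ (A₂ w.snd) w.snd ≤ inner ℝ (B w) w := by
  obtain ⟨A, hA, hAw⟩ := exists_hasFDerivAt_toLp hA₁ hA₂
  have hH (z : WithLp 2 (E₁ × E₂)) := hasFDerivAt_fst_add_snd (h₁ z.fst) (h₂ z.snd)
  have htaylor := isLittleO_taylor_two (g := fun z => WithLp.toLp 2 (g₁ z.fst, g₂ z.snd)) hH hA
  have hquad := inner_apply_self_le_of_isLittleO
    (H := fun z : WithLp 2 (E₁ × E₂) => H₁ z.fst + H₂ z.snd) htaylor hle w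
  rwa [hAw, WithLp.prod_inner_apply] at hquad

theorem gradient_zero_of_add_le (h₁ : ∀ x, HasFDerivAt H₁ (innerSL ℝ (g₁ x)) x)
    (h₂ : ∀ y, HasFDerivAt H₂ (innerSL ℝ (g₂ y)) y) (h0₁ : H₁ 0 = 0) (h0₂ : H₂ 0 = 0)
    (hle : ∀ z : WithLp 2 (E₁ × E₂), H₁ z.fst + H₂ z.snd ≤ 1 / 2 * inner ℝ (B z) z) :
    g₁ 0 = 0 ∧ g₂ 0 = 0 := by
  obtain ⟨hle₁, hle₂⟩ := le_quadratic_of_add_le (H₁ := H₁) (H₂ := H₂) (B := B) (z := 0) (p := 0)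
    fun w => by simpa [h0₁, h0₂] using hle w
  exact ⟨eq_of_hasFDerivAt_of_le_quadratic (h₁ 0) hle₁,
    eq_of_hasFDerivAt_of_le_quadratic (h₂ 0) hle₂⟩

theorem frequently_hasFDerivAt_and_le [FiniteDimensional ℝ E₁] [FiniteDimensional ℝ E₂]
    {C₁ C₂ : NNReal} (hg₁ : LipschitzWith C₁ g₁) (hg₂ : LipschitzWith C₂ g₂)
    (h₁ : ∀ x, HasFDerivAt H₁ (innerSL ℝ (g₁ x)) x)
    (h₂ : ∀ y, HasFDerivAt H₂ (innerSL ℝ (g₂ y)) y) (h0₁ : H₁ 0 = 0) (h0₂ : H₂ 0 = 0)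
    (hB : (B : WithLp 2 (E₁ × E₂) →ₗ[ℝ] WithLp 2 (E₁ × E₂)).IsSymmetric) {ε : ℝ} (hε : 0 < ε)
    (hle : ∀ z : WithLp 2 (E₁ × E₂),
      H₁ z.fst + H₂ z.snd + ε * ‖z‖ ^ 2 ≤ 1 / 2 * inner ℝ (B z) z) :
    ∃ᶠ z : WithLp 2 (E₁ × E₂) in 𝓝 0, ∃ (A₁ : E₁ →L[ℝ] E₁) (A₂ : E₂ →L[ℝ] E₂),
      HasFDerivAt g₁ A₁ z.fst ∧ HasFDerivAt g₂ A₂ z.snd ∧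
      (∀ w, H₁ (z.fst + w) ≤ H₁ z.fst + inner ℝ (g₁ z.fst) w + ‖B‖ / 2 * ‖w‖ ^ 2) ∧
      (∀ w, H₂ (z.snd + w) ≤ H₂ z.snd + inner ℝ (g₂ z.snd) w + ‖B‖ / 2 * ‖w‖ ^ 2) ∧
      ∀ w : WithLp 2 (E₁ × E₂),
        inner ℝ (A₁ w.fst) w.fst + inner ℝ (A₂ w.snd) w.snd ≤ inner ℝ (B w) w := by
  obtain ⟨C, hg⟩ := exists_lipschitzWith_toLp hg₁ hg₂
  refine (frequently_differentiableAt_and_le hg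
    (fun z => hasFDerivAt_fst_add_snd (h₁ z.fst) (h₂ z.snd)) (by simp [h0₁, h0₂]) hB hε hle).mono ?_
  rintro z ⟨hdiff, hjensen⟩
  obtain ⟨hd₁, hd₂⟩ := differentiableAt_fst_and_snd hdiff
  obtain ⟨hle₁, hle₂⟩ := le_quadratic_of_add_le hjensen
  exact ⟨_, _, hd₁.hasFDerivAt, hd₂.hasFDerivAt, hle₁, hle₂,
    inner_apply_add_inner_apply_le h₁ h₂ hd₁.hasFDerivAt hd₂.hasFDerivAt hjensen⟩

end Splitting

variable [FiniteDimensional ℝ E₁] [FiniteDimensional ℝ E₂]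

theorem exists_hasQuadraticMajorantWithinAt_of_lasryLions_add_le {K₁ : Set E₁} {K₂ : Set E₂}
    (hK₁ : IsCompact K₁) (hK₂ : IsCompact K₂) (h0₁ : 0 ∈ K₁) (h0₂ : 0 ∈ K₂)
    {u₁ : E₁ → ℝ} {u₂ : E₂ → ℝ} (hu₁ : ContinuousOn u₁ K₁) (hu₂ : ContinuousOn u₂ K₂)
    (hu0₁ : u₁ 0 = 0) (hu0₂ : u₂ 0 = 0) {c : ℝ} (hc : 0 < c) {Y₁ : E₁ → E₁} {Y₂ : E₂ → E₂}
    (hY₁ : IsProximalMap c (supConv K₁ c u₁) Y₁) (hY₂ : IsProximalMap c (supConv K₂ c u₂) Y₂)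
    {B : WithLp 2 (E₁ × E₂) →L[ℝ] WithLp 2 (E₁ × E₂)}
    (hB : (B : WithLp 2 (E₁ × E₂) →ₗ[ℝ] WithLp 2 (E₁ × E₂)).IsSymmetric) (hBc : ‖B‖ < 2 * c)
    {ε : ℝ} (hε : 0 < ε) (hle : ∀ z : WithLp 2 (E₁ × E₂),
      lasryLions K₁ c u₁ z.fst + lasryLions K₂ c u₂ z.snd + ε * ‖z‖ ^ 2 ≤
        1 / 2 * inner ℝ (B z) z) {κ : ℝ} (hκ : 0 < κ) :
    ∃ x ∈ K₁, ∃ y ∈ K₂, ‖x‖ < κ ∧ ‖y‖ < κ ∧ ∃ (q₁ : E₁) (q₂ : E₂), ‖q₁‖ < κ ∧ ‖q₂‖ < κ ∧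
      ∃ (A₁ : E₁ →L[ℝ] E₁) (A₂ : E₂ →L[ℝ] E₂),
        HasQuadraticMajorantWithinAt u₁ q₁ (A₁ + ε • ContinuousLinearMap.id ℝ E₁) K₁ x ∧
        HasQuadraticMajorantWithinAt u₂ q₂ (A₂ + ε • ContinuousLinearMap.id ℝ E₂) K₂ y ∧
        ∀ z : WithLp 2 (E₁ × E₂),
          inner ℝ (A₁ z.fst) z.fst + inner ℝ (A₂ z.snd) z.snd ≤ inner ℝ (B z) z := by
  have hH₁ : 0 ≤ lasryLions K₁ c u₁ 0 := by
    simpa [hu0₁] using (hY₁.isProximalPoint 0).le_lasryLions hK₁ hu₁ hc h0₁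
  have hH₂ : 0 ≤ lasryLions K₂ c u₂ 0 := by
    simpa [hu0₂] using (hY₂.isProximalPoint 0).le_lasryLions hK₂ hu₂ hc h0₂
  have hsum : lasryLions K₁ c u₁ 0 + lasryLions K₂ c u₂ 0 ≤ 0 := by simpa using hle 0
  have hH0₁ : lasryLions K₁ c u₁ 0 = 0 := by linarith
  have hH0₂ : lasryLions K₂ c u₂ 0 = 0 := by linarith
  obtain ⟨hg₁, hg₂⟩ : moreauGradient c Y₁ 0 = 0 ∧ moreauGradient c Y₂ 0 = 0 :=
    gradient_zero_of_add_le hY₁.hasFDerivAt hY₂.hasFDerivAt hH0₁ hH0₂ fun z =>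
      (le_add_of_nonneg_right (by positivity)).trans (hle z)
  have hlip₁ := lipschitzWith_moreauGradient hY₁.lipschitzWith c
  have hlip₂ := lipschitzWith_moreauGradient hY₂.lipschitzWith c
  obtain ⟨z, ⟨A₁, A₂, hA₁, hA₂, hle₁, hle₂, hA⟩, ⟨hx, hq₁⟩, hy, hq₂⟩ :=
    ((frequently_hasFDerivAt_and_le hlip₁ hlip₂ hY₁.hasFDerivAt hY₂.hasFDerivAt hH0₁ hH0₂ hB hε
      hle).and_eventually
      (((WithLp.fstL 2 ℝ E₁ E₂).continuous.tendsto 0 |>.eventually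
        (eventually_norm_lt_of_moreauGradient_zero hc hY₁.lipschitzWith hg₁ hκ)).and
      ((WithLp.sndL 2 ℝ E₁ E₂).continuous.tendsto 0 |>.eventually
        (eventually_norm_lt_of_moreauGradient_zero hc hY₂.lipschitzWith hg₂ hκ)))).exists
  obtain ⟨hx', hmaj₁⟩ :=
    hY₁.mem_and_hasQuadraticMajorantWithinAt hK₁ ⟨0, h0₁⟩ hu₁ hc hBc hle₁ hA₁ hε
  obtain ⟨hy', hmaj₂⟩ :=
    hY₂.mem_and_hasQuadraticMajorantWithinAt hK₂ ⟨0, h0₂⟩ hu₂ hc hBc hle₂ hA₂ hε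
  exact ⟨_, hx', _, hy', hx, hy, _, _, hq₁, hq₂, A₁, A₂, hmaj₁, hmaj₂, hA⟩

theorem exists_hasQuadraticMajorantWithinAt_of_add_le {K₁ : Set E₁} {K₂ : Set E₂}
    (hK₁ : IsCompact K₁) (hK₂ : IsCompact K₂) (h0₁ : 0 ∈ K₁) (h0₂ : 0 ∈ K₂)
    {u₁ : E₁ → ℝ} {u₂ : E₂ → ℝ} (hu₁ : ContinuousOn u₁ K₁) (hu₂ : ContinuousOn u₂ K₂)
    (hu0₁ : u₁ 0 = 0) (hu0₂ : u₂ 0 = 0) {N : WithLp 2 (E₁ × E₂) →L[ℝ] WithLp 2 (E₁ × E₂)}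
    (hN : (N : WithLp 2 (E₁ × E₂) →ₗ[ℝ] WithLp 2 (E₁ × E₂)).IsSymmetric)
    (hle : ∀ x ∈ K₁, ∀ y ∈ K₂,
      u₁ x + u₂ y ≤ 1 / 2 * inner ℝ (N (WithLp.toLp 2 (x, y))) (WithLp.toLp 2 (x, y)))
    {κ : ℝ} (hκ : 0 < κ) :
    ∃ x ∈ K₁, ∃ y ∈ K₂, ‖x‖ < κ ∧ ‖y‖ < κ ∧ ∃ (q₁ : E₁) (q₂ : E₂), ‖q₁‖ < κ ∧ ‖q₂‖ < κ ∧
      ∃ (A₁ : E₁ →L[ℝ] E₁) (A₂ : E₂ →L[ℝ] E₂),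
        HasQuadraticMajorantWithinAt u₁ q₁ A₁ K₁ x ∧ HasQuadraticMajorantWithinAt u₂ q₂ A₂ K₂ y ∧
        ∀ z : WithLp 2 (E₁ × E₂), inner ℝ (A₁ z.fst) z.fst + inner ℝ (A₂ z.snd) z.snd ≤
          inner ℝ (N z) z + κ * ‖z‖ ^ 2 := by
  obtain ⟨k, hk, hκk⟩ : ∃ k > 0, κ = 3 * k := ⟨κ / 3, by positivity, by ring⟩
  obtain ⟨c, hc⟩ : ∃ c, c = ‖N‖ ^ 2 / k + ‖N‖ + 2 * k := ⟨_, rfl⟩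
  obtain ⟨B, hBdef⟩ : ∃ B, B = N + (2 * k) • ContinuousLinearMap.id ℝ _ := ⟨_, rfl⟩
  have hc0 : 0 < c := hc ▸ by positivity
  have hB : (B : WithLp 2 (E₁ × E₂) →ₗ[ℝ] WithLp 2 (E₁ × E₂)).IsSymmetric := by
    rw [hBdef]
    exact hN.add (LinearMap.IsSymmetric.id.smul (conj_trivial _))
  have hBc : ‖B‖ < 2 * c := by
    have hnorm := hBdef ▸ norm_add_smul_id_le N (mul_pos two_pos hk).le
    have hdiv : 0 ≤ ‖N‖ ^ 2 / k := by positivity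
    linarith [norm_nonneg N]
  obtain ⟨Y₁, hY₁⟩ := exists_isProximalMap_supConv hK₁ ⟨0, h0₁⟩ hu₁ hc0
  obtain ⟨Y₂, hY₂⟩ := exists_isProximalMap_supConv hK₂ ⟨0, h0₂⟩ hu₂ hc0
  have hHle (z : WithLp 2 (E₁ × E₂)) : lasryLions K₁ c u₁ z.fst + lasryLions K₂ c u₂ z.snd
      + k / 2 * ‖z‖ ^ 2 ≤ 1 / 2 * inner ℝ (B z) z := by
    have := lasryLions_add_lasryLions_le hK₁ hK₂ ⟨0, h0₁⟩ ⟨0, h0₂⟩ hu₁ hu₂ hY₁ hY₂ hN hle hk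
      (by linarith) z
    rw [hBdef, inner_add_smul_id_apply]
    linarith
  obtain ⟨x, hx, y, hy, hxκ, hyκ, q₁, q₂, hq₁, hq₂, A₁, A₂, hA₁, hA₂, hA⟩ :=
    exists_hasQuadraticMajorantWithinAt_of_lasryLions_add_le hK₁ hK₂ h0₁ h0₂ hu₁ hu₂ hu0₁ hu0₂ hc0
      hY₁ hY₂ hB hBc (half_pos hk) hHle hκ
  refine ⟨x, hx, y, hy, hxκ, hyκ, q₁, q₂, hq₁, hq₂, _, _, hA₁, hA₂, fun z => ?_⟩
  have hz := hA z
  have hsq := mul_nonneg hk.le (sq_nonneg ‖z‖)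
  rw [hBdef, inner_add_smul_id_apply] at hz
  rw [inner_add_smul_id_apply, inner_add_smul_id_apply, hκk]
  rw [WithLp.prod_norm_sq_eq_of_L2 z] at hz hsq ⊢
  linarith

end TheoremOnSums

/-! ### Doubling of variables -/

section Doubling

open ContinuousLinearMap

variable {E : Type*} [NormedAddCommGroup E] [InnerProductSpace ℝ E]

theorem HasQuadraticMajorantWithinAt.of_translate {K : Set E} {u : E → ℝ} {a Q q x : E}
    {A : E →L[ℝ] E} (h : HasQuadraticMajorantWithinAt (fun w => u (a + w) - u a - inner ℝ Q w) q A
      ((fun w => a + w) ⁻¹' K) x) :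
    HasQuadraticMajorantWithinAt u (q + Q) A K (a + x) := by
  have htendsto : Tendsto (fun y => y - a) (𝓝[K] (a + x)) (𝓝[(fun w => a + w) ⁻¹' K] x) := by
    refine tendsto_nhdsWithin_iff.2 ⟨?_, eventually_mem_nhdsWithin.mono fun y hy => by simpa⟩
    simpa using ((continuous_sub_right a).tendsto (a + x)).mono_left nhdsWithin_le_nhds
  filter_upwards [htendsto.eventually h] with y hy
  have hsub : y - a - x = y - (a + x) := by abel
  simp only [add_sub_cancel, hsub] at hy
  have hQ : inner ℝ Q (y - a) = inner ℝ Q x + inner ℝ Q (y - (a + x)) := by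
    rw [← inner_add_right, ← hsub, add_sub_cancel]
  rw [inner_add_left]
  linarith

theorem exists_hasQuadraticMajorantWithinAt_of_add_le_add_inner {E₁ E₂ : Type*}
    [NormedAddCommGroup E₁] [InnerProductSpace ℝ E₁] [FiniteDimensional ℝ E₁]
    [NormedAddCommGroup E₂] [InnerProductSpace ℝ E₂] [FiniteDimensional ℝ E₂]
    {K₁ : Set E₁} {K₂ : Set E₂} (hK₁ : IsCompact K₁) (hK₂ : IsCompact K₂) {a₁ Q₁ : E₁} {a₂ Q₂ : E₂}
    (ha₁ : a₁ ∈ K₁) (ha₂ : a₂ ∈ K₂) {u₁ : E₁ → ℝ} {u₂ : E₂ → ℝ} (hu₁ : ContinuousOn u₁ K₁)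
    (hu₂ : ContinuousOn u₂ K₂) {N : WithLp 2 (E₁ × E₂) →L[ℝ] WithLp 2 (E₁ × E₂)}
    (hN : (N : WithLp 2 (E₁ × E₂) →ₗ[ℝ] WithLp 2 (E₁ × E₂)).IsSymmetric)
    (hle : ∀ x ∈ K₁, ∀ y ∈ K₂, u₁ x + u₂ y ≤ u₁ a₁ + u₂ a₂ + inner ℝ Q₁ (x - a₁)
      + inner ℝ Q₂ (y - a₂) + 1 / 2 * inner ℝ (N (WithLp.toLp 2 (x - a₁, y - a₂)))
        (WithLp.toLp 2 (x - a₁, y - a₂))) {κ : ℝ} (hκ : 0 < κ) :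
    ∃ x ∈ K₁, ∃ y ∈ K₂, ‖x - a₁‖ < κ ∧ ‖y - a₂‖ < κ ∧
      ∃ (q₁ : E₁) (q₂ : E₂), ‖q₁ - Q₁‖ < κ ∧ ‖q₂ - Q₂‖ < κ ∧
      ∃ (A₁ : E₁ →L[ℝ] E₁) (A₂ : E₂ →L[ℝ] E₂),
        HasQuadraticMajorantWithinAt u₁ q₁ A₁ K₁ x ∧ HasQuadraticMajorantWithinAt u₂ q₂ A₂ K₂ y ∧
        ∀ z : WithLp 2 (E₁ × E₂), inner ℝ (A₁ z.fst) z.fst + inner ℝ (A₂ z.snd) z.snd ≤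
          inner ℝ (N z) z + κ * ‖z‖ ^ 2 := by
  have hcont₁ : ContinuousOn (fun w => u₁ (a₁ + w) - u₁ a₁ - inner ℝ Q₁ w)
      ((fun w => a₁ + w) ⁻¹' K₁) :=
    (ContinuousOn.sub (hu₁.comp (continuous_const_add a₁).continuousOn (Set.mapsTo_preimage _ _))
      continuousOn_const).sub (by fun_prop)
  have hcont₂ : ContinuousOn (fun w => u₂ (a₂ + w) - u₂ a₂ - inner ℝ Q₂ w)
      ((fun w => a₂ + w) ⁻¹' K₂) :=
    (ContinuousOn.sub (hu₂.comp (continuous_const_add a₂).continuousOn (Set.mapsTo_preimage _ _))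
      continuousOn_const).sub (by fun_prop)
  obtain ⟨x, hx, y, hy, hxκ, hyκ, q₁, q₂, hq₁, hq₂, A₁, A₂, hA₁, hA₂, hA⟩ :=
    exists_hasQuadraticMajorantWithinAt_of_add_le
      ((Homeomorph.addLeft a₁).isCompact_preimage.2 hK₁)
      ((Homeomorph.addLeft a₂).isCompact_preimage.2 hK₂) (by simpa using ha₁) (by simpa using ha₂)
      hcont₁ hcont₂ (by simp) (by simp) hN (fun x hx y hy => by
        have := hle _ hx _ hy
        simp only [Homeomorph.coe_addLeft, add_sub_cancel_left] at this
        linarith) hκ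
  exact ⟨_, hx, _, hy, by simpa, by simpa, _, _, by simpa, by simpa, A₁, A₂, hA₁.of_translate,
    hA₂.of_translate, hA⟩

theorem eventually_forall_mem_of_le_sub_mul {Z : Type*} [TopologicalSpace Z] {S W : Set Z}
    {Φ Ψ : Z → ℝ} {z₀ : Z} (hS : IsCompact S) (hΦ : ContinuousOn Φ S) (hΨ : ContinuousOn Ψ S)
    (hΨ0 : ∀ z ∈ S, 0 ≤ Ψ z) (hlt : ∀ z ∈ S, Ψ z = 0 → z ≠ z₀ → Φ z < Φ z₀)
    (hW : W ∈ 𝓝[S] z₀) :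
    ∀ᶠ A in atTop, ∀ z ∈ S, Φ z₀ ≤ Φ z - A * Ψ z → z ∈ W := by
  obtain ⟨O, hO, hz₀, hOW⟩ := mem_nhdsWithin.1 hW
  have hlocal (z) (hz : z ∈ S \ O) :
      ∃ s ∈ 𝓝[S \ O] z, ∀ᶠ A in atTop, ∀ y ∈ s, Φ y - A * Ψ y < Φ z₀ := by
    obtain ⟨A₀, hA₀⟩ : ∃ A₀ : ℝ, Φ z - A₀ * Ψ z < Φ z₀ := by
      rcases (hΨ0 z hz.1).eq_or_lt with h0 | hpos
      · exact ⟨0, by simpa using hlt z hz.1 h0.symm fun h => hz.2 (h ▸ hz₀)⟩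
      · refine ⟨(Φ z - Φ z₀ + 1) / Ψ z, ?_⟩
        rw [div_mul_cancel₀ _ hpos.ne']
        linarith
    have hcont : ContinuousWithinAt (fun y => Φ y - A₀ * Ψ y) (S \ O) z :=
      ((hΦ.sub (hΨ.const_mul A₀)) z hz.1).mono Set.sdiff_subset
    refine ⟨_, (hcont.eventually_lt_const hA₀).and eventually_mem_nhdsWithin, ?_⟩
    filter_upwards [eventually_ge_atTop A₀] with A hA y ⟨hy, hyS⟩
    linarith [mul_le_mul_of_nonneg_right hA (hΨ0 y hyS.1)]
  have hmain : ∀ᶠ A in atTop, ∀ z ∈ S \ O, Φ z - A * Ψ z < Φ z₀ :=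
    (hS.diff hO).induction_on (by simp) (fun s t hst h => h.mono fun A hA z hz => hA z (hst hz))
      (fun s t hs ht => (hs.and ht).mono fun A hA z hz => hz.elim (hA.1 z) (hA.2 z)) hlocal
  filter_upwards [hmain] with A hA z hz hle
  by_contra hzW
  exact (hA z ⟨hz, fun hzO => hzW (hOW ⟨hzO, hz⟩)⟩).not_ge hle

variable {K : Set E} {U V : E → ℝ} {B D : E →L[ℝ] E} {e₀ a a' Q₁ Q₂ : E} {κ : ℝ}

/-- The function of two copies of the variable whose difference with a large multiple of
`‖e - e'‖ ^ 2` is maximized in the doubling of variables; on the diagonal it is `U - V` corrected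
by a quadratic polynomial centred at `e₀`. -/
def doubledFunction (U V : E → ℝ) (B : E →L[ℝ] E) (e₀ Q₁ Q₂ : E) (z : E × E) : ℝ :=
  U z.1 - V z.2 - inner ℝ Q₁ (z.1 - e₀) + inner ℝ Q₂ (z.2 - e₀)
    - 1 / 2 * inner ℝ (B (z.1 - e₀)) (z.1 - e₀) - 1 / 2 * inner ℝ (B (z.2 - e₀)) (z.2 - e₀)

theorem continuousOn_doubledFunction (hU : ContinuousOn U K) (hV : ContinuousOn V K) :
    ContinuousOn (doubledFunction U V B e₀ Q₁ Q₂) (K ×ˢ K) := by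
  have hU' : ContinuousOn (fun z : E × E => U z.1) (K ×ˢ K) :=
    hU.comp continuousOn_fst fun z hz => hz.1
  have hV' : ContinuousOn (fun z : E × E => V z.2) (K ×ˢ K) :=
    hV.comp continuousOn_snd fun z hz => hz.2
  unfold doubledFunction
  refine ((((hU'.sub hV').sub ?_).add ?_).sub ?_).sub ?_ <;> fun_prop

theorem eventually_forall_doubledFunction_mem (hK : IsCompact K) (hU : ContinuousOn U K)
    (hV : ContinuousOn V K) (hκ : 0 < κ) (hle : ∀ e ∈ K, U e - V e ≤
      U e₀ - V e₀ + inner ℝ (Q₁ - Q₂) (e - e₀) + inner ℝ (B (e - e₀)) (e - e₀))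
    {W : Set (E × E)} (hW : W ∈ 𝓝[K ×ˢ K] (e₀, e₀)) :
    ∀ᶠ A : ℝ in atTop, ∀ z ∈ K ×ˢ K,
      doubledFunction U V (B + κ • ContinuousLinearMap.id ℝ E) e₀ Q₁ Q₂ (e₀, e₀) ≤
        doubledFunction U V (B + κ • ContinuousLinearMap.id ℝ E) e₀ Q₁ Q₂ z
          - A * ‖z.1 - z.2‖ ^ 2 → z ∈ W := by
  refine eventually_forall_mem_of_le_sub_mul (hK.prod hK) (continuousOn_doubledFunction hU hV)
    (by fun_prop) (fun z _ => sq_nonneg _) ?_ hW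
  rintro ⟨e, e'⟩ ⟨he, -⟩ h0 hne
  obtain rfl : e = e' := by simpa [sub_eq_zero] using h0
  have hpos : 0 < ‖e - e₀‖ := norm_sub_pos_iff.2 fun h => hne (by rw [h])
  have h := hle e he
  rw [inner_sub_left] at h
  simp only [doubledFunction, inner_add_smul_id_apply, sub_self, map_zero, inner_zero_right]
  nlinarith [mul_pos hκ (pow_pos hpos 2)]

variable [FiniteDimensional ℝ E]

/-- The operator on `E × E` whose quadratic form is `⟨D (x - y), x - y⟩ + ⟨B x, x⟩ + ⟨B y, y⟩`. -/
def doublingOperator (D B : E →L[ℝ] E) : WithLp 2 (E × E) →L[ℝ] WithLp 2 (E × E) :=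
  (adjoint (WithLp.fstL 2 ℝ E E - WithLp.sndL 2 ℝ E E) ∘L D ∘L
      (WithLp.fstL 2 ℝ E E - WithLp.sndL 2 ℝ E E) +
    adjoint (WithLp.fstL 2 ℝ E E) ∘L B ∘L WithLp.fstL 2 ℝ E E) +
    adjoint (WithLp.sndL 2 ℝ E E) ∘L B ∘L WithLp.sndL 2 ℝ E E

theorem isSymmetric_doublingOperator {D B : E →L[ℝ] E} (hD : IsSelfAdjoint D)
    (hB : IsSelfAdjoint B) :
    (doublingOperator D B : WithLp 2 (E × E) →ₗ[ℝ] WithLp 2 (E × E)).IsSymmetric :=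
  isSelfAdjoint_iff_isSymmetric.1
    (((hD.adjoint_conj _).add (hB.adjoint_conj _)).add (hB.adjoint_conj _))

theorem inner_doublingOperator (D B : E →L[ℝ] E) (z : WithLp 2 (E × E)) :
    inner ℝ (doublingOperator D B z) z = inner ℝ (D (z.fst - z.snd)) (z.fst - z.snd) +
      inner ℝ (B z.fst) z.fst + inner ℝ (B z.snd) z.snd := by
  simp only [doublingOperator, _root_.add_apply, ContinuousLinearMap.comp_apply,
    inner_add_left, adjoint_inner_left, _root_.sub_apply, WithLp.fstL_apply, WithLp.sndL_apply]

theorem inner_apply_self_eq_add {B : E →L[ℝ] E} (hB : IsSelfAdjoint B) (x y : E) :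
    inner ℝ (B y) y = inner ℝ (B x) x + 2 * inner ℝ (B x) (y - x) +
      inner ℝ (B (y - x)) (y - x) := by
  have hsymm : inner ℝ (B y) x = inner ℝ (B x) y := by
    rw [← hB.adjoint_eq, adjoint_inner_left, hB.adjoint_eq, real_inner_comm]
  simp only [map_sub, inner_sub_left, inner_sub_right, hsymm]
  ring

theorem add_neg_le_add_inner_of_doubledFunction_le (hB : IsSelfAdjoint B) (hD : IsSelfAdjoint D)
    {x y : E} (h : doubledFunction U V B e₀ Q₁ Q₂ (x, y) - 1 / 2 * inner ℝ (D (x - y)) (x - y) ≤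
      doubledFunction U V B e₀ Q₁ Q₂ (a, a') - 1 / 2 * inner ℝ (D (a - a')) (a - a')) :
    U x + (-V) y ≤ U a + (-V) a' + inner ℝ (D (a - a') + Q₁ + B (a - e₀)) (x - a)
      + inner ℝ (-(D (a - a') + Q₂ - B (a' - e₀))) (y - a')
      + 1 / 2 * inner ℝ (doublingOperator D B (WithLp.toLp 2 (x - a, y - a')))
        (WithLp.toLp 2 (x - a, y - a')) := by
  have h₁ := inner_apply_self_eq_add hB (a - e₀) (x - e₀)
  have h₂ := inner_apply_self_eq_add hB (a' - e₀) (y - e₀)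
  have h₃ := inner_apply_self_eq_add hD (a - a') (x - y)
  have hQ₁ : inner ℝ Q₁ (x - e₀) = inner ℝ Q₁ (a - e₀) + inner ℝ Q₁ (x - a) := by
    rw [← inner_add_right, sub_add_sub_cancel']
  have hQ₂ : inner ℝ Q₂ (y - e₀) = inner ℝ Q₂ (a' - e₀) + inner ℝ Q₂ (y - a') := by
    rw [← inner_add_right, sub_add_sub_cancel']
  rw [sub_sub_sub_cancel_right] at h₁ h₂
  rw [sub_sub_sub_comm x y a a'] at h₃
  have hDsub : inner ℝ (D (a - a')) (x - a - (y - a')) =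
      inner ℝ (D (a - a')) (x - a) - inner ℝ (D (a - a')) (y - a') := inner_sub_right _ _ _
  simp only [doubledFunction] at h
  rw [inner_doublingOperator]
  simp only [Pi.neg_apply, inner_add_left, inner_neg_left, inner_sub_left, WithLp.toLp_fst,
    WithLp.toLp_snd]
  linarith

theorem exists_hasQuadraticMajorantWithinAt_of_doubledFunction_le (hK : IsCompact K)
    (hU : ContinuousOn U K) (hV : ContinuousOn V K) (hB : IsSelfAdjoint B) (hD : IsSelfAdjoint D)
    (ha : a ∈ K) (ha' : a' ∈ K) (hmax : ∀ z ∈ K ×ˢ K,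
      doubledFunction U V B e₀ Q₁ Q₂ z - 1 / 2 * inner ℝ (D (z.1 - z.2)) (z.1 - z.2) ≤
        doubledFunction U V B e₀ Q₁ Q₂ (a, a') - 1 / 2 * inner ℝ (D (a - a')) (a - a'))
    (hκ : 0 < κ) :
    ∃ e ∈ K, ∃ e' ∈ K, ‖e - a‖ < κ ∧ ‖e' - a'‖ < κ ∧
      ∃ q₁ q₂ : E, ‖q₁ - (D (a - a') + Q₁ + B (a - e₀))‖ < κ ∧
        ‖q₂ - (D (a - a') + Q₂ - B (a' - e₀))‖ < κ ∧
      ∃ A₁ A₂ : E →L[ℝ] E, HasQuadraticMajorantWithinAt U q₁ A₁ K e ∧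
        HasQuadraticMajorantWithinAt (-V) (-q₂) A₂ K e' ∧
        ∀ z w : E, inner ℝ (A₁ z) z + inner ℝ (A₂ w) w ≤
          inner ℝ (D (z - w)) (z - w) + inner ℝ (B z) z + inner ℝ (B w) w
            + κ * (‖z‖ ^ 2 + ‖w‖ ^ 2) := by
  obtain ⟨e, he, e', he', hea, hea', q₁, q₂, hq₁, hq₂, A₁, A₂, hA₁, hA₂, hA⟩ :=
    exists_hasQuadraticMajorantWithinAt_of_add_le_add_inner hK hK ha ha' hU hV.neg
      (isSymmetric_doublingOperator hD hB)
      (fun x hx y hy => add_neg_le_add_inner_of_doubledFunction_le hB hD (hmax (x, y) ⟨hx, hy⟩)) hκ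
  refine ⟨e, he, e', he', hea, hea', q₁, -q₂, hq₁, ?_, A₁, A₂, hA₁, by rwa [neg_neg],
    fun z w => ?_⟩
  · rwa [← norm_neg, neg_sub', neg_neg]
  · have h := hA (WithLp.toLp 2 (z, w))
    rwa [inner_doublingOperator, WithLp.prod_norm_sq_eq_of_L2] at h

/-- The outcome of the doubling of variables: quadratic majorants of `U` and `-V` at points `e`
and `e'` close to `e₀`, with slopes close to `D (e - e') + Q₁` and `-(D (e - e') + Q₂)` and
coupled second order parts. -/
def HasDoubledMajorants (K : Set E) (U V : E → ℝ) (B D : E →L[ℝ] E) (e₀ Q₁ Q₂ : E) (κ : ℝ) : Prop :=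
  ∃ e ∈ K, ∃ e' ∈ K, ‖e - e₀‖ < κ ∧ ‖e' - e₀‖ < κ ∧ inner ℝ (D (e - e')) (e - e') < κ ∧
    ∃ q₁ q₂ : E, ‖q₁ - (D (e - e') + Q₁)‖ < κ ∧ ‖q₂ - (D (e - e') + Q₂)‖ < κ ∧
    ∃ A₁ A₂ : E →L[ℝ] E, HasQuadraticMajorantWithinAt U q₁ A₁ K e ∧
      HasQuadraticMajorantWithinAt (-V) (-q₂) A₂ K e' ∧
      ∀ z w : E, inner ℝ (A₁ z) z + inner ℝ (A₂ w) w ≤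
        inner ℝ (D (z - w)) (z - w) + inner ℝ (B z) z + inner ℝ (B w) w
          + κ * (‖z‖ ^ 2 + ‖w‖ ^ 2)

theorem hasDoubledMajorants_of_doubledFunction_le (hK : IsCompact K)
    (hU : ContinuousOn U K) (hV : ContinuousOn V K) (hB : IsSelfAdjoint B) (hD : IsSelfAdjoint D)
    (ha : a ∈ K) (ha' : a' ∈ K) (hmax : ∀ z ∈ K ×ˢ K,
      doubledFunction U V B e₀ Q₁ Q₂ z - 1 / 2 * inner ℝ (D (z.1 - z.2)) (z.1 - z.2) ≤
        doubledFunction U V B e₀ Q₁ Q₂ (a, a') - 1 / 2 * inner ℝ (D (a - a')) (a - a'))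
    (hκ : 0 < κ) (hae : ‖a - e₀‖ < κ) (hae' : ‖a' - e₀‖ < κ) (hBa : ‖B (a - e₀)‖ < κ)
    (hBa' : ‖B (a' - e₀)‖ < κ) (hDa : inner ℝ (D (a - a')) (a - a') < κ) :
    HasDoubledMajorants K U V B D e₀ Q₁ Q₂ κ := by
  have hnear : ∀ᶠ z : ℝ × E × E in 𝓝 (0, a, a'), z.1 < κ ∧ ‖z.2.1 - e₀‖ < κ ∧ ‖z.2.2 - e₀‖ < κ ∧
      inner ℝ (D (z.2.1 - z.2.2)) (z.2.1 - z.2.2) < κ ∧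
      z.1 + ‖D (a - a') + B (a - e₀) - D (z.2.1 - z.2.2)‖ < κ ∧
      z.1 + ‖D (a - a') - B (a' - e₀) - D (z.2.1 - z.2.2)‖ < κ := by
    have hlt {F : ℝ × E × E → ℝ} (hF : Continuous F) (h : F (0, a, a') < κ) :
        ∀ᶠ z in 𝓝 (0, a, a'), F z < κ := hF.continuousAt.eventually_lt_const h
    exact (hlt (by fun_prop) hκ).and <| (hlt (by fun_prop) hae).and <|
      (hlt (by fun_prop) hae').and <| (hlt (by fun_prop) hDa).and <|
      (hlt (by fun_prop) (by simpa using hBa)).and <|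
      hlt (by fun_prop) (by simpa [sub_right_comm, norm_sub_rev] using hBa')
  obtain ⟨r, hr, hnear⟩ := Metric.eventually_nhds_iff.1 hnear
  obtain ⟨e, he, e', he', hea, hea', q₁, q₂, hq₁, hq₂, A₁, A₂, hA₁, hA₂, hA⟩ :=
    exists_hasQuadraticMajorantWithinAt_of_doubledFunction_le hK hU hV hB hD ha ha' hmax
      (half_pos hr)
  obtain ⟨hrκ, hee, hee', hDe, hs₁, hs₂⟩ := @hnear (r / 2, e, e') (by
    rw [Prod.dist_eq, Prod.dist_eq, max_lt_iff, max_lt_iff, dist_zero_right, dist_eq_norm,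
      dist_eq_norm, Real.norm_of_nonneg (half_pos hr).le]
    exact ⟨by linarith, by linarith, by linarith⟩)
  refine ⟨e, he, e', he', hee, hee', hDe, q₁, q₂, ?_, ?_, A₁, A₂, hA₁, hA₂, fun z w => ?_⟩
  · rw [show q₁ - (D (e - e') + Q₁) = q₁ - (D (a - a') + Q₁ + B (a - e₀)) +
      (D (a - a') + B (a - e₀) - D (e - e')) by abel]
    exact (norm_add_le _ _).trans_lt (by linarith)
  · rw [show q₂ - (D (e - e') + Q₂) = q₂ - (D (a - a') + Q₂ - B (a' - e₀)) +
      (D (a - a') - B (a' - e₀) - D (e - e')) by abel]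
    exact (norm_add_le _ _).trans_lt (by linarith)
  · exact (hA z w).trans (by gcongr)

theorem isSelfAdjoint_add_smul_id (hB : IsSelfAdjoint B) (k : ℝ) :
    IsSelfAdjoint (B + k • ContinuousLinearMap.id ℝ E) :=
  hB.add (IsSelfAdjoint.smul (IsSelfAdjoint.all k) (IsSelfAdjoint.one (E →L[ℝ] E)))

theorem eventually_hasDoubledMajorants_of_sub_le (hK : IsCompact K)
    (hU : ContinuousOn U K) (hV : ContinuousOn V K) (he₀ : e₀ ∈ K) (hB : IsSelfAdjoint B)
    (hκ : 0 < κ) (hle : ∀ e ∈ K, U e - V e ≤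
      U e₀ - V e₀ + inner ℝ (Q₁ - Q₂) (e - e₀) + inner ℝ (B (e - e₀)) (e - e₀)) :
    ∀ᶠ A : ℝ in atTop, ∀ D : E →L[ℝ] E, IsSelfAdjoint D → (∀ w, A * ‖w‖ ^ 2 ≤ inner ℝ (D w) w) →
      HasDoubledMajorants K U V (B + κ • ContinuousLinearMap.id ℝ E) D e₀ Q₁ Q₂ κ := by
  obtain ⟨B', hB'⟩ : ∃ B', B + κ • ContinuousLinearMap.id ℝ E = B' := ⟨_, rfl⟩
  have hΦ : ContinuousOn (doubledFunction U V B' e₀ Q₁ Q₂) (K ×ˢ K) :=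
    continuousOn_doubledFunction hU hV
  have hW : ∀ᶠ z in 𝓝[K ×ˢ K] (e₀, e₀), ‖z.1 - e₀‖ < κ ∧ ‖z.2 - e₀‖ < κ ∧
      ‖B' (z.1 - e₀)‖ < κ ∧ ‖B' (z.2 - e₀)‖ < κ ∧
      doubledFunction U V B' e₀ Q₁ Q₂ z < doubledFunction U V B' e₀ Q₁ Q₂ (e₀, e₀) + κ / 2 := by
    have hlt {F : E × E → ℝ} (hF : Continuous F) (h0 : F (e₀, e₀) = 0) :
        ∀ᶠ z in 𝓝[K ×ˢ K] (e₀, e₀), F z < κ :=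
      hF.continuousWithinAt.eventually_lt_const (h0.trans_lt hκ)
    exact (hlt (by fun_prop) (by simp)).and <| (hlt (by fun_prop) (by simp)).and <|
      (hlt (by fun_prop) (by simp)).and <| (hlt (by fun_prop) (by simp)).and <|
      (hΦ _ ⟨he₀, he₀⟩).eventually_lt_const (lt_add_of_pos_right _ (half_pos hκ))
  filter_upwards [(tendsto_id.atTop_div_const two_pos).eventually
    (eventually_forall_doubledFunction_mem hK hU hV hκ hle (hB' ▸ hW))] with A hA D hD hAD
  rw [hB'] at hA ⊢
  obtain ⟨⟨a, a'⟩, haa, hmax⟩ := (hK.prod hK).exists_isMaxOn ⟨(e₀, e₀), he₀, he₀⟩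
    (hΦ.sub (g := fun z => 1 / 2 * inner ℝ (D (z.1 - z.2)) (z.1 - z.2)) (by fun_prop))
  have hmax₀ := hmax (⟨he₀, he₀⟩ : (e₀, e₀) ∈ K ×ˢ K)
  simp only [Set.mem_ofPred_eq, Pi.sub_apply, sub_self, inner_zero_right, mul_zero,
    sub_zero] at hmax₀
  obtain ⟨hae, hae', hBa, hBa', hΦa⟩ := hA _ haa (by
    have := hAD (a - a')
    simp only [id]
    linarith)
  exact hasDoubledMajorants_of_doubledFunction_le hK hU hV (hB' ▸ isSelfAdjoint_add_smul_id hB κ) hD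
    haa.1 haa.2 (fun z hz => hmax hz) hκ hae hae' hBa hBa' (by linarith)

end Doubling

/-! ### Euclidean geometry in coordinates -/

section Coordinates

variable {d : ℕ} (v w z : Fin d → ℝ)

theorem dotp_eq_dotProduct : dotp v w = v ⬝ᵥ w := rfl

theorem dotp_eq_inner : dotp v w = inner ℝ (WithLp.toLp 2 v) (WithLp.toLp 2 w) := by
  rw [EuclideanSpace.inner_toLp_toLp, dotp_eq_dotProduct, dotProduct_comm, star_trivial]

theorem eunorm_eq_norm : eunorm v = ‖WithLp.toLp 2 v‖ := by
  simp [eunorm, EuclideanSpace.norm_eq]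

theorem eunorm_nonneg : 0 ≤ eunorm v := Real.sqrt_nonneg _

@[simp]
theorem eunorm_zero : eunorm (0 : Fin d → ℝ) = 0 := by
  simp [eunorm_eq_norm]

theorem eunorm_sq : eunorm v ^ 2 = dotp v v := by
  rw [eunorm_eq_norm, dotp_eq_inner, real_inner_self_eq_norm_sq]

theorem eunorm_add_le : eunorm (v + w) ≤ eunorm v + eunorm w := by
  simpa only [eunorm_eq_norm, WithLp.toLp_add] using norm_add_le _ _

theorem eunorm_neg : eunorm (-v) = eunorm v := by
  rw [eunorm_eq_norm, WithLp.toLp_neg, norm_neg, eunorm_eq_norm]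

theorem eunorm_sub_comm : eunorm (v - w) = eunorm (w - v) := by
  rw [← eunorm_neg, neg_sub]

theorem eunorm_smul (c : ℝ) : eunorm (c • v) = |c| * eunorm v := by
  rw [eunorm_eq_norm, WithLp.toLp_smul, norm_smul, Real.norm_eq_abs, eunorm_eq_norm]

theorem abs_dotp_le : |dotp v w| ≤ eunorm v * eunorm w := by
  simpa only [dotp_eq_inner, eunorm_eq_norm] using abs_real_inner_le_norm _ _

@[fun_prop]
theorem continuous_eunorm : Continuous (eunorm : (Fin d → ℝ) → ℝ) := by
  unfold eunorm
  fun_prop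

theorem exists_isSymm_dotp_mulVec_eq (L : (Fin d → ℝ) →ₗ[ℝ] Fin d → ℝ) :
    ∃ X : Matrix (Fin d) (Fin d) ℝ, X.IsSymm ∧ ∀ ζ, dotp (X *ᵥ ζ) ζ = dotp (L ζ) ζ := by
  refine ⟨(1 / 2 : ℝ) • (L.toMatrix' + L.toMatrix'ᵀ), ?_, fun ζ => ?_⟩
  · rw [Matrix.IsSymm, transpose_smul, transpose_add, transpose_transpose, add_comm]
  · have htranspose : L.toMatrix'ᵀ *ᵥ ζ ⬝ᵥ ζ = L ζ ⬝ᵥ ζ := by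
      rw [mulVec_transpose, ← dotProduct_mulVec, LinearMap.toMatrix'_mulVec, dotProduct_comm]
    rw [dotp_eq_dotProduct, smul_mulVec, add_mulVec, smul_dotProduct, add_dotProduct, htranspose,
      LinearMap.toMatrix'_mulVec, dotp_eq_dotProduct, smul_eq_mul]
    ring

end Coordinates

/-! ### Parabolic jets -/

section Jets

variable {d : ℕ}

/-- Time–space with its Euclidean structure, in which the elliptic doubling of variables produces
parabolic jets. -/
abbrev TimeSpace (d : ℕ) : Type := WithLp 2 (ℝ × EuclideanSpace ℝ (Fin d))

namespace TimeSpace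

/-- The point of time–space with time `t` and position `x`. -/
def mk (t : ℝ) (x : Fin d → ℝ) : TimeSpace d := WithLp.toLp 2 (t, WithLp.toLp 2 x)

/-- The position of a point of time–space, in the coordinates of the statement. -/
def pos (e : TimeSpace d) : Fin d → ℝ := WithLp.ofLp e.snd

@[simp] theorem fst_mk (t : ℝ) (x : Fin d → ℝ) : (mk t x).fst = t := rfl

@[simp] theorem pos_mk (t : ℝ) (x : Fin d → ℝ) : (mk t x).pos = x := rfl

theorem pos_sub (e e' : TimeSpace d) : (e - e').pos = e.pos - e'.pos := rfl

theorem pos_add (e e' : TimeSpace d) : (e + e').pos = e.pos + e'.pos := rfl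

theorem pos_neg (e : TimeSpace d) : (-e).pos = -e.pos := rfl

theorem mk_add_mk (t s : ℝ) (x y : Fin d → ℝ) : mk t x + mk s y = mk (t + s) (x + y) := rfl

theorem smul_mk (c t : ℝ) (x : Fin d → ℝ) : c • mk t x = mk (c * t) (c • x) := rfl

theorem mk_sub_mk (t s : ℝ) (x y : Fin d → ℝ) : mk t x - mk s y = mk (t - s) (x - y) := rfl

@[fun_prop]
theorem continuous_mk : Continuous fun p : ℝ × (Fin d → ℝ) => mk p.1 p.2 := by
  unfold mk
  fun_prop

theorem continuous_fst_pos : Continuous fun e : TimeSpace d => (e.fst, e.pos) := by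
  unfold pos
  fun_prop

theorem inner_eq (e e' : TimeSpace d) : inner ℝ e e' = e.fst * e'.fst + dotp e.pos e'.pos := by
  rw [WithLp.prod_inner_apply, dotp_eq_inner, RCLike.inner_apply, conj_trivial, mul_comm]
  rfl

theorem norm_sq_eq (e : TimeSpace d) : ‖e‖ ^ 2 = e.fst ^ 2 + eunorm e.pos ^ 2 := by
  rw [← real_inner_self_eq_norm_sq, inner_eq, eunorm_sq, sq]

theorem eunorm_pos_le (e : TimeSpace d) : eunorm e.pos ≤ ‖e‖ :=
  abs_le_of_sq_le_sq' (by nlinarith [norm_sq_eq e, sq_nonneg e.fst]) (norm_nonneg e) |>.2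

theorem abs_fst_le (e : TimeSpace d) : |e.fst| ≤ ‖e‖ :=
  abs_le_of_sq_le_sq (by nlinarith [norm_sq_eq e, sq_nonneg (eunorm e.pos)]) (norm_nonneg e)

/-- The operator multiplying times by `a` and positions by `b`. -/
def scaling (d : ℕ) (a b : ℝ) : TimeSpace d →L[ℝ] TimeSpace d :=
  (WithLp.prodContinuousLinearEquiv 2 ℝ ℝ (EuclideanSpace ℝ (Fin d))).symm ∘L
    ((a • ContinuousLinearMap.id ℝ ℝ).prodMap
      (b • ContinuousLinearMap.id ℝ (EuclideanSpace ℝ (Fin d)))) ∘L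
    (WithLp.prodContinuousLinearEquiv 2 ℝ ℝ (EuclideanSpace ℝ (Fin d)))

theorem scaling_apply (a b : ℝ) (e : TimeSpace d) :
    scaling d a b e = mk (a * e.fst) (b • e.pos) := rfl

theorem inner_scaling (a b : ℝ) (e : TimeSpace d) :
    inner ℝ (scaling d a b e) e = a * e.fst ^ 2 + b * eunorm e.pos ^ 2 := by
  rw [scaling_apply, inner_eq, fst_mk, pos_mk, eunorm_sq, dotp_eq_dotProduct, smul_dotProduct,
    dotp_eq_dotProduct, smul_eq_mul]
  ring

theorem isSelfAdjoint_scaling (a b : ℝ) : IsSelfAdjoint (scaling d a b) := by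
  refine ContinuousLinearMap.isSelfAdjoint_iff_isSymmetric.2 fun e e' => ?_
  change inner ℝ (scaling d a b e) e' = inner ℝ e (scaling d a b e')
  simp only [scaling_apply, inner_eq, fst_mk, pos_mk, dotp_eq_dotProduct, smul_dotProduct,
    dotProduct_smul, smul_eq_mul]
  ring

/-- The cylinder `[0, T] × K` in time–space. -/
def cylinder (T : ℝ) (K : Set (Fin d → ℝ)) : Set (TimeSpace d) :=
  {e | e.fst ∈ Set.Icc 0 T ∧ e.pos ∈ K}

theorem isCompact_cylinder (T : ℝ) {K : Set (Fin d → ℝ)} (hK : IsCompact K) :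
    IsCompact (cylinder T K) := by
  convert ((isCompact_Icc (a := 0) (b := T)).prod hK).image continuous_mk using 1
  ext e
  exact ⟨fun he => ⟨(e.fst, e.pos), he, rfl⟩, fun ⟨_, hp, he⟩ => he ▸ hp⟩

end TimeSpace

open TimeSpace

theorem inner_apply_le_dotp_add {A : TimeSpace d →L[ℝ] TimeSpace d} {ζ : Fin d → ℝ} {τ a : ℝ}
    (ha : inner ℝ (A (mk 0 ζ)) (mk 0 ζ) = a) :
    inner ℝ (A (mk τ ζ)) (mk τ ζ) ≤ a + ‖A‖ * (τ ^ 2 + 2 * (|τ| * eunorm ζ)) := by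
  have hsplit : mk τ ζ = mk τ 0 + mk 0 ζ := by rw [mk_add_mk, add_zero, zero_add]
  have hnorm₁ : ‖mk τ (0 : Fin d → ℝ)‖ = |τ| :=
    (sq_eq_sq₀ (norm_nonneg _) (abs_nonneg _)).1 (by simp [norm_sq_eq])
  have hnorm₂ : ‖mk 0 ζ‖ = eunorm ζ :=
    (sq_eq_sq₀ (norm_nonneg _) (eunorm_nonneg _)).1 (by simp [norm_sq_eq])
  have hle (e e' : TimeSpace d) : inner ℝ (A e) e' ≤ ‖A‖ * (‖e‖ * ‖e'‖) :=
    (real_inner_le_norm _ _).trans (by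
      rw [← mul_assoc]
      gcongr
      exact A.le_opNorm e)
  have h₁ := hle (mk τ 0) (mk τ 0)
  have h₂ := hle (mk τ 0) (mk 0 ζ)
  have h₃ := hle (mk 0 ζ) (mk τ 0)
  rw [hnorm₁, ← sq, sq_abs] at h₁
  rw [hnorm₁, hnorm₂] at h₂ h₃
  rw [hsplit, map_add, inner_add_left, inner_add_right, inner_add_right, ha]
  linarith

/-- The remainder of a quadratic majorant in time–space, as a function of `|s - t| + |y - x|²`. -/
def jetRemainder (C r : ℝ) : ℝ := C * (r * √r + r ^ 2)

theorem tendsto_jetRemainder_div (C : ℝ) :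
    Tendsto (fun r => jetRemainder C r / r) (𝓝[>] 0) (𝓝 0) := by
  have hlim : Tendsto (fun r : ℝ => C * (√r + r)) (𝓝[>] 0) (𝓝 0) :=
    (Continuous.tendsto' (by fun_prop) 0 0 (by simp)).mono_left nhdsWithin_le_nhds
  refine hlim.congr' (eventually_mem_nhdsWithin.mono fun r (hr : 0 < r) => ?_)
  change C * (√r + r) = C * (r * √r + r ^ 2) / r
  field_simp

theorem mul_sq_add_le_jetRemainder {C τ ρ : ℝ} (hC : 0 ≤ C) (hρ : 0 ≤ ρ) :
    C / 2 * (τ ^ 2 + 2 * (|τ| * ρ)) ≤ jetRemainder C (|τ| + ρ ^ 2) := by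
  have hτ : |τ| ≤ |τ| + ρ ^ 2 := le_add_of_nonneg_right (sq_nonneg ρ)
  have hsq : τ ^ 2 ≤ (|τ| + ρ ^ 2) ^ 2 := by rw [← sq_abs]; gcongr
  have hmul : |τ| * ρ ≤ (|τ| + ρ ^ 2) * √(|τ| + ρ ^ 2) := by
    gcongr
    exact Real.le_sqrt_of_sq_le (le_add_of_nonneg_left (abs_nonneg τ))
  rw [jetRemainder]
  nlinarith [mul_le_mul_of_nonneg_left hsq hC, mul_le_mul_of_nonneg_left hmul hC,
    mul_nonneg hC (sq_nonneg (|τ| + ρ ^ 2))]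

variable {K : Set (Fin d → ℝ)} {u v : ℝ → (Fin d → ℝ) → ℝ} {T t : ℝ} {x : Fin d → ℝ}

theorem exists_inSuperjet_of_hasQuadraticMajorantWithinAt {q e : TimeSpace d}
    {A : TimeSpace d →L[ℝ] TimeSpace d} (hT : e.fst < T)
    (h : HasQuadraticMajorantWithinAt (fun e => u e.fst e.pos) q A (cylinder T K) e) :
    ∃ X : Matrix (Fin d) (Fin d) ℝ, InSuperjet K u e.fst e.pos q.fst q.pos X ∧
      ∀ ζ, dotp (X *ᵥ ζ) ζ = inner ℝ (A (mk 0 ζ)) (mk 0 ζ) := by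
  obtain ⟨X, hX, hform⟩ := exists_isSymm_dotp_mulVec_eq (d := d)
    { toFun := fun ζ => (A (mk 0 ζ)).pos
      map_add' := fun ζ ζ' => by
        rw [← add_zero (0 : ℝ), ← mk_add_mk, map_add, add_zero]
        rfl
      map_smul' := fun c ζ => by
        rw [← mul_zero c, ← smul_mk, map_smul, mul_zero]
        rfl }
  have hXA (ζ) : inner ℝ (A (mk 0 ζ)) (mk 0 ζ) = dotp (X *ᵥ ζ) ζ := by
    rw [hform, inner_eq, fst_mk, mul_zero, zero_add, pos_mk]
    rfl
  obtain ⟨r, hr, hball⟩ := Metric.mem_nhdsWithin_iff.1 h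
  refine ⟨X, ⟨hX, jetRemainder ‖A‖, ?_, by simp [jetRemainder], tendsto_jetRemainder_div _,
    min (r / 2) (T - e.fst), lt_min (half_pos hr) (sub_pos.2 hT), fun s hs y hy hst hyx => ?_⟩,
    fun ζ => (hXA ζ).symm⟩
  · unfold jetRemainder
    fun_prop
  rw [lt_min_iff] at hst hyx
  have hdist : dist (mk s y) e < r := by
    rw [dist_eq_norm]
    refine lt_of_pow_lt_pow_left₀ 2 hr.le ?_
    have h₁ : |s - e.fst| ^ 2 < (r / 2) ^ 2 := by gcongr; exact hst.1
    have h₂ : eunorm (y - e.pos) ^ 2 < (r / 2) ^ 2 := by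
      gcongr
      · exact eunorm_nonneg _
      · exact hyx.1
    rw [sq_abs] at h₁
    have := norm_sq_eq (mk s y - e)
    simp only [pos_sub, WithLp.sub_fst, fst_mk, pos_mk] at this
    nlinarith
  have hsT : s ≤ T := by linarith [(abs_lt.1 hst.2).2]
  have hmaj := hball ⟨Metric.mem_ball.2 hdist, ⟨hs, hsT⟩, hy⟩
  have hle := inner_apply_le_dotp_add (τ := s - e.fst) (hXA (y - e.pos))
  have hrem := mul_sq_add_le_jetRemainder (τ := s - e.fst) (norm_nonneg A)
    (eunorm_nonneg (y - e.pos))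
  rw [Set.mem_ofPred_eq, show mk s y - e = mk (s - e.fst) (y - e.pos) from rfl, inner_eq] at hmaj
  simp only [fst_mk, pos_mk] at hmaj
  linarith

theorem InSuperjet.inSubjet_neg {p : ℝ} {q : Fin d → ℝ} {X : Matrix (Fin d) (Fin d) ℝ}
    (h : InSuperjet K (-v) t x p q X) : InSubjet K v t x (-p) (-q) (-X) := by
  obtain ⟨hX, o, ho, ho0, hlim, δ, hδ, hle⟩ := h
  refine ⟨by rw [Matrix.IsSymm, transpose_neg, hX], -o, ho.neg, by simp [ho0], ?_, δ, hδ,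
    fun s hs y hy hst hyx => ?_⟩
  · simpa [neg_div] using hlim.neg
  · have := hle s hs y hy hst hyx
    simp only [Pi.neg_apply, dotp_eq_dotProduct, neg_mulVec, neg_dotProduct] at this ⊢
    linarith

theorem exists_inSubjet_of_hasQuadraticMajorantWithinAt {q e : TimeSpace d}
    {A : TimeSpace d →L[ℝ] TimeSpace d} (hT : e.fst < T)
    (h : HasQuadraticMajorantWithinAt (fun e => -v e.fst e.pos) (-q) A (cylinder T K) e) :
    ∃ Y : Matrix (Fin d) (Fin d) ℝ, InSubjet K v e.fst e.pos q.fst q.pos Y ∧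
      ∀ ζ, dotp (Y *ᵥ ζ) ζ = -inner ℝ (A (mk 0 ζ)) (mk 0 ζ) := by
  obtain ⟨X, hX, hXA⟩ := exists_inSuperjet_of_hasQuadraticMajorantWithinAt (u := -v) hT h
  refine ⟨-X, by simpa [pos_neg] using hX.inSubjet_neg, fun ζ => ?_⟩
  rw [← hXA, dotp_eq_dotProduct, neg_mulVec, neg_dotProduct, ← dotp_eq_dotProduct]

/-- Semijets of `u` and `v` at nearby points, coupled as the doubling of variables around
`(t₀, x₀)` with penalization parameter `A` produces them: `κ` measures all errors, and `η` bounds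
the distance between the two times. -/
structure DoubledJets (K : Set (Fin d → ℝ)) (u v : ℝ → (Fin d → ℝ) → ℝ) (T t₀ : ℝ)
    (x₀ : Fin d → ℝ) (P : ℝ) (Q₁ Q₂ : Fin d → ℝ) (c A κ η : ℝ) where
  (t s : ℝ) (x y : Fin d → ℝ) (p₁ p₂ : ℝ) (q₁ q₂ : Fin d → ℝ) (X Y : Matrix (Fin d) (Fin d) ℝ)
  t_mem : t ∈ Set.Ioo 0 T
  s_mem : s ∈ Set.Ioo 0 T
  x_mem : x ∈ K
  y_mem : y ∈ K
  abs_t_sub_le : |t - t₀| ≤ κ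
  abs_s_sub_le : |s - t₀| ≤ κ
  eunorm_x_sub_le : eunorm (x - x₀) ≤ κ
  eunorm_y_sub_le : eunorm (y - x₀) ≤ κ
  abs_sub_le : |t - s| ≤ η
  penalty_le : A * eunorm (x - y) ^ 2 ≤ κ
  eunorm_q₁_sub_le : eunorm (q₁ - (A • (x - y) + Q₁)) ≤ κ
  eunorm_q₂_sub_le : eunorm (q₂ - (A • (x - y) + Q₂)) ≤ κ
  le_p₁_sub_p₂ : P - κ ≤ p₁ - p₂
  inSuperjet : InSuperjet K u t x p₁ q₁ X
  inSubjet : InSubjet K v s y p₂ q₂ Y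
  dotp_mulVec_sub_le : ∀ ξ ζ, dotp (X *ᵥ ξ) ξ - dotp (Y *ᵥ ζ) ζ ≤
    A * eunorm (ξ - ζ) ^ 2 + (c + κ) * (eunorm ξ ^ 2 + eunorm ζ ^ 2)

theorem continuousOn_cylinder
    (hu : ContinuousOn (fun p : ℝ × (Fin d → ℝ) => u p.1 p.2) (Set.Icc 0 T ×ˢ K)) :
    ContinuousOn (fun e : TimeSpace d => u e.fst e.pos) (cylinder T K) :=
  hu.comp continuous_fst_pos.continuousOn fun _ he => he

variable {t₀ : ℝ} {x₀ : Fin d → ℝ} {P : ℝ} {Q₁ Q₂ : Fin d → ℝ} {c C κ : ℝ}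

theorem nonempty_doubledJets_of_hasDoubledMajorants {A a η δ : ℝ} (hη : 0 ≤ η)
    (hδκ : 2 * δ ≤ κ) (hδt : δ ≤ t₀) (hδT : δ ≤ T - t₀) (hA : 0 ≤ A) (ha : 0 < a)
    (hδη : δ ≤ a * η ^ 2)
    (h : HasDoubledMajorants (cylinder T K) (fun e => u e.fst e.pos) (fun e => v e.fst e.pos)
      (scaling d C c + δ • ContinuousLinearMap.id ℝ (TimeSpace d)) (scaling d a A) (mk t₀ x₀)
      (mk P Q₁) (mk 0 Q₂) δ) :
    Nonempty (DoubledJets K u v T t₀ x₀ P Q₁ Q₂ c A κ η) := by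
  obtain ⟨e, he, e', he', hee, hee', hD, q₁, q₂, hq₁, hq₂, A₁, A₂, hA₁, hA₂, hle⟩ := h
  have hδ : 0 < δ := (norm_nonneg _).trans_lt hee
  have ht := abs_lt.1 ((abs_fst_le _).trans_lt hee)
  have hs := abs_lt.1 ((abs_fst_le _).trans_lt hee')
  have hp₁ := abs_lt.1 ((abs_fst_le _).trans_lt hq₁)
  have hp₂ := abs_lt.1 ((abs_fst_le _).trans_lt hq₂)
  have hx := (eunorm_pos_le _).trans_lt hee
  have hy := (eunorm_pos_le _).trans_lt hee'
  have hr₁ := (eunorm_pos_le _).trans_lt hq₁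
  have hr₂ := (eunorm_pos_le _).trans_lt hq₂
  rw [inner_scaling] at hD
  simp only [scaling_apply, WithLp.sub_fst, WithLp.add_fst, pos_sub, pos_add, fst_mk, pos_mk]
    at ht hs hp₁ hp₂ hx hy hr₁ hr₂ hD
  obtain ⟨X, hX, hXA⟩ := exists_inSuperjet_of_hasQuadraticMajorantWithinAt (by linarith) hA₁
  obtain ⟨Y, hY, hYA⟩ := exists_inSubjet_of_hasQuadraticMajorantWithinAt (by linarith) hA₂
  have hform (ξ ζ) : dotp (X *ᵥ ξ) ξ - dotp (Y *ᵥ ζ) ζ ≤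
      A * eunorm (ξ - ζ) ^ 2 + (c + κ) * (eunorm ξ ^ 2 + eunorm ζ ^ 2) := by
    have hle' := hle (mk 0 ξ) (mk 0 ζ)
    simp only [inner_add_smul_id_apply, inner_scaling, norm_sq_eq, mk_sub_mk, fst_mk, pos_mk,
      sub_zero] at hle'
    rw [hXA, hYA]
    nlinarith [mul_le_mul_of_nonneg_right hδκ
      (add_nonneg (sq_nonneg (eunorm ξ)) (sq_nonneg (eunorm ζ)))]
  have hpen := mul_nonneg hA (sq_nonneg (eunorm (e.pos - e'.pos)))
  have htime := mul_nonneg ha.le (sq_nonneg (e.fst - e'.fst))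
  exact ⟨{ t := e.fst, s := e'.fst, x := e.pos, y := e'.pos, p₁ := q₁.fst, p₂ := q₂.fst
           q₁ := q₁.pos, q₂ := q₂.pos, X := X, Y := Y
           t_mem := ⟨by linarith, by linarith⟩
           s_mem := ⟨by linarith, by linarith⟩
           x_mem := he.2, y_mem := he'.2
           abs_t_sub_le := abs_le.2 ⟨by linarith, by linarith⟩
           abs_s_sub_le := abs_le.2 ⟨by linarith, by linarith⟩
           eunorm_x_sub_le := by linarith
           eunorm_y_sub_le := by linarith
           abs_sub_le := abs_le_of_sq_le_sq (le_of_mul_le_mul_left (by linarith) ha) hη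
           penalty_le := by linarith
           eunorm_q₁_sub_le := by linarith
           eunorm_q₂_sub_le := by linarith
           le_p₁_sub_p₂ := by linarith
           inSuperjet := hX, inSubjet := hY
           dotp_mulVec_sub_le := hform }⟩

theorem eventually_nonempty_doubledJets (hK : IsCompact K)
    (hu : ContinuousOn (fun p : ℝ × (Fin d → ℝ) => u p.1 p.2) (Set.Icc 0 T ×ˢ K))
    (hv : ContinuousOn (fun p : ℝ × (Fin d → ℝ) => v p.1 p.2) (Set.Icc 0 T ×ˢ K))
    (ht₀ : t₀ ∈ Set.Ioo 0 T) (hx₀ : x₀ ∈ K)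
    (hle : ∀ t ∈ Set.Icc 0 T, ∀ x ∈ K, u t x - v t x ≤ u t₀ x₀ - v t₀ x₀ + P * (t - t₀)
      + dotp (Q₁ - Q₂) (x - x₀) + C * (t - t₀) ^ 2 + c * eunorm (x - x₀) ^ 2) (hκ : 0 < κ) :
    ∀ᶠ A in atTop, ∀ η > 0, Nonempty (DoubledJets K u v T t₀ x₀ P Q₁ Q₂ c A κ η) := by
  set δ := min (κ / 2) (min t₀ (T - t₀))
  have hδ : 0 < δ := lt_min (half_pos hκ) (lt_min ht₀.1 (sub_pos.2 ht₀.2))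
  have hmaj := eventually_hasDoubledMajorants_of_sub_le (isCompact_cylinder T hK)
    (continuousOn_cylinder hu) (continuousOn_cylinder hv) (e₀ := mk t₀ x₀)
    (Q₁ := mk P Q₁) (Q₂ := mk 0 Q₂)
    ⟨Set.Ioo_subset_Icc_self ht₀, hx₀⟩ (isSelfAdjoint_scaling C c) hδ fun e he => by
      have := hle e.fst he.1 e.pos he.2
      rw [mk_sub_mk, inner_eq, inner_scaling]
      simp only [WithLp.sub_fst, pos_sub, fst_mk, pos_mk, sub_zero]
      linarith
  filter_upwards [hmaj, eventually_gt_atTop 0] with A hmaj hA η hη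
  have hAa : A ≤ max A (δ / η ^ 2) := le_max_left _ _
  refine nonempty_doubledJets_of_hasDoubledMajorants hη.le
    (by linarith [min_le_left (κ / 2) (min t₀ (T - t₀))])
    ((min_le_right _ _).trans (min_le_left _ _)) ((min_le_right _ _).trans (min_le_right _ _))
    hA.le (hA.trans_le hAa) ((div_le_iff₀ (by positivity)).1 (le_max_right A (δ / η ^ 2)))
    (hmaj _ (isSelfAdjoint_scaling _ _) fun w => ?_)
  rw [inner_scaling, norm_sq_eq]
  nlinarith [mul_le_mul_of_nonneg_right hAa (sq_nonneg w.fst)]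

end Jets

/-! ### The defining function of the domain -/

section DefiningFunction

theorem exists_norm_sub_sub_fderiv_le {E F : Type*} [NormedAddCommGroup E]
    [NormedSpace ℝ E] [ProperSpace E] [NormedAddCommGroup F] [NormedSpace ℝ F] {f : E → F}
    (hf : ContDiff ℝ 2 f) {K : Set E} (hK : Bornology.IsBounded K) :
    ∃ C ≥ 0, ∀ x ∈ K, ∀ y ∈ K, ‖f y - f x - fderiv ℝ f x (y - x)‖ ≤ C * ‖y - x‖ ^ 2 := by
  obtain ⟨R, hR⟩ := hK.subset_closedBall 0
  have hball : Convex ℝ (Metric.closedBall (0 : E) R) := convex_closedBall _ _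
  have hf' : ContDiff ℝ 1 (fderiv ℝ f) := hf.fderiv_right (by norm_num)
  obtain ⟨C, hC⟩ := (isCompact_closedBall (0 : E) R).exists_bound_of_continuousOn
    (hf'.continuous_fderiv (by norm_num)).continuousOn
  refine ⟨max C 0, le_max_right _ _, fun x hx y hy => ?_⟩
  have hlip : ∀ z ∈ segment ℝ x y, ‖fderiv ℝ f z - fderiv ℝ f x‖ ≤ max C 0 * ‖y - x‖ := by
    intro z hz
    calc ‖fderiv ℝ f z - fderiv ℝ f x‖ ≤ max C 0 * ‖z - x‖ :=
          hball.norm_image_sub_le_of_norm_fderiv_le (𝕜 := ℝ)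
            (fun w _ => hf'.differentiable (by norm_num) w)
            (fun w hw => (hC w hw).trans (le_max_left _ _)) (hR hx)
            (hball.segment_subset (hR hx) (hR hy) hz)
      _ ≤ max C 0 * ‖y - x‖ := by
          gcongr
          exact norm_sub_le_of_mem_segment hz
  have := (convex_segment x y).norm_image_sub_le_of_norm_fderiv_le' (𝕜 := ℝ)
    (fun w _ => hf.differentiable (by norm_num) w) hlip
    (left_mem_segment ℝ x y) (right_mem_segment ℝ x y)
  rwa [sq, ← mul_assoc]

theorem setOf_nonpos_subset_closure_setOf_neg {E : Type*} [NormedAddCommGroup E]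
    [NormedSpace ℝ E] {f : E → ℝ} (hf : ∀ x, f x = 0 → fderiv ℝ f x ≠ 0) :
    {x | f x ≤ 0} ⊆ closure {x | f x < 0} := by
  intro x hx
  rcases lt_or_eq_of_le (show f x ≤ 0 from hx) with hneg | hzero
  · exact subset_closure hneg
  obtain ⟨w, hw⟩ : ∃ w, fderiv ℝ f x w < 0 := by
    obtain ⟨w, hw⟩ := DFunLike.ne_iff.1 (hf x hzero)
    rcases lt_or_gt_of_ne hw with h | h
    · exact ⟨w, h⟩
    · exact ⟨-w, by rw [map_neg]; exact neg_neg_of_pos h⟩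
  have hline : HasDerivAt (fun τ : ℝ => x + τ • w) w 0 := by
    simpa using ((hasDerivAt_id (0 : ℝ)).smul_const w).const_add x
  have hdiff : DifferentiableAt ℝ f x := by
    by_contra h
    exact hf x hzero (fderiv_zero_of_not_differentiableAt h)
  have hderiv : HasDerivAt (fun τ : ℝ => f (x + τ • w)) (fderiv ℝ f x w) 0 :=
    HasFDerivAt.comp_hasDerivAt (l := f) 0 (by simpa using hdiff.hasFDerivAt) hline
  have hsign := eventually_nhdsWithin_sign_eq_of_deriv_neg (hderiv.deriv.trans_lt hw)
    (by simpa using hzero)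
  have hlim : Tendsto (fun τ : ℝ => x + τ • w) (𝓝[>] 0) (𝓝 x) :=
    (Continuous.tendsto' (by fun_prop) 0 x (by simp)).mono_left nhdsWithin_le_nhds
  refine mem_closure_of_tendsto hlim ?_
  filter_upwards [hsign.filter_mono nhdsWithin_le_nhds, self_mem_nhdsWithin] with τ hτ hpos
  rwa [zero_sub, sign_neg (neg_neg_of_pos hpos), sign_eq_neg_one_iff] at hτ

variable {d : ℕ} {ℓ : (Fin d → ℝ) → ℝ}

theorem fderiv_eq_dotp_gradVec (x w : Fin d → ℝ) : fderiv ℝ ℓ x w = dotp (gradVec ℓ x) w := by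
  conv_lhs => rw [← Finset.univ_sum_single w]
  rw [map_sum]
  refine Finset.sum_congr rfl fun i _ => ?_
  have hsingle : Pi.single i (w i) = w i • (Pi.single i 1 : Fin d → ℝ) := by
    rw [← Pi.single_smul', smul_eq_mul, mul_one]
  rw [hsingle, map_smul, smul_eq_mul, mul_comm, gradVec]

theorem continuous_gradVec (hℓ : ContDiff ℝ 1 ℓ) : Continuous (gradVec ℓ) :=
  continuous_pi fun _ => (hℓ.continuous_fderiv one_ne_zero).clm_apply continuous_const

theorem norm_le_eunorm (v : Fin d → ℝ) : ‖v‖ ≤ eunorm v :=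
  (pi_norm_le_iff_of_nonneg (eunorm_nonneg v)).2 fun i => by
    rw [eunorm_eq_norm]
    exact PiLp.norm_apply_le (WithLp.toLp 2 v) i

theorem exists_abs_sub_sub_dotp_gradVec_le (hℓ : ContDiff ℝ 2 ℓ) {K : Set (Fin d → ℝ)}
    (hK : Bornology.IsBounded K) :
    ∃ C ≥ 0, ∀ x ∈ K, ∀ y ∈ K,
      |ℓ y - ℓ x - dotp (gradVec ℓ x) (y - x)| ≤ C * eunorm (y - x) ^ 2 := by
  obtain ⟨C, hC, h⟩ := exists_norm_sub_sub_fderiv_le hℓ hK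
  refine ⟨C, hC, fun x hx y hy => ?_⟩
  rw [← fderiv_eq_dotp_gradVec]
  refine (h x hx y hy).trans ?_
  gcongr
  exact norm_le_eunorm _

theorem isCompact_setOf_nonpos (hℓ : Continuous ℓ)
    (hgrad : ∀ x, ℓ x = 0 → eunorm (gradVec ℓ x) = 1)
    (hD : Bornology.IsBounded {x | ℓ x < 0}) : IsCompact {x | ℓ x ≤ 0} := by
  refine Metric.isCompact_of_isClosed_isBounded (isClosed_le hℓ continuous_const)
    (hD.closure.subset (setOf_nonpos_subset_closure_setOf_neg fun x hx h => ?_))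
  have : gradVec ℓ x = 0 := funext fun i => by simp [gradVec, h]
  simpa [this] using hgrad x hx

end DefiningFunction

/-! ### One-sided derivatives of convex functions -/

section Convex

variable {φ : ℝ → EReal} {r a p q : ℝ}

theorem ProperConvexLsc.coe_toReal (hφ : ProperConvexLsc φ) (hr : φ r ≠ ⊤) :
    ((φ r).toReal : EReal) = φ r :=
  EReal.coe_toReal hr (hφ.2.1 r)

theorem ProperConvexLsc.convexOn_toReal (hφ : ProperConvexLsc φ) :
    ConvexOn ℝ {r | φ r ≠ ⊤} fun r => (φ r).toReal := by
  have hle (x y : ℝ) (hx : φ x ≠ ⊤) (hy : φ y ≠ ⊤) (a b : ℝ) (ha : 0 ≤ a) (hb : 0 ≤ b)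
      (hab : a + b = 1) :
      φ (a * x + b * y) ≤ ((a * (φ x).toReal + b * (φ y).toReal : ℝ) : EReal) := by
    have := hφ.2.2.2 x y a b ha hb hab
    rw [← hφ.coe_toReal hx, ← hφ.coe_toReal hy] at this
    exact_mod_cast this
  have hfinite (x y : ℝ) (hx : φ x ≠ ⊤) (hy : φ y ≠ ⊤) (a b : ℝ) (ha : 0 ≤ a) (hb : 0 ≤ b)
      (hab : a + b = 1) : φ (a * x + b * y) ≠ ⊤ :=
    ((hle x y hx hy a b ha hb hab).trans_lt (EReal.coe_lt_top _)).ne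
  refine ⟨fun x hx y hy a b ha hb hab => hfinite x y hx hy a b ha hb hab,
    fun x hx y hy a b ha hb hab => ?_⟩
  have := hle x y hx hy a b ha hb hab
  rw [← hφ.coe_toReal (hfinite x y hx hy a b ha hb hab)] at this
  exact_mod_cast this

theorem ProperConvexLsc.coe_slope_le_leftD (hφ : ProperConvexLsc φ) (hr : φ r ≠ ⊤) (ha : φ a ≠ ⊤)
    (har : a < r) : ((((φ r).toReal - (φ a).toReal) / (r - a) : ℝ) : EReal) ≤ leftD φ r := by
  refine le_iSup_of_le (⟨r - a, sub_pos.2 har⟩ : Set.Ioi (0 : ℝ)) (le_of_eq ?_)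
  rw [sub_sub_cancel, ← hφ.coe_toReal hr, ← hφ.coe_toReal ha, div_eq_inv_mul, ← one_div]
  norm_cast

theorem ProperConvexLsc.rightD_le_coe_slope (hφ : ProperConvexLsc φ) (hr : φ r ≠ ⊤) (ha : φ a ≠ ⊤)
    (hra : r < a) : rightD φ r ≤ ((((φ a).toReal - (φ r).toReal) / (a - r) : ℝ) : EReal) := by
  refine iInf_le_of_le (⟨a - r, sub_pos.2 hra⟩ : Set.Ioi (0 : ℝ)) (le_of_eq ?_)
  rw [add_sub_cancel, ← hφ.coe_toReal hr, ← hφ.coe_toReal ha, div_eq_inv_mul, ← one_div]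
  norm_cast

theorem ProperConvexLsc.exists_eventually_rightD_le_le_leftD (hφ : ProperConvexLsc φ)
    (hp : φ p ≠ ⊤) (hq : φ q ≠ ⊤) (hpq : p < q) :
    ∃ c : ℝ, (∀ᶠ r in 𝓝 q, φ r ≠ ⊤ → (c : EReal) ≤ leftD φ r) ∧
      ∀ᶠ r in 𝓝 p, φ r ≠ ⊤ → rightD φ r ≤ (c : EReal) := by
  obtain ⟨a, hpa, haq⟩ := exists_between hpq
  obtain ⟨b, hab, hbq⟩ := exists_between haq
  have hseg : Set.Icc p q ⊆ {r | φ r ≠ ⊤} := hφ.convexOn_toReal.1.ordConnected.out hp hq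
  have ha : φ a ≠ ⊤ := hseg ⟨hpa.le, haq.le⟩
  have hb : φ b ≠ ⊤ := hseg ⟨(hpa.trans hab).le, hbq.le⟩
  refine ⟨((φ b).toReal - (φ a).toReal) / (b - a), ?_, ?_⟩
  · filter_upwards [eventually_ge_nhds hbq] with r hbr hr
    refine le_trans ?_ (hφ.coe_slope_le_leftD hr ha (hab.trans_le hbr))
    exact_mod_cast hφ.convexOn_toReal.secant_mono ha hb hr hab.ne' (hab.trans_le hbr).ne' hbr
  · filter_upwards [eventually_le_nhds hpa] with r hra hr
    refine (hφ.rightD_le_coe_slope hr hb (hra.trans_lt hab)).trans ?_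
    have := hφ.convexOn_toReal.secant_mono hb hr ha (hra.trans_lt hab).ne hab.ne hra
    rw [← neg_sub, ← neg_sub b, neg_div_neg_eq, ← neg_sub (φ b).toReal, ← neg_sub b,
      neg_div_neg_eq] at this
    exact_mod_cast this

end Convex

/-! ### Structure conditions on the coefficients -/

section FrobeniusNorm

variable {d : ℕ} (M N S R X Y : Matrix (Fin d) (Fin d) ℝ) (q q' b b' : Fin d → ℝ)

theorem matNorm_eq_norm :
    matNorm M =
      ‖(WithLp.toLp 2 fun p : Fin d × Fin d => M p.1 p.2 : EuclideanSpace ℝ (Fin d × Fin d))‖ := by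
  simp [EuclideanSpace.norm_eq, matNorm, Fintype.sum_prod_type]

theorem matNorm_nonneg : 0 ≤ matNorm M := Real.sqrt_nonneg _

theorem matNorm_add_le : matNorm (M + N) ≤ matNorm M + matNorm N := by
  rw [matNorm_eq_norm, matNorm_eq_norm, matNorm_eq_norm]
  exact norm_add_le
    (WithLp.toLp 2 fun p : Fin d × Fin d => M p.1 p.2 : EuclideanSpace ℝ (Fin d × Fin d))
    (WithLp.toLp 2 fun p : Fin d × Fin d => N p.1 p.2)

theorem matNorm_sq : matNorm M ^ 2 = ∑ j, eunorm (M.col j) ^ 2 := by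
  unfold matNorm eunorm
  rw [Real.sq_sqrt (by positivity), Finset.sum_comm]
  exact Finset.sum_congr rfl fun j _ => (Real.sq_sqrt (by positivity)).symm

theorem continuous_matNorm : Continuous (matNorm : Matrix (Fin d) (Fin d) ℝ → ℝ) := by
  exact Real.continuous_sqrt.comp (continuous_finsetSum _ fun i _ =>
    continuous_finsetSum _ fun j _ => (continuous_id.matrix_elem i j).pow 2)

theorem eunorm_vecMul_le : eunorm (q ᵥ* M) ≤ eunorm q * matNorm M := by
  refine le_of_sq_le_sq ?_ (mul_nonneg (eunorm_nonneg q) (matNorm_nonneg M))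
  rw [mul_pow, matNorm_sq, Finset.mul_sum, eunorm, Real.sq_sqrt (by positivity)]
  refine Finset.sum_le_sum fun j _ => ?_
  rw [← mul_pow, ← sq_abs]
  exact pow_le_pow_left₀ (abs_nonneg _) (abs_dotp_le q (M.col j)) 2

theorem eunorm_vecMul_sub_vecMul_le :
    eunorm (q ᵥ* S - q' ᵥ* R) ≤
      eunorm (q - q') * matNorm S + eunorm q' * matNorm (S - R) := by
  have heq : q ᵥ* S - q' ᵥ* R = (q - q') ᵥ* S + q' ᵥ* (S - R) := by
    rw [sub_vecMul, vecMul_sub]; abel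
  rw [heq]
  exact (eunorm_add_le _ _).trans
    (add_le_add (eunorm_vecMul_le _ _) (eunorm_vecMul_le _ _))

theorem dotp_sub_dotp_le :
    dotp b q - dotp b' q' ≤ eunorm (b - b') * eunorm q + eunorm b' * eunorm (q - q') := by
  have heq : dotp b q - dotp b' q' = dotp (b - b') q + dotp b' (q - q') := by
    simp only [dotp_eq_dotProduct, sub_dotProduct, dotProduct_sub]; ring
  rw [heq]
  exact add_le_add ((le_abs_self _).trans (abs_dotp_le _ _))
    ((le_abs_self _).trans (abs_dotp_le _ _))

theorem trace_mul_transpose_mul_eq_sum :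
    trace (S * Sᵀ * X) = ∑ j, dotp (X *ᵥ S.col j) (S.col j) := by
  rw [Matrix.mul_assoc, trace_mul_comm, Matrix.mul_assoc, trace]
  refine Finset.sum_congr rfl fun j _ => ?_
  rw [diag_apply, mul_apply, dotp]
  exact Finset.sum_congr rfl fun i _ => mul_comm _ _

variable {S R X Y}

theorem trace_sub_trace_le {A c : ℝ}
    (h : ∀ ξ ζ, dotp (X *ᵥ ξ) ξ - dotp (Y *ᵥ ζ) ζ ≤
      A * eunorm (ξ - ζ) ^ 2 + c * (eunorm ξ ^ 2 + eunorm ζ ^ 2)) :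
    trace (S * Sᵀ * X) - trace (R * Rᵀ * Y) ≤
      A * matNorm (S - R) ^ 2 + c * (matNorm S ^ 2 + matNorm R ^ 2) := by
  simp only [trace_mul_transpose_mul_eq_sum, matNorm_sq, ← Finset.sum_sub_distrib,
    ← Finset.sum_add_distrib, Finset.mul_sum]
  exact Finset.sum_le_sum fun j _ => h _ _

end FrobeniusNorm

section StructureConditions

variable {d : ℕ}

/-- The conditions on the coefficients over `[0, T] × K` that drive the comparison of jets: `b` and
`σ` are bounded and Lipschitz in space, and `f` is one-sided Lipschitz in the value, Lipschitz in
the gradient variable and has the modulus of continuity `m` in space. -/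
structure StructureConditions (K : Set (Fin d → ℝ)) (b : ℝ → (Fin d → ℝ) → (Fin d → ℝ))
    (σ : ℝ → (Fin d → ℝ) → Matrix (Fin d) (Fin d) ℝ)
    (f : ℝ → (Fin d → ℝ) → ℝ → (Fin d → ℝ) → ℝ) (m : ℝ → ℝ) (T α β L Bb Bσ : ℝ) : Prop where
  β_nonneg : 0 ≤ β
  eunorm_b_le : ∀ t ∈ Set.Icc 0 T, ∀ x ∈ K, eunorm (b t x) ≤ Bb
  matNorm_σ_le : ∀ t ∈ Set.Icc 0 T, ∀ x ∈ K, matNorm (σ t x) ≤ Bσ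
  eunorm_b_sub_le : ∀ t ∈ Set.Icc 0 T, ∀ x ∈ K, ∀ y ∈ K,
    eunorm (b t x - b t y) ≤ L * eunorm (x - y)
  matNorm_σ_sub_le : ∀ t ∈ Set.Icc 0 T, ∀ x ∈ K, ∀ y ∈ K,
    matNorm (σ t x - σ t y) ≤ L * eunorm (x - y)
  mul_f_sub_le : ∀ t ∈ Set.Icc 0 T, ∀ x ∈ K, ∀ r r' z,
    (r - r') * (f t x r z - f t x r' z) ≤ α * (r - r') ^ 2
  abs_f_sub_le : ∀ t ∈ Set.Icc 0 T, ∀ x ∈ K, ∀ r z z',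
    |f t x r z - f t x r z'| ≤ β * eunorm (z - z')
  abs_f_sub_le_modulus : ∀ t ∈ Set.Icc 0 T, ∀ x ∈ K, ∀ y ∈ K, ∀ r z,
    |f t x r z - f t y r z| ≤ m (eunorm (x - y) * (1 + eunorm z))

/-- Times at distance at most `η` change the coefficients by at most `ε`, uniformly over `K`, over
values in `[-R, R]` and over gradient variables of norm at most `N`. -/
def IsTimeModulus (K : Set (Fin d → ℝ)) (b : ℝ → (Fin d → ℝ) → (Fin d → ℝ))
    (σ : ℝ → (Fin d → ℝ) → Matrix (Fin d) (Fin d) ℝ)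
    (f : ℝ → (Fin d → ℝ) → ℝ → (Fin d → ℝ) → ℝ) (T R N ε η : ℝ) : Prop :=
  ∀ t ∈ Set.Icc 0 T, ∀ s ∈ Set.Icc 0 T, |t - s| ≤ η → ∀ y ∈ K,
    eunorm (b t y - b s y) ≤ ε ∧ matNorm (σ t y - σ s y) ≤ ε ∧
      ∀ r, |r| ≤ R → ∀ z, eunorm z ≤ N → |f t y r z - f s y r z| ≤ ε

theorem exists_forall_dist_le_of_continuousOn {Z E : Type*} [PseudoMetricSpace Z]
    [PseudoMetricSpace E] {T ε : ℝ} {C : Set Z} {F : ℝ × Z → E} (hC : IsCompact C)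
    (hF : ContinuousOn F (Set.Ici 0 ×ˢ C)) (hε : 0 < ε) :
    ∃ η > 0, ∀ t ∈ Set.Icc 0 T, ∀ s ∈ Set.Icc 0 T, |t - s| ≤ η → ∀ z ∈ C,
      dist (F (t, z)) (F (s, z)) ≤ ε := by
  have hsub : Set.Icc 0 T ×ˢ C ⊆ Set.Ici 0 ×ˢ C := Set.prod_mono_left fun _ h => h.1
  obtain ⟨η, hη, h⟩ := Metric.uniformContinuousOn_iff_le.1
    ((isCompact_Icc.prod hC).uniformContinuousOn_of_continuous (hF.mono hsub)) ε hε
  refine ⟨η, hη, fun t ht s hs hts z hz => h (t, z) ⟨ht, hz⟩ (s, z) ⟨hs, hz⟩ ?_⟩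
  rwa [dist_prod_same_right, Real.dist_eq]

variable {K : Set (Fin d → ℝ)} {b : ℝ → (Fin d → ℝ) → (Fin d → ℝ)}
  {σ : ℝ → (Fin d → ℝ) → Matrix (Fin d) (Fin d) ℝ}
  {f : ℝ → (Fin d → ℝ) → ℝ → (Fin d → ℝ) → ℝ} {m : ℝ → ℝ} {T α β L Bb Bσ : ℝ}

theorem exists_isTimeModulus (hK : IsCompact K)
    (hb : ContinuousOn (fun p : ℝ × (Fin d → ℝ) => b p.1 p.2) (Set.Ici 0 ×ˢ K))
    (hσ : ContinuousOn (fun p : ℝ × (Fin d → ℝ) => σ p.1 p.2) (Set.Ici 0 ×ˢ K))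
    (hf : ContinuousOn
      (fun p : ℝ × (Fin d → ℝ) × ℝ × (Fin d → ℝ) => f p.1 p.2.1 p.2.2.1 p.2.2.2)
      (Set.Ici 0 ×ˢ K ×ˢ Set.univ ×ˢ Set.univ)) (R N : ℝ) {ε : ℝ} (hε : 0 < ε) :
    ∃ η > 0, IsTimeModulus K b σ f T R N ε η := by
  have hb' : ContinuousOn (fun p : ℝ × (Fin d → ℝ) => WithLp.toLp 2 (b p.1 p.2))
      (Set.Ici 0 ×ˢ K) := (PiLp.continuous_toLp 2 _).comp_continuousOn hb
  have hσ' : ContinuousOn (fun p : ℝ × (Fin d → ℝ) =>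
      (WithLp.toLp 2 fun i : Fin d × Fin d => σ p.1 p.2 i.1 i.2 :
        EuclideanSpace ℝ (Fin d × Fin d))) (Set.Ici 0 ×ˢ K) :=
    (PiLp.continuous_toLp 2 _).comp_continuousOn <| continuousOn_pi.2 fun i =>
      (continuous_id.matrix_elem i.1 i.2).comp_continuousOn hσ
  obtain ⟨η₁, hη₁, h₁⟩ := exists_forall_dist_le_of_continuousOn (T := T) hK hb' hε
  obtain ⟨η₂, hη₂, h₂⟩ := exists_forall_dist_le_of_continuousOn (T := T) hK hσ' hε
  obtain ⟨η₃, hη₃, h₃⟩ := exists_forall_dist_le_of_continuousOn (T := T)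
    (hK.prod (isCompact_Icc.prod (isCompact_closedBall (0 : Fin d → ℝ) N)))
    (hf.mono (Set.prod_mono_right (Set.prod_mono_right
      (Set.prod_mono (Set.subset_univ (Set.Icc (-R) R)) (Set.subset_univ _))))) hε
  refine ⟨min η₁ (min η₂ η₃), lt_min hη₁ (lt_min hη₂ hη₃), fun t ht s hs hts y hy => ?_⟩
  rw [le_min_iff, le_min_iff] at hts
  refine ⟨?_, ?_, fun r hr z hz => ?_⟩
  · rw [eunorm_eq_norm, WithLp.toLp_sub, ← dist_eq_norm]
    exact h₁ t ht s hs hts.1 y hy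
  · refine le_of_eq_of_le ?_ (h₂ t ht s hs hts.2.1 y hy)
    rw [matNorm_eq_norm, dist_eq_norm]
    rfl
  · exact h₃ t ht s hs hts.2.2 (y, r, z)
      ⟨hy, abs_le.1 hr, mem_closedBall_zero_iff.2 ((norm_le_eunorm z).trans hz)⟩

theorem StructureConditions.f_sub_le (h : StructureConditions K b σ f m T α β L Bb Bσ)
    {t s r r' : ℝ} {x y : Fin d → ℝ} (ht : t ∈ Set.Icc 0 T) (hx : x ∈ K) (hy : y ∈ K)
    (hr : r' < r) (z z' : Fin d → ℝ) :
    f t x r z - f s y r' z' ≤ α * (r - r') + β * eunorm (z - z')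
      + m (eunorm (x - y) * (1 + eunorm z')) + |f t y r' z' - f s y r' z'| := by
  have hvalue : f t x r z' - f t x r' z' ≤ α * (r - r') :=
    le_of_mul_le_mul_left (by linarith [h.mul_f_sub_le t ht x hx r r' z']) (sub_pos.2 hr)
  linarith [(le_abs_self _).trans (h.abs_f_sub_le t ht x hx r z z'),
    (le_abs_self _).trans (h.abs_f_sub_le_modulus t ht x hx y hy r' z'),
    le_abs_self (f t y r' z' - f s y r' z')]

theorem StructureConditions.Bσ_nonneg (h : StructureConditions K b σ f m T α β L Bb Bσ) {t : ℝ}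
    {x : Fin d → ℝ} (ht : t ∈ Set.Icc 0 T) (hx : x ∈ K) : 0 ≤ Bσ :=
  (matNorm_nonneg _).trans (h.matNorm_σ_le t ht x hx)

theorem IsTimeModulus.eunorm_b_sub_le {R N ε η t s : ℝ} {x y : Fin d → ℝ}
    (hη : IsTimeModulus K b σ f T R N ε η) (h : StructureConditions K b σ f m T α β L Bb Bσ)
    (ht : t ∈ Set.Icc 0 T) (hs : s ∈ Set.Icc 0 T) (hts : |t - s| ≤ η) (hx : x ∈ K) (hy : y ∈ K) :
    eunorm (b t x - b s y) ≤ L * eunorm (x - y) + ε := by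
  rw [← sub_add_sub_cancel (b t x) (b t y)]
  exact (eunorm_add_le _ _).trans
    (add_le_add (h.eunorm_b_sub_le t ht x hx y hy) (hη t ht s hs hts y hy).1)

theorem IsTimeModulus.matNorm_σ_sub_le {R N ε η t s : ℝ} {x y : Fin d → ℝ}
    (hη : IsTimeModulus K b σ f T R N ε η) (h : StructureConditions K b σ f m T α β L Bb Bσ)
    (ht : t ∈ Set.Icc 0 T) (hs : s ∈ Set.Icc 0 T) (hts : |t - s| ≤ η) (hx : x ∈ K) (hy : y ∈ K) :
    matNorm (σ t x - σ s y) ≤ L * eunorm (x - y) + ε := by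
  rw [← sub_add_sub_cancel (σ t x) (σ t y)]
  exact (matNorm_add_le _ _).trans
    (add_le_add (h.matNorm_σ_sub_le t ht x hx y hy) (hη t ht s hs hts y hy).2.1)

end StructureConditions

/-! ### Comparison of the two viscosity inequalities -/

theorem eunorm_le_of_eunorm_sub_le {d : ℕ} {q w Q : Fin d → ℝ} {A κ : ℝ}
    (hA : 0 ≤ A) (h : eunorm (q - (A • w + Q)) ≤ κ) : eunorm q ≤ A * eunorm w + eunorm Q + κ := by
  have hq := eunorm_add_le (q - (A • w + Q)) (A • w + Q)
  rw [sub_add_cancel] at hq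
  have hw := eunorm_add_le (A • w) Q
  rw [eunorm_smul, abs_of_nonneg hA] at hw
  linarith

namespace DoubledJets

variable {d : ℕ} {K : Set (Fin d → ℝ)} {u v : ℝ → (Fin d → ℝ) → ℝ} {T t₀ : ℝ} {x₀ : Fin d → ℝ}
  {P : ℝ} {Q₁ Q₂ : Fin d → ℝ} {c A κ η : ℝ}

/-- Bound for the variation of `L`-Lipschitz coefficients between the two points of `J`, when the
time moduli are used at precision `A⁻¹`. -/
def coeffGap (J : DoubledJets K u v T t₀ x₀ P Q₁ Q₂ c A κ η) (L : ℝ) : ℝ :=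
  L * eunorm (J.x - J.y) + A⁻¹

/-- Bound for the gradient components `q₁` and `q₂` of `J`. -/
def gradBound (J : DoubledJets K u v T t₀ x₀ P Q₁ Q₂ c A κ η) : ℝ :=
  A * eunorm (J.x - J.y) + (eunorm Q₁ + eunorm Q₂) + κ

/-- The part of the estimate of `p₁ - p₂` that vanishes as `A → ∞` and `κ → 0`, the spatial modulus
of `f` being counted separately. -/
def error (J : DoubledJets K u v T t₀ x₀ P Q₁ Q₂ c A κ η) (β L Bb Bσ : ℝ) : ℝ :=
  A / 2 * J.coeffGap L ^ 2 + (1 + β) * (J.coeffGap L * J.gradBound)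
    + κ * (Bσ ^ 2 + 2 * (Bb + β * Bσ)) + A⁻¹

section PointEstimate

variable (J : DoubledJets K u v T t₀ x₀ P Q₁ Q₂ c A κ η)

theorem κ_nonneg (J : DoubledJets K u v T t₀ x₀ P Q₁ Q₂ c A κ η) : 0 ≤ κ :=
  (abs_nonneg _).trans J.abs_t_sub_le

theorem eunorm_x_sub_y_le : eunorm (J.x - J.y) ≤ 2 * κ := by
  rw [← sub_add_sub_cancel J.x x₀ J.y]
  linarith [eunorm_add_le (J.x - x₀) (x₀ - J.y), eunorm_sub_comm x₀ J.y, J.eunorm_x_sub_le,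
    J.eunorm_y_sub_le]

theorem eunorm_q₁_sub_q₂_le : eunorm (J.q₁ - J.q₂) ≤ eunorm (Q₁ - Q₂) + 2 * κ := by
  have heq : J.q₁ - J.q₂ = (J.q₁ - (A • (J.x - J.y) + Q₁)) + (Q₁ - Q₂)
      + (A • (J.x - J.y) + Q₂ - J.q₂) := by abel
  rw [heq]
  linarith [eunorm_add_le (J.q₁ - (A • (J.x - J.y) + Q₁) + (Q₁ - Q₂))
    (A • (J.x - J.y) + Q₂ - J.q₂), eunorm_add_le (J.q₁ - (A • (J.x - J.y) + Q₁)) (Q₁ - Q₂),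
    eunorm_sub_comm (A • (J.x - J.y) + Q₂) J.q₂, J.eunorm_q₁_sub_le, J.eunorm_q₂_sub_le]

theorem eunorm_q₁_le (hA : 0 ≤ A) : eunorm J.q₁ ≤ J.gradBound := by
  unfold gradBound
  linarith [eunorm_le_of_eunorm_sub_le hA J.eunorm_q₁_sub_le, eunorm_nonneg Q₂]

theorem eunorm_q₂_le (hA : 0 ≤ A) : eunorm J.q₂ ≤ J.gradBound := by
  unfold gradBound
  linarith [eunorm_le_of_eunorm_sub_le hA J.eunorm_q₂_sub_le, eunorm_nonneg Q₁]

theorem gradBound_le (hA : 0 ≤ A) :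
    J.gradBound ≤ 2 * A * κ + (eunorm Q₁ + eunorm Q₂) + κ := by
  unfold gradBound
  linarith [mul_le_mul_of_nonneg_left J.eunorm_x_sub_y_le hA]

variable {b : ℝ → (Fin d → ℝ) → (Fin d → ℝ)} {σ : ℝ → (Fin d → ℝ) → Matrix (Fin d) (Fin d) ℝ}
  {f : ℝ → (Fin d → ℝ) → ℝ → (Fin d → ℝ) → ℝ} {m : ℝ → ℝ} {α β L Bb Bσ R N : ℝ}

theorem Bσ_nonneg (J : DoubledJets K u v T t₀ x₀ P Q₁ Q₂ c A κ η)
    (hS : StructureConditions K b σ f m T α β L Bb Bσ) : 0 ≤ Bσ :=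
  hS.Bσ_nonneg (Set.Ioo_subset_Icc_self J.t_mem) J.x_mem

theorem matNorm_σ_sub_le (hS : StructureConditions K b σ f m T α β L Bb Bσ)
    (hη : IsTimeModulus K b σ f T R N A⁻¹ η) :
    matNorm (σ J.t J.x - σ J.s J.y) ≤ J.coeffGap L :=
  hη.matNorm_σ_sub_le hS (Set.Ioo_subset_Icc_self J.t_mem) (Set.Ioo_subset_Icc_self J.s_mem)
    J.abs_sub_le J.x_mem J.y_mem

theorem half_trace_sub_half_trace_le (hA : 0 ≤ A) (hc : 0 ≤ c)
    (hS : StructureConditions K b σ f m T α β L Bb Bσ) (hη : IsTimeModulus K b σ f T R N A⁻¹ η) :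
    (1 / 2) * trace (σ J.t J.x * (σ J.t J.x)ᵀ * J.X)
      - (1 / 2) * trace (σ J.s J.y * (σ J.s J.y)ᵀ * J.Y) ≤
      A / 2 * J.coeffGap L ^ 2 + (c + κ) * Bσ ^ 2 := by
  have hform := trace_sub_trace_le (S := σ J.t J.x) (R := σ J.s J.y) J.dotp_mulVec_sub_le
  have hgap := mul_le_mul_of_nonneg_left
    (pow_le_pow_left₀ (matNorm_nonneg _) (J.matNorm_σ_sub_le hS hη) 2) hA
  have hsize := mul_le_mul_of_nonneg_left (add_le_add
    (pow_le_pow_left₀ (matNorm_nonneg _)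
      (hS.matNorm_σ_le _ (Set.Ioo_subset_Icc_self J.t_mem) _ J.x_mem) 2)
    (pow_le_pow_left₀ (matNorm_nonneg _)
      (hS.matNorm_σ_le _ (Set.Ioo_subset_Icc_self J.s_mem) _ J.y_mem) 2))
    (add_nonneg hc J.κ_nonneg)
  linarith

theorem drift_sub_drift_le (hA : 0 ≤ A) (hS : StructureConditions K b σ f m T α β L Bb Bσ)
    (hη : IsTimeModulus K b σ f T R N A⁻¹ η) :
    dotp (b J.t J.x) J.q₁ - dotp (b J.s J.y) J.q₂ ≤
      J.coeffGap L * J.gradBound + Bb * (eunorm (Q₁ - Q₂) + 2 * κ) := by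
  have ht := Set.Ioo_subset_Icc_self J.t_mem
  have hs := Set.Ioo_subset_Icc_self J.s_mem
  have hgap : eunorm (b J.t J.x - b J.s J.y) ≤ J.coeffGap L :=
    hη.eunorm_b_sub_le hS ht hs J.abs_sub_le J.x_mem J.y_mem
  have hBb := hS.eunorm_b_le _ hs _ J.y_mem
  exact (dotp_sub_dotp_le _ _ _ _).trans <| add_le_add
    (mul_le_mul hgap (J.eunorm_q₁_le hA) (eunorm_nonneg _) ((eunorm_nonneg _).trans hgap))
    (mul_le_mul hBb J.eunorm_q₁_sub_q₂_le (eunorm_nonneg _) ((eunorm_nonneg _).trans hBb))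

theorem eunorm_vecMul_sub_le (hA : 0 ≤ A) (hS : StructureConditions K b σ f m T α β L Bb Bσ)
    (hη : IsTimeModulus K b σ f T R N A⁻¹ η) :
    eunorm (J.q₁ ᵥ* σ J.t J.x - J.q₂ ᵥ* σ J.s J.y) ≤
      (eunorm (Q₁ - Q₂) + 2 * κ) * Bσ + J.coeffGap L * J.gradBound := by
  have hgap := J.matNorm_σ_sub_le hS hη
  rw [mul_comm (J.coeffGap L)]
  have hq := J.eunorm_q₁_sub_q₂_le
  have hn := J.eunorm_q₂_le hA
  exact (eunorm_vecMul_sub_vecMul_le _ _ _ _).trans <| add_le_add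
    (mul_le_mul hq (hS.matNorm_σ_le _ (Set.Ioo_subset_Icc_self J.t_mem) _ J.x_mem)
      (matNorm_nonneg _) ((eunorm_nonneg _).trans hq))
    (mul_le_mul hn hgap (matNorm_nonneg _) ((eunorm_nonneg _).trans hn))

theorem eunorm_vecMul_le (hA : 0 ≤ A) (hS : StructureConditions K b σ f m T α β L Bb Bσ) :
    eunorm (J.q₂ ᵥ* σ J.s J.y) ≤ J.gradBound * Bσ :=
  have hn := J.eunorm_q₂_le hA
  (_root_.eunorm_vecMul_le _ _).trans <| mul_le_mul hn
    (hS.matNorm_σ_le _ (Set.Ioo_subset_Icc_self J.s_mem) _ J.y_mem) (matNorm_nonneg _)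
    ((eunorm_nonneg _).trans hn)

theorem p₁_sub_p₂_le {a : ℝ} (hA : 0 ≤ A) (hc : 0 ≤ c)
    (hS : StructureConditions K b σ f m T α β L Bb Bσ)
    (hη : IsTimeModulus K b σ f T R ((2 * A * κ + (eunorm Q₁ + eunorm Q₂) + κ) * Bσ) A⁻¹ η)
    (hR : |v J.s J.y| ≤ R) (hlt : v J.s J.y < u J.t J.x)
    (hu : Vop b σ f u J.t J.x J.p₁ J.q₁ J.X + a ≤ 0)
    (hv : 0 ≤ Vop b σ f v J.s J.y J.p₂ J.q₂ J.Y + a) :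
    J.p₁ - J.p₂ ≤ c * Bσ ^ 2 + eunorm (Q₁ - Q₂) * (Bb + β * Bσ) + α * (u J.t J.x - v J.s J.y)
      + J.error β L Bb Bσ + m (eunorm (J.x - J.y) * (1 + eunorm (J.q₂ ᵥ* σ J.s J.y))) := by
  have ht := Set.Ioo_subset_Icc_self J.t_mem
  have hs := Set.Ioo_subset_Icc_self J.s_mem
  have hz := (J.eunorm_vecMul_le hA hS).trans
    (mul_le_mul_of_nonneg_right (J.gradBound_le hA) (J.Bσ_nonneg hS))
  have hf := hS.f_sub_le ht J.x_mem J.y_mem hlt (s := J.s) (J.q₁ ᵥ* σ J.t J.x) (J.q₂ ᵥ* σ J.s J.y)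
  have hftime := (hη _ ht _ hs J.abs_sub_le _ J.y_mem).2.2 _ hR _ hz
  have hβ := mul_le_mul_of_nonneg_left (J.eunorm_vecMul_sub_le hA hS hη) hS.β_nonneg
  have htrace := J.half_trace_sub_half_trace_le hA hc hS hη
  have hdrift := J.drift_sub_drift_le hA hS hη
  unfold Vop at hu hv
  unfold error
  linarith

end PointEstimate

section Limits

variable {ι : Type*} {l : Filter ι} {A κ η : ι → ℝ}
  (J : ∀ i, DoubledJets K u v T t₀ x₀ P Q₁ Q₂ c (A i) (κ i) (η i))

theorem tendsto_eunorm_x_sub_y (hκ : Tendsto κ l (𝓝 0)) :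
    Tendsto (fun i => eunorm ((J i).x - (J i).y)) l (𝓝 0) :=
  squeeze_zero (fun _ => eunorm_nonneg _) (fun i => (J i).eunorm_x_sub_y_le)
    (by simpa using hκ.const_mul 2)

theorem tendsto_mul_eunorm_x_sub_y_sq (hA : ∀ i, 0 < A i) (hκ : Tendsto κ l (𝓝 0)) :
    Tendsto (fun i => A i * eunorm ((J i).x - (J i).y) ^ 2) l (𝓝 0) :=
  squeeze_zero (fun i => mul_nonneg (hA i).le (sq_nonneg _)) (fun i => (J i).penalty_le) hκ

theorem tendsto_coeffGap_mul_gradBound (L : ℝ) (hA : ∀ i, 0 < A i) (hAl : Tendsto A l atTop)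
    (hκ : Tendsto κ l (𝓝 0)) :
    Tendsto (fun i => (J i).coeffGap L * (J i).gradBound) l (𝓝 0) := by
  have he := tendsto_eunorm_x_sub_y J hκ
  have hlim := ((((tendsto_mul_eunorm_x_sub_y_sq J hA hκ).const_mul L).add he).add
    (((he.const_mul L).add hAl.inv_tendsto_atTop).mul (hκ.const_add (eunorm Q₁ + eunorm Q₂))))
  simp only [mul_zero, zero_mul, add_zero] at hlim
  refine hlim.congr fun i => ?_
  have := (hA i).ne'
  simp only [coeffGap, gradBound, Pi.inv_apply]
  field_simp
  ring

theorem tendsto_error (β L Bb Bσ : ℝ) (hA : ∀ i, 0 < A i) (hAl : Tendsto A l atTop)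
    (hκ : Tendsto κ l (𝓝 0)) : Tendsto (fun i => (J i).error β L Bb Bσ) l (𝓝 0) := by
  have he := tendsto_eunorm_x_sub_y J hκ
  have hsq : Tendsto (fun i => A i / 2 * (J i).coeffGap L ^ 2) l (𝓝 0) := by
    have hlim := ((((tendsto_mul_eunorm_x_sub_y_sq J hA hκ).const_mul (L ^ 2 / 2)).add
      (he.const_mul L)).add (hAl.inv_tendsto_atTop.const_mul (1 / 2)))
    simp only [mul_zero, add_zero] at hlim
    refine hlim.congr fun i => ?_
    have := (hA i).ne'
    simp only [coeffGap, Pi.inv_apply]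
    field_simp
    ring
  simpa [error] using ((hsq.add ((tendsto_coeffGap_mul_gradBound J L hA hAl hκ).const_mul
    (1 + β))).add (hκ.mul_const (Bσ ^ 2 + 2 * (Bb + β * Bσ)))).add hAl.inv_tendsto_atTop

theorem tendsto_eunorm_mul_one_add {z : ι → Fin d → ℝ} {B : ℝ} (hA : ∀ i, 0 < A i)
    (hκ : Tendsto κ l (𝓝 0)) (hz : ∀ i, eunorm (z i) ≤ (J i).gradBound * B) :
    Tendsto (fun i => eunorm ((J i).x - (J i).y) * (1 + eunorm (z i))) l (𝓝 0) := by
  have he := tendsto_eunorm_x_sub_y J hκ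
  have hlim := (he.add ((tendsto_mul_eunorm_x_sub_y_sq J hA hκ).mul_const B)).add
    ((he.mul (hκ.const_add (eunorm Q₁ + eunorm Q₂))).mul_const B)
  simp only [zero_mul, add_zero] at hlim
  refine squeeze_zero (fun i => mul_nonneg (eunorm_nonneg _) (by linarith [eunorm_nonneg (z i)]))
    (fun i => (mul_le_mul_of_nonneg_left (add_le_add_right (hz i) 1)
      (eunorm_nonneg _)).trans_eq ?_) hlim
  unfold gradBound
  ring

end Limits

end DoubledJets

/-! ### Discarding the boundary condition -/

section BoundaryCondition

variable {d : ℕ} {ι : Type*} {l : Filter ι} {ℓ : (Fin d → ℝ) → ℝ} {x₀ : Fin d → ℝ}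
  {κ : ι → ℝ}

theorem tendsto_of_eunorm_sub_le {x : ι → Fin d → ℝ} (hκ : Tendsto κ l (𝓝 0))
    (h : ∀ i, eunorm (x i - x₀) ≤ κ i) : Tendsto x l (𝓝 x₀) :=
  tendsto_iff_norm_sub_tendsto_zero.2
    (squeeze_zero (fun _ => norm_nonneg _) (fun i => (norm_le_eunorm _).trans (h i)) hκ)

-- At a boundary point the penalization term `A (x - y)` points outwards up to an error `κ`, because
-- `y` lies in the domain: it can only increase the normal derivative.
theorem eventually_lt_dotp_gradVec (hℓ : ContDiff ℝ 2 ℓ)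
    (hK : Bornology.IsBounded {x | ℓ x ≤ 0}) (hx₀ : eunorm (gradVec ℓ x₀) = 1)
    {A : ι → ℝ} {x y q : ι → Fin d → ℝ} {a a' : ℝ} (haa' : a' < a) (hκ : Tendsto κ l (𝓝 0))
    (hx : Tendsto x l (𝓝 x₀)) (hy : ∀ i, ℓ (y i) ≤ 0) (hA : ∀ i, 0 ≤ A i)
    (hpen : ∀ i, A i * eunorm (x i - y i) ^ 2 ≤ κ i)
    (hq : ∀ i, eunorm (q i - (A i • (x i - y i) + a • gradVec ℓ x₀)) ≤ κ i) :
    ∀ᶠ i in l, ℓ (x i) = 0 → a' < dotp (gradVec ℓ (x i)) (q i) := by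
  obtain ⟨C, hC, hTaylor⟩ := exists_abs_sub_sub_dotp_gradVec_le hℓ hK
  have hgrad : Tendsto (fun i => gradVec ℓ (x i)) l (𝓝 (gradVec ℓ x₀)) :=
    ((continuous_gradVec (hℓ.of_le one_le_two)).tendsto x₀).comp hx
  have hlim : Tendsto (fun i => a * dotp (gradVec ℓ (x i)) (gradVec ℓ x₀)
      - (C + eunorm (gradVec ℓ (x i))) * κ i) l (𝓝 a) := by
    have hdot : Tendsto (fun i => dotp (gradVec ℓ (x i)) (gradVec ℓ x₀)) l
        (𝓝 (dotp (gradVec ℓ x₀) (gradVec ℓ x₀))) :=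
      ((continuous_id.dotProduct continuous_const).tendsto (gradVec ℓ x₀)).comp hgrad
    have hnorm := (continuous_eunorm.tendsto _).comp hgrad
    rw [← eunorm_sq, hx₀] at hdot
    simpa using (hdot.const_mul a).sub ((hnorm.const_add C).mul hκ)
  filter_upwards [hlim.eventually_const_lt haa'] with i hi hxi
  refine hi.trans_le ?_
  set n := gradVec ℓ (x i)
  have hout : -(C * eunorm (x i - y i) ^ 2) ≤ dotp n (x i - y i) := by
    have hexp := (abs_le.1 (hTaylor (x i) hxi.le (y i) (hy i))).1
    have hneg : dotp n (x i - y i) = -dotp n (y i - x i) := by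
      rw [dotp_eq_dotProduct, dotp_eq_dotProduct, ← dotProduct_neg, neg_sub]
    rw [eunorm_sub_comm, hneg]
    linarith [hy i]
  have herr : -(eunorm n * κ i) ≤ dotp n (q i - (A i • (x i - y i) + a • gradVec ℓ x₀)) :=
    (neg_le_neg (mul_le_mul_of_nonneg_left (hq i) (eunorm_nonneg n))).trans
      (neg_le_of_abs_le (abs_dotp_le _ _))
  have hdecomp : dotp n (q i - (A i • (x i - y i) + a • gradVec ℓ x₀)) =
      dotp n (q i) - (A i * dotp n (x i - y i) + a * dotp n (gradVec ℓ x₀)) := by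
    simp only [dotp_eq_dotProduct, dotProduct_sub, dotProduct_add, dotProduct_smul, smul_eq_mul]
  have hAout := mul_le_mul_of_nonneg_left hout (hA i)
  have hCpen := mul_le_mul_of_nonneg_left (hpen i) hC
  linarith

theorem eventually_dotp_gradVec_lt (hℓ : ContDiff ℝ 2 ℓ)
    (hK : Bornology.IsBounded {x | ℓ x ≤ 0}) (hx₀ : eunorm (gradVec ℓ x₀) = 1)
    {A : ι → ℝ} {x y q : ι → Fin d → ℝ} {a a' : ℝ} (haa' : a < a') (hκ : Tendsto κ l (𝓝 0))
    (hy : Tendsto y l (𝓝 x₀)) (hx : ∀ i, ℓ (x i) ≤ 0) (hA : ∀ i, 0 ≤ A i)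
    (hpen : ∀ i, A i * eunorm (x i - y i) ^ 2 ≤ κ i)
    (hq : ∀ i, eunorm (q i - (A i • (x i - y i) + a • gradVec ℓ x₀)) ≤ κ i) :
    ∀ᶠ i in l, ℓ (y i) = 0 → dotp (gradVec ℓ (y i)) (q i) < a' := by
  have hneg (i) : -(q i - (A i • (x i - y i) + a • gradVec ℓ x₀)) =
      -q i - (A i • (y i - x i) + -a • gradVec ℓ x₀) := by module
  refine (eventually_lt_dotp_gradVec (q := -q) hℓ hK hx₀ (neg_lt_neg haa') hκ hy hx hA
    (fun i => by rw [eunorm_sub_comm]; exact hpen i)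
    (fun i => by rw [Pi.neg_apply, ← hneg, eunorm_neg]; exact hq i)).mono fun i hi hyi => ?_
  simpa [dotp_eq_dotProduct] using hi hyi

theorem tendsto_boundary_value {g : ℝ → (Fin d → ℝ) → ℝ → ℝ} {w : ℝ → (Fin d → ℝ) → ℝ}
    {t₀ : ℝ} {t : ι → ℝ} {x : ι → Fin d → ℝ}
    (hg : ContinuousOn (fun p : ℝ × (Fin d → ℝ) × ℝ => g p.1 p.2.1 p.2.2)
      (Set.Ici 0 ×ˢ {x | ℓ x = 0} ×ˢ Set.univ)) (ht₀ : 0 ≤ t₀) (hx₀ : ℓ x₀ = 0)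
    (ht : Tendsto t l (𝓝 t₀)) (ht0 : ∀ i, 0 ≤ t i) (hx : Tendsto x l (𝓝 x₀))
    (hw : Tendsto (fun i => w (t i) (x i)) l (𝓝 (w t₀ x₀))) :
    Tendsto (fun i => g (t i) (x i) (w (t i) (x i))) (l ⊓ 𝓟 {i | ℓ (x i) = 0})
      (𝓝 (g t₀ x₀ (w t₀ x₀))) := by
  refine (hg (t₀, x₀, w t₀ x₀) ⟨ht₀, hx₀, trivial⟩).tendsto.comp
    (tendsto_nhdsWithin_iff.2 ⟨(ht.prodMk_nhds (hx.prodMk_nhds hw)).mono_left inf_le_left, ?_⟩)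
  exact eventually_inf_principal.2 (Eventually.of_forall fun i hi => ⟨ht0 i, hi, trivial⟩)

end BoundaryCondition

namespace DoubledJets

variable {d : ℕ} {ι : Type*} {l : Filter ι} {K : Set (Fin d → ℝ)}
  {u v w : ℝ → (Fin d → ℝ) → ℝ} {T t₀ : ℝ} {x₀ : Fin d → ℝ} {P : ℝ} {Q₁ Q₂ : Fin d → ℝ} {c : ℝ}
  {A κ η : ι → ℝ} (J : ∀ i, DoubledJets K u v T t₀ x₀ P Q₁ Q₂ c (A i) (κ i) (η i))

theorem tendsto_t (hκ : Tendsto κ l (𝓝 0)) : Tendsto (fun i => (J i).t) l (𝓝 t₀) :=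
  tendsto_iff_norm_sub_tendsto_zero.2
    (squeeze_zero (fun _ => norm_nonneg _) (fun i => (J i).abs_t_sub_le) hκ)

theorem tendsto_s (hκ : Tendsto κ l (𝓝 0)) : Tendsto (fun i => (J i).s) l (𝓝 t₀) :=
  tendsto_iff_norm_sub_tendsto_zero.2
    (squeeze_zero (fun _ => norm_nonneg _) (fun i => (J i).abs_s_sub_le) hκ)

theorem tendsto_x (hκ : Tendsto κ l (𝓝 0)) : Tendsto (fun i => (J i).x) l (𝓝 x₀) :=
  tendsto_of_eunorm_sub_le hκ fun i => (J i).eunorm_x_sub_le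

theorem tendsto_y (hκ : Tendsto κ l (𝓝 0)) : Tendsto (fun i => (J i).y) l (𝓝 x₀) :=
  tendsto_of_eunorm_sub_le hκ fun i => (J i).eunorm_y_sub_le

theorem tendsto_value_t_x (hw : ContinuousOn (fun p => w p.1 p.2) (Set.Ici (0 : ℝ) ×ˢ K))
    (ht₀ : 0 ≤ t₀) (hx₀ : x₀ ∈ K) (hκ : Tendsto κ l (𝓝 0)) :
    Tendsto (fun i => w (J i).t (J i).x) l (𝓝 (w t₀ x₀)) :=
  (hw (t₀, x₀) ⟨ht₀, hx₀⟩).tendsto.comp <| tendsto_nhdsWithin_iff.2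
    ⟨(tendsto_t J hκ).prodMk_nhds (tendsto_x J hκ),
      Eventually.of_forall fun i => ⟨(J i).t_mem.1.le, (J i).x_mem⟩⟩

theorem tendsto_value_s_y (hw : ContinuousOn (fun p => w p.1 p.2) (Set.Ici (0 : ℝ) ×ˢ K))
    (ht₀ : 0 ≤ t₀) (hx₀ : x₀ ∈ K) (hκ : Tendsto κ l (𝓝 0)) :
    Tendsto (fun i => w (J i).s (J i).y) l (𝓝 (w t₀ x₀)) :=
  (hw (t₀, x₀) ⟨ht₀, hx₀⟩).tendsto.comp <| tendsto_nhdsWithin_iff.2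
    ⟨(tendsto_s J hκ).prodMk_nhds (tendsto_y J hκ),
      Eventually.of_forall fun i => ⟨(J i).s_mem.1.le, (J i).y_mem⟩⟩

end DoubledJets

section ViscosityInequalities

variable {d : ℕ} {ι : Type*} {l : Filter ι} {ℓ : (Fin d → ℝ) → ℝ}
  {b : ℝ → (Fin d → ℝ) → (Fin d → ℝ)} {σ : ℝ → (Fin d → ℝ) → Matrix (Fin d) (Fin d) ℝ}
  {f : ℝ → (Fin d → ℝ) → ℝ → (Fin d → ℝ) → ℝ} {g : ℝ → (Fin d → ℝ) → ℝ → ℝ}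
  {h : (Fin d → ℝ) → ℝ} {φ ψ : ℝ → EReal} {u v : ℝ → (Fin d → ℝ) → ℝ} {T t₀ : ℝ}
  {x₀ : Fin d → ℝ} {P : ℝ} {Q₁ Q₂ : Fin d → ℝ} {c a s : ℝ} {A κ η : ι → ℝ}

theorem add_nonpos_of_coe_add_nonpos {w : ℝ} {z : EReal} (hw : (w : EReal) + z ≤ 0)
    (haz : (a : EReal) ≤ z) : w + a ≤ 0 :=
  mod_cast (add_le_add_right haz (w : EReal)).trans hw

theorem add_nonneg_of_coe_add_nonneg {w : ℝ} {z : EReal} (hw : 0 ≤ (w : EReal) + z)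
    (hza : z ≤ a) : 0 ≤ w + a :=
  mod_cast hw.trans (add_le_add_right hza (w : EReal))

theorem IsViscSubsolution.eventually_vop_add_nonpos (hu : IsViscSubsolution ℓ b σ f g h φ ψ u)
    (hℓ : ContDiff ℝ 2 ℓ) (hK : Bornology.IsBounded {x | ℓ x ≤ 0})
    (hgrad : ℓ x₀ = 0 → eunorm (gradVec ℓ x₀) = 1)
    (hg : ContinuousOn (fun p : ℝ × (Fin d → ℝ) × ℝ => g p.1 p.2.1 p.2.2)
      (Set.Ici 0 ×ˢ {x | ℓ x = 0} ×ˢ Set.univ)) (ht₀ : 0 < t₀) (hx₀ : ℓ x₀ ≤ 0)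
    (J : ∀ i, DoubledJets {x | ℓ x ≤ 0} u v T t₀ x₀ P (s • gradVec ℓ x₀) Q₂ c (A i) (κ i) (η i))
    (hA : ∀ i, 0 < A i) (hκ : Tendsto κ l (𝓝 0))
    (hφ : ∀ᶠ r in 𝓝 (u t₀ x₀), φ r ≠ ⊤ → (a : EReal) ≤ leftD φ r)
    (hψ : ℓ x₀ = 0 → ∃ a' : ℝ, g t₀ x₀ (u t₀ x₀) - a' < s ∧
      ∀ᶠ r in 𝓝 (u t₀ x₀), ψ r ≠ ⊤ → (a' : EReal) ≤ leftD ψ r) :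
    ∀ᶠ i in l, Vop b σ f u (J i).t (J i).x (J i).p₁ (J i).q₁ (J i).X + a ≤ 0 := by
  have hval := DoubledJets.tendsto_value_t_x J hu.1 ht₀.le hx₀ hκ
  have hx := DoubledJets.tendsto_x J hκ
  have hint : ∀ᶠ i in l, ((Vop b σ f u (J i).t (J i).x (J i).p₁ (J i).q₁ (J i).X : ℝ) : EReal)
      + leftD φ (u (J i).t (J i).x) ≤ 0 := by
    have hjet (i) := hu.2.2.2.2 _ (J i).t_mem.1 _ (J i).x_mem _ _ _ (J i).inSuperjet
    rcases hx₀.lt_or_eq with hlt | heq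
    · filter_upwards [((hℓ.continuous.tendsto x₀).comp hx).eventually_lt_const hlt] with i hi
      exact (hjet i).1 hi
    · obtain ⟨a', ha', hψ⟩ := hψ heq
      obtain ⟨s', hs', hs's⟩ := exists_between ha'
      have hgval := eventually_inf_principal.1 <|
        (tendsto_boundary_value hg ht₀.le heq (DoubledJets.tendsto_t J hκ)
          (fun i => (J i).t_mem.1.le) hx hval).eventually_lt_const (sub_lt_iff_lt_add.1 hs')
      filter_upwards [hgval, hval.eventually hψ, eventually_lt_dotp_gradVec hℓ hK (hgrad heq) hs's
        hκ hx (fun i => (J i).y_mem) (fun i => (hA i).le) (fun i => (J i).penalty_le)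
        fun i => (J i).eunorm_q₁_sub_le] with i hgi hψi hslope
      rcases (show ℓ (J i).x ≤ 0 from (J i).x_mem).lt_or_eq with hi | hi
      · exact (hjet i).1 hi
      · refine ((hjet i).2 hi).resolve_right fun hbd => ?_
        linarith [hslope hi, hgi hi, add_nonpos_of_coe_add_nonpos hbd
          (hψi (hu.2.2.2.1 _ (J i).t_mem.1 _ hi))]
  filter_upwards [hint, hval.eventually hφ] with i hi hφi
  exact add_nonpos_of_coe_add_nonpos hi (hφi (hu.2.2.1 _ (J i).t_mem.1 _ (J i).x_mem))

theorem IsViscSupersolution.eventually_vop_add_nonneg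
    (hv : IsViscSupersolution ℓ b σ f g h φ ψ v)
    (hℓ : ContDiff ℝ 2 ℓ) (hK : Bornology.IsBounded {x | ℓ x ≤ 0})
    (hgrad : ℓ x₀ = 0 → eunorm (gradVec ℓ x₀) = 1)
    (hg : ContinuousOn (fun p : ℝ × (Fin d → ℝ) × ℝ => g p.1 p.2.1 p.2.2)
      (Set.Ici 0 ×ˢ {x | ℓ x = 0} ×ˢ Set.univ)) (ht₀ : 0 < t₀) (hx₀ : ℓ x₀ ≤ 0)
    (J : ∀ i, DoubledJets {x | ℓ x ≤ 0} u v T t₀ x₀ P Q₁ (s • gradVec ℓ x₀) c (A i) (κ i) (η i))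
    (hA : ∀ i, 0 < A i) (hκ : Tendsto κ l (𝓝 0))
    (hφ : ∀ᶠ r in 𝓝 (v t₀ x₀), φ r ≠ ⊤ → rightD φ r ≤ a)
    (hψ : ℓ x₀ = 0 → ∃ a' : ℝ, s < g t₀ x₀ (v t₀ x₀) - a' ∧
      ∀ᶠ r in 𝓝 (v t₀ x₀), ψ r ≠ ⊤ → rightD ψ r ≤ a') :
    ∀ᶠ i in l, 0 ≤ Vop b σ f v (J i).s (J i).y (J i).p₂ (J i).q₂ (J i).Y + a := by
  have hval := DoubledJets.tendsto_value_s_y J hv.1 ht₀.le hx₀ hκ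
  have hy := DoubledJets.tendsto_y J hκ
  have hint : ∀ᶠ i in l,
      0 ≤ ((Vop b σ f v (J i).s (J i).y (J i).p₂ (J i).q₂ (J i).Y : ℝ) : EReal)
        + rightD φ (v (J i).s (J i).y) := by
    have hjet (i) := hv.2.2.2.2 _ (J i).s_mem.1 _ (J i).y_mem _ _ _ (J i).inSubjet
    rcases hx₀.lt_or_eq with hlt | heq
    · filter_upwards [((hℓ.continuous.tendsto x₀).comp hy).eventually_lt_const hlt] with i hi
      exact (hjet i).1 hi
    · obtain ⟨a', ha', hψ⟩ := hψ heq
      obtain ⟨s', hs', hs's⟩ := exists_between ha'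
      have hgval := eventually_inf_principal.1 <|
        (tendsto_boundary_value hg ht₀.le heq (DoubledJets.tendsto_s J hκ)
          (fun i => (J i).s_mem.1.le) hy hval).eventually_const_lt (lt_sub_iff_add_lt.1 hs's)
      filter_upwards [hgval, hval.eventually hψ, eventually_dotp_gradVec_lt hℓ hK (hgrad heq) hs'
        hκ hy (fun i => (J i).x_mem) (fun i => (hA i).le) (fun i => (J i).penalty_le)
        fun i => (J i).eunorm_q₂_sub_le] with i hgi hψi hslope
      rcases (show ℓ (J i).y ≤ 0 from (J i).y_mem).lt_or_eq with hi | hi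
      · exact (hjet i).1 hi
      · refine ((hjet i).2 hi).resolve_right fun hbd => ?_
        linarith [hslope hi, hgi hi, add_nonneg_of_coe_add_nonneg hbd
          (hψi (hv.2.2.2.1 _ (J i).s_mem.1 _ hi))]
  filter_upwards [hint, hval.eventually hφ] with i hi hφi
  exact add_nonneg_of_coe_add_nonneg hi (hφi (hv.2.2.1 _ (J i).s_mem.1 _ (J i).y_mem))

end ViscosityInequalities

section TimeSlope

variable {d : ℕ} {ℓ : (Fin d → ℝ) → ℝ} {K : Set (Fin d → ℝ)} {b : ℝ → (Fin d → ℝ) → (Fin d → ℝ)}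
  {σ : ℝ → (Fin d → ℝ) → Matrix (Fin d) (Fin d) ℝ} {f : ℝ → (Fin d → ℝ) → ℝ → (Fin d → ℝ) → ℝ}
  {g : ℝ → (Fin d → ℝ) → ℝ → ℝ} {h₁ h₂ : (Fin d → ℝ) → ℝ} {φ ψ : ℝ → EReal} {m : ℝ → ℝ}
  {u v : ℝ → (Fin d → ℝ) → ℝ} {T α β L Bb Bσ R t₀ P c C δ : ℝ} {x₀ Q₁ Q₂ : Fin d → ℝ}

theorem exists_seq_doubledJets (hK : IsCompact K)
    (hu : ContinuousOn (fun p : ℝ × (Fin d → ℝ) => u p.1 p.2) (Set.Icc 0 T ×ˢ K))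
    (hv : ContinuousOn (fun p : ℝ × (Fin d → ℝ) => v p.1 p.2) (Set.Icc 0 T ×ˢ K))
    (ht₀ : t₀ ∈ Set.Ioo 0 T) (hx₀ : x₀ ∈ K)
    (hle : ∀ t ∈ Set.Icc 0 T, ∀ x ∈ K, u t x - v t x ≤ u t₀ x₀ - v t₀ x₀ + P * (t - t₀)
      + dotp (Q₁ - Q₂) (x - x₀) + C * (t - t₀) ^ 2 + c * eunorm (x - x₀) ^ 2)
    {q : ℝ → ℝ → ℝ → Prop} (hq : ∀ A > 0, ∀ κ, ∃ η > 0, q A κ η) :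
    ∃ A κ η : ℕ → ℝ, (∀ k, 0 < A k) ∧ Tendsto A atTop atTop ∧ Tendsto κ atTop (𝓝 0) ∧
      (∀ k, q (A k) (κ k) (η k)) ∧
      Nonempty (∀ k, DoubledJets K u v T t₀ x₀ P Q₁ Q₂ c (A k) (κ k) (η k)) := by
  have hJ : ∀ k : ℕ, ∃ A η : ℝ, 0 < A ∧ (k : ℝ) ≤ A ∧ q A (1 / ((k : ℝ) + 1)) η ∧
      Nonempty (DoubledJets K u v T t₀ x₀ P Q₁ Q₂ c A (1 / ((k : ℝ) + 1)) η) := fun k => by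
    obtain ⟨A, hJ, hA, hkA⟩ := ((eventually_nonempty_doubledJets hK hu hv ht₀ hx₀ hle
      (Nat.one_div_pos_of_nat (n := k))).and
      ((eventually_gt_atTop 0).and (eventually_ge_atTop (k : ℝ)))).exists
    obtain ⟨η, hη, hqη⟩ := hq A hA (1 / ((k : ℝ) + 1))
    exact ⟨A, η, hA, hkA, hqη, hJ η hη⟩
  choose A η hA hkA hqη hJ using hJ
  exact ⟨A, fun k => 1 / ((k : ℝ) + 1), η, hA,
    tendsto_atTop_mono hkA tendsto_natCast_atTop_atTop,
    tendsto_one_div_add_atTop_nhds_zero_nat, hqη, ⟨fun k => (hJ k).some⟩⟩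

theorem exists_boundary_slope (hψ : ProperConvexLsc ψ) {ρ : ℝ → ℝ} {p : Prop} {r r' : ℝ}
    (hr : p → ψ r ≠ ⊤) (hr' : p → ψ r' ≠ ⊤) (hlt : r' < r) (hρ : p → ρ r ≤ ρ r') (hδ : 0 < δ) :
    ∃ s : ℝ, p →
      (∃ a : ℝ, ρ r - a < s + δ ∧ ∀ᶠ y in 𝓝 r, ψ y ≠ ⊤ → (a : EReal) ≤ leftD ψ y) ∧
      ∃ a : ℝ, s - δ < ρ r' - a ∧ ∀ᶠ y in 𝓝 r', ψ y ≠ ⊤ → rightD ψ y ≤ a := by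
  by_cases hp : p
  · obtain ⟨a, hleft, hright⟩ := hψ.exists_eventually_rightD_le_le_leftD (hr' hp) (hr hp) hlt
    exact ⟨ρ r - a, fun _ => ⟨⟨a, by linarith, hleft⟩, a, by linarith [hρ hp], hright⟩⟩
  · exact ⟨0, fun h => absurd h hp⟩

theorem le_of_forall_p₁_sub_p₂_le {A κ η : ℕ → ℝ}
    (J : ∀ k, DoubledJets K u v T t₀ x₀ P Q₁ Q₂ c (A k) (κ k) (η k)) (hA : ∀ k, 0 < A k)
    (hAl : Tendsto A atTop atTop) (hκ : Tendsto κ atTop (𝓝 0)) {a B : ℝ} {r : ℕ → ℝ} {r₀ : ℝ}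
    (hr : Tendsto r atTop (𝓝 r₀)) (hmcont : ContinuousOn m (Set.Ici 0)) (hm0 : m 0 = 0)
    {z : ℕ → Fin d → ℝ} (hz : ∀ k, eunorm (z k) ≤ (J k).gradBound * B)
    (hle : ∀ᶠ k in atTop, (J k).p₁ - (J k).p₂ ≤ a + α * r k + (J k).error β L Bb Bσ
      + m (eunorm ((J k).x - (J k).y) * (1 + eunorm (z k)))) :
    P ≤ a + α * r₀ := by
  have hm : Tendsto (fun k => m (eunorm ((J k).x - (J k).y) * (1 + eunorm (z k)))) atTop (𝓝 0) :=
    hm0 ▸ (hmcont 0 Set.self_mem_Ici).tendsto.comp (tendsto_nhdsWithin_iff.2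
      ⟨DoubledJets.tendsto_eunorm_mul_one_add J hA hκ hz, Eventually.of_forall fun k =>
        mul_nonneg (eunorm_nonneg _) (by linarith [eunorm_nonneg (z k)])⟩)
  have hlim := (((((hr.const_mul α).const_add a).add
    (DoubledJets.tendsto_error J β L Bb Bσ hA hAl hκ)).add hm).add hκ)
  simp only [add_zero] at hlim
  refine ge_of_tendsto hlim ?_
  filter_upwards [hle] with k hk
  linarith [(J k).le_p₁_sub_p₂]

theorem time_slope_le_of_sub_le (hu : IsViscSubsolution ℓ b σ f g h₁ φ ψ u)
    (hv : IsViscSupersolution ℓ b σ f g h₂ φ ψ v) (hℓ : ContDiff ℝ 2 ℓ)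
    (hK : IsCompact {x | ℓ x ≤ 0}) (hgrad : ∀ x, ℓ x = 0 → eunorm (gradVec ℓ x) = 1)
    (hb : ContinuousOn (fun p : ℝ × (Fin d → ℝ) => b p.1 p.2) (Set.Ici 0 ×ˢ {x | ℓ x ≤ 0}))
    (hσ : ContinuousOn (fun p : ℝ × (Fin d → ℝ) => σ p.1 p.2) (Set.Ici 0 ×ˢ {x | ℓ x ≤ 0}))
    (hf : ContinuousOn
      (fun p : ℝ × (Fin d → ℝ) × ℝ × (Fin d → ℝ) => f p.1 p.2.1 p.2.2.1 p.2.2.2)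
      (Set.Ici 0 ×ˢ {x | ℓ x ≤ 0} ×ˢ Set.univ ×ˢ Set.univ))
    (hg : ContinuousOn (fun p : ℝ × (Fin d → ℝ) × ℝ => g p.1 p.2.1 p.2.2)
      (Set.Ici 0 ×ˢ {x | ℓ x = 0} ×ˢ Set.univ))
    (hS : StructureConditions {x | ℓ x ≤ 0} b σ f m T α β L Bb Bσ)
    (hmcont : ContinuousOn m (Set.Ici 0)) (hm0 : m 0 = 0)
    (hφ : ProperConvexLsc φ) (hψ : ProperConvexLsc ψ)
    (hgdec : ∀ t ≥ (0 : ℝ), ∀ x, ℓ x = 0 → ∀ r r' : ℝ, r ≤ r' → g t x r' ≤ g t x r)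
    (ht₀ : t₀ ∈ Set.Ioo 0 T) (hx₀ : ℓ x₀ ≤ 0) (hlt : v t₀ x₀ < u t₀ x₀) (hδ : 0 < δ) (hc : 0 ≤ c)
    (hle : ∀ t ∈ Set.Icc 0 T, ∀ x, ℓ x ≤ 0 → u t x - v t x ≤ u t₀ x₀ - v t₀ x₀ + P * (t - t₀)
      + dotp (δ • gradVec ℓ x₀) (x - x₀) + C * (t - t₀) ^ 2 + c * eunorm (x - x₀) ^ 2) :
    P ≤ c * Bσ ^ 2 + eunorm (δ • gradVec ℓ x₀) * (Bb + β * Bσ)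
      + α * (u t₀ x₀ - v t₀ x₀) := by
  have hcyl : Set.Icc 0 T ×ˢ {x | ℓ x ≤ 0} ⊆ Set.Ici 0 ×ˢ {x | ℓ x ≤ 0} :=
    Set.prod_mono_left fun _ ht => ht.1
  obtain ⟨R, hR⟩ := ((isCompact_Icc (a := 0) (b := T)).prod hK).exists_bound_of_continuousOn
    (hv.1.mono hcyl)
  obtain ⟨a, hφu, hφv⟩ := hφ.exists_eventually_rightD_le_le_leftD (hv.2.2.1 _ ht₀.1 _ hx₀)
    (hu.2.2.1 _ ht₀.1 _ hx₀) hlt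
  obtain ⟨s, hs⟩ := exists_boundary_slope hψ (hu.2.2.2.1 t₀ ht₀.1 x₀) (hv.2.2.2.1 t₀ ht₀.1 x₀) hlt
    (fun h₀ => hgdec t₀ ht₀.1.le x₀ h₀ _ _ hlt.le) (half_pos hδ)
  have hQ : (s + δ / 2) • gradVec ℓ x₀ - (s - δ / 2) • gradVec ℓ x₀ = δ • gradVec ℓ x₀ := by module
  rw [← hQ] at hle ⊢
  obtain ⟨A, κ, η, hA, hAl, hκ, hη, ⟨J⟩⟩ := exists_seq_doubledJets hK (hu.1.mono hcyl)
    (hv.1.mono hcyl) ht₀ hx₀ hle fun A hA κ => exists_isTimeModulus (T := T) hK hb hσ hf R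
      ((2 * A * κ + (eunorm ((s + δ / 2) • gradVec ℓ x₀) + eunorm ((s - δ / 2) • gradVec ℓ x₀))
        + κ) * Bσ)
      (inv_pos.2 hA)
  have hru := DoubledJets.tendsto_value_t_x J hu.1 ht₀.1.le hx₀ hκ
  have hrv := DoubledJets.tendsto_value_s_y J hv.1 ht₀.1.le hx₀ hκ
  refine le_of_forall_p₁_sub_p₂_le (β := β) (L := L) (Bb := Bb) (Bσ := Bσ) J hA hAl hκ
    (hru.sub hrv) hmcont hm0 (fun k => (J k).eunorm_vecMul_le (hA k).le hS) ?_
  filter_upwards [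
    hu.eventually_vop_add_nonpos hℓ hK.isBounded (hgrad x₀) hg ht₀.1 hx₀ J hA hκ hφu
      fun h₀ => (hs h₀).1,
    hv.eventually_vop_add_nonneg hℓ hK.isBounded (hgrad x₀) hg ht₀.1 hx₀ J hA hκ hφv
      fun h₀ => (hs h₀).2,
    hrv.eventually_lt hru hlt] with k huk hvk hltk
  exact (J k).p₁_sub_p₂_le (hA k).le hc hS (hη k)
    (hR (_, _) ⟨Set.Ioo_subset_Icc_self (J k).s_mem, (J k).y_mem⟩) hltk huk hvk

end TimeSlope

/-! ### Maximizing the discounted difference -/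

section DiscountedMaximum

variable {X : Type*} [TopologicalSpace X] {K : Set X} {w : ℝ → X → ℝ} {ℓ : X → ℝ} {T t₀ : ℝ}
  {x₀ : X}

theorem exists_touching_exp (hK : IsCompact K)
    (hw : ContinuousOn (fun p : ℝ × X => w p.1 p.2) (Set.Icc 0 T ×ˢ K)) {ρ θ₀ : ℝ}
    (hinit : ∀ x ∈ K, w 0 x < θ₀) (hfinal : ∀ x ∈ K, w T x < θ₀ * Real.exp (ρ * T))
    (ht₀ : t₀ ∈ Set.Icc 0 T) (hx₀ : x₀ ∈ K) (hθ₀ : θ₀ * Real.exp (ρ * t₀) ≤ w t₀ x₀) :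
    ∃ θ ≥ θ₀, ∃ t ∈ Set.Ioo 0 T, ∃ x ∈ K, w t x = θ * Real.exp (ρ * t) ∧
      ∀ s ∈ Set.Icc 0 T, ∀ y ∈ K, w s y ≤ θ * Real.exp (ρ * s) := by
  obtain ⟨⟨t, x⟩, ⟨ht, hx⟩, hmax⟩ := (isCompact_Icc.prod hK).exists_isMaxOn
    ⟨(t₀, x₀), ht₀, hx₀⟩ (hw.div (g := fun p => Real.exp (ρ * p.1)) (by fun_prop)
      fun p _ => (Real.exp_pos _).ne')
  set θ := w t x / Real.exp (ρ * t) with hθ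
  have heq : w t x = θ * Real.exp (ρ * t) := (div_mul_cancel₀ _ (Real.exp_pos _).ne').symm
  have hle : ∀ s ∈ Set.Icc 0 T, ∀ y ∈ K, w s y ≤ θ * Real.exp (ρ * s) := fun s hs y hy =>
    (div_le_iff₀ (Real.exp_pos _)).1 (hmax (a := (s, y)) ⟨hs, hy⟩)
  have hθ₀θ : θ₀ ≤ θ := le_of_mul_le_mul_right (hθ₀.trans (hle t₀ ht₀ x₀ hx₀)) (Real.exp_pos _)
  refine ⟨θ, hθ₀θ, t, ⟨ht.1.lt_of_ne ?_, ht.2.lt_of_ne ?_⟩, x, hx, heq, hle⟩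
  · rintro rfl
    rw [mul_zero, Real.exp_zero, mul_one] at heq
    exact ((hinit x hx).trans_le hθ₀θ).ne heq
  · rintro rfl
    exact ((hfinal x hx).trans_le
      (mul_le_mul_of_nonneg_right hθ₀θ (Real.exp_pos _).le)).ne heq

-- The discount `ρ` is chosen before the penalization `δ`: a large `ρ` keeps the maximum away from
-- the final time `t₀ + 1`, and then a small `δ` keeps it away from the initial time.
theorem exists_touching_exp_add_mul (hK : IsCompact K)
    (hw : ContinuousOn (fun p : ℝ × X => w p.1 p.2) (Set.Icc 0 (t₀ + 1) ×ˢ K))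
    (hℓ : ContinuousOn ℓ K) (hℓ_nonpos : ∀ x ∈ K, ℓ x ≤ 0) (hinit : ∀ x ∈ K, w 0 x ≤ 0)
    (ht₀ : 0 ≤ t₀) (hx₀ : x₀ ∈ K) (hpos : 0 < w t₀ x₀) {a : ℝ} (ha : 0 ≤ a) (B : ℝ) :
    ∃ ρ ≥ a, ∃ δ > 0, ∃ θ, δ * B < θ ∧ ∃ t ∈ Set.Ioo 0 (t₀ + 1), ∃ x ∈ K, 0 < w t x ∧
      w t x = θ * Real.exp (ρ * t) + δ * ℓ x ∧
      ∀ s ∈ Set.Icc 0 (t₀ + 1), ∀ y ∈ K, w s y ≤ θ * Real.exp (ρ * s) + δ * ℓ y := by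
  obtain ⟨M, hM⟩ := (isCompact_Icc.prod hK).exists_bound_of_continuousOn hw
  obtain ⟨N, hN⟩ := hK.exists_bound_of_continuousOn hℓ
  obtain ⟨ρ, hρM, hρ⟩ := (((Real.tendsto_exp_atTop.const_mul_atTop hpos).eventually_gt_atTop
    (M + 1)).and (eventually_ge_atTop a)).exists
  have hθ₀ : 0 < w t₀ x₀ * Real.exp (-(ρ * t₀)) := mul_pos hpos (Real.exp_pos _)
  set θ₀ := w t₀ x₀ * Real.exp (-(ρ * t₀)) with hθ₀_def
  obtain ⟨δ, hδ, hδlt⟩ := exists_pos_mul_lt (lt_min hθ₀ one_pos) (N + |B|)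
  obtain ⟨hδθ, hδ1⟩ := lt_min_iff.1 hδlt
  have hδB : δ * B ≤ |B| * δ := by rw [mul_comm]; gcongr; exact le_abs_self B
  have hBδ : 0 ≤ |B| * δ := by positivity
  have hN0 : 0 ≤ N := (norm_nonneg _).trans (hN x₀ hx₀)
  have hNδ : 0 ≤ N * δ := by positivity
  have hδℓ (x) (hx : x ∈ K) : -(δ * ℓ x) ≤ N * δ := by
    rw [mul_comm N, ← mul_neg]
    exact mul_le_mul_of_nonneg_left ((neg_le_abs _).trans (hN x hx)) hδ.le
  have hfinal (x) (hx : x ∈ K) : w (t₀ + 1) x - δ * ℓ x < θ₀ * Real.exp (ρ * (t₀ + 1)) := by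
    have hexp : θ₀ * Real.exp (ρ * (t₀ + 1)) = w t₀ x₀ * Real.exp ρ := by
      rw [hθ₀_def, mul_assoc, ← Real.exp_add]; ring_nf
    linarith [hδℓ x hx, (le_abs_self _).trans (hM (t₀ + 1, x) ⟨⟨by linarith, le_rfl⟩, hx⟩)]
  have hstart : θ₀ * Real.exp (ρ * t₀) ≤ w t₀ x₀ - δ * ℓ x₀ := by
    rw [hθ₀_def, mul_assoc, ← Real.exp_add, neg_add_cancel, Real.exp_zero, mul_one]
    linarith [mul_nonpos_of_nonneg_of_nonpos hδ.le (hℓ_nonpos x₀ hx₀)]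
  obtain ⟨θ, hθ, t, ht, x, hx, heq, hle⟩ := exists_touching_exp
    (w := fun t x => w t x - δ * ℓ x) hK
    (hw.sub ((hℓ.comp continuousOn_snd fun _ hp => hp.2).const_smul δ))
    (fun x hx => by linarith [hinit x hx, hδℓ x hx]) hfinal ⟨ht₀, by linarith⟩ hx₀ hstart
  have hθt : θ ≤ θ * Real.exp (ρ * t) := le_mul_of_one_le_right (hθ₀.le.trans hθ)
    (Real.one_le_exp (mul_nonneg (ha.trans hρ) ht.1.le))
  exact ⟨ρ, hρ, δ, hδ, θ, by linarith, t, ht, x, hx, by linarith [hδℓ x hx], by linarith,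
    fun s hs y hy => by linarith [hle s hs y hy]⟩

theorem exists_exp_mul_le (ρ T : ℝ) : ∃ C, ∀ t ∈ Set.Icc 0 T, ∀ s ∈ Set.Icc 0 T,
    Real.exp (ρ * s) ≤ Real.exp (ρ * t) + ρ * Real.exp (ρ * t) * (s - t) + C * (s - t) ^ 2 := by
  obtain ⟨C, -, h⟩ := exists_norm_sub_sub_fderiv_le (f := fun t : ℝ => Real.exp (ρ * t))
    (by fun_prop) (Metric.isBounded_Icc 0 T)
  refine ⟨C, fun t ht s hs => ?_⟩
  have hderiv : HasDerivAt (fun t : ℝ => Real.exp (ρ * t)) (Real.exp (ρ * t) * ρ) t := by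
    simpa using ((hasDerivAt_id t).const_mul ρ).exp
  have hst := (le_abs_self _).trans (h t ht s hs)
  rw [hderiv.hasFDerivAt.fderiv, Real.norm_eq_abs, sq_abs,
    ContinuousLinearMap.toSpanSingleton_apply, smul_eq_mul] at hst
  linarith

theorem le_of_mul_exp_le_add {α ρ θ t r c : ℝ} (hρ : |α| + 1 ≤ ρ) (ht : 0 ≤ t) (hθ : 0 ≤ θ)
    (hr : 0 ≤ r) (hrθ : r ≤ θ * Real.exp (ρ * t)) (h : θ * (ρ * Real.exp (ρ * t)) ≤ c + α * r) :
    θ ≤ c := by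
  have hαr : α * r ≤ |α| * (θ * Real.exp (ρ * t)) :=
    mul_le_mul (le_abs_self α) hrθ hr (abs_nonneg α)
  calc
    θ ≤ θ * Real.exp (ρ * t) := le_mul_of_one_le_right hθ
      (Real.one_le_exp (mul_nonneg (by linarith [abs_nonneg α]) ht))
    _ ≤ (ρ - |α|) * (θ * Real.exp (ρ * t)) :=
      le_mul_of_one_le_left (by positivity) (by linarith)
    _ ≤ c := by linarith

end DiscountedMaximum

section Comparison

variable {d : ℕ} {ℓ : (Fin d → ℝ) → ℝ} {K : Set (Fin d → ℝ)} {b : ℝ → (Fin d → ℝ) → (Fin d → ℝ)}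
  {σ : ℝ → (Fin d → ℝ) → Matrix (Fin d) (Fin d) ℝ} {f : ℝ → (Fin d → ℝ) → ℝ → (Fin d → ℝ) → ℝ}
  {m : ℝ → ℝ} {T α β L : ℝ}

theorem exists_quadratic_bound_of_touching_exp {w : ℝ → (Fin d → ℝ) → ℝ} {ρ θ δ C t : ℝ}
    {x : Fin d → ℝ} (hθ : 0 ≤ θ) (hδ : 0 ≤ δ) (ht : t ∈ Set.Icc 0 T)
    (hC : ∀ y ∈ K, |ℓ y - ℓ x - dotp (gradVec ℓ x) (y - x)| ≤ C * eunorm (y - x) ^ 2)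
    (heq : w t x = θ * Real.exp (ρ * t) + δ * ℓ x)
    (hle : ∀ s ∈ Set.Icc 0 T, ∀ y ∈ K, w s y ≤ θ * Real.exp (ρ * s) + δ * ℓ y) :
    ∃ C', ∀ s ∈ Set.Icc 0 T, ∀ y ∈ K, w s y ≤ w t x + θ * (ρ * Real.exp (ρ * t)) * (s - t)
      + dotp (δ • gradVec ℓ x) (y - x) + C' * (s - t) ^ 2 + δ * C * eunorm (y - x) ^ 2 := by
  obtain ⟨C', hC'⟩ := exists_exp_mul_le ρ T
  refine ⟨θ * C', fun s hs y hy => ?_⟩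
  have hdot : dotp (δ • gradVec ℓ x) (y - x) = δ * dotp (gradVec ℓ x) (y - x) := by
    rw [dotp_eq_dotProduct, dotp_eq_dotProduct, smul_dotProduct, smul_eq_mul]
  have hexp := mul_le_mul_of_nonneg_left (hC' t ht s hs) hθ
  have hTaylor := mul_le_mul_of_nonneg_left ((le_abs_self _).trans (hC y hy)) hδ
  linarith [hle s hs y hy]

theorem exists_structureConditions (hK : IsCompact K)
    (hb : ContinuousOn (fun p : ℝ × (Fin d → ℝ) => b p.1 p.2) (Set.Ici 0 ×ˢ K))
    (hσ : ContinuousOn (fun p : ℝ × (Fin d → ℝ) => σ p.1 p.2) (Set.Ici 0 ×ˢ K)) (hβ : 0 ≤ β)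
    (hLip : ∀ t ∈ Set.Icc 0 T, ∀ x ∈ K, ∀ y ∈ K,
      eunorm (b t x - b t y) + matNorm (σ t x - σ t y) ≤ L * eunorm (x - y))
    (hfα : ∀ t ∈ Set.Icc 0 T, ∀ x ∈ K, ∀ r r' z,
      (r - r') * (f t x r z - f t x r' z) ≤ α * (r - r') ^ 2)
    (hfβ : ∀ t ∈ Set.Icc 0 T, ∀ x ∈ K, ∀ r z z', |f t x r z - f t x r z'| ≤ β * eunorm (z - z'))
    (hfm : ∀ t ∈ Set.Icc 0 T, ∀ x ∈ K, ∀ y ∈ K, ∀ r z,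
      |f t x r z - f t y r z| ≤ m (eunorm (x - y) * (1 + eunorm z))) :
    ∃ Bb Bσ, StructureConditions K b σ f m T α β L Bb Bσ := by
  have hcyl : Set.Icc 0 T ×ˢ K ⊆ Set.Ici 0 ×ˢ K := Set.prod_mono_left fun _ ht => ht.1
  have hcompact : IsCompact (Set.Icc 0 T ×ˢ K) := isCompact_Icc.prod hK
  obtain ⟨Bb, hBb⟩ := hcompact.exists_bound_of_continuousOn
    (continuous_eunorm.comp_continuousOn (hb.mono hcyl))
  obtain ⟨Bσ, hBσ⟩ := hcompact.exists_bound_of_continuousOn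
    (continuous_matNorm.comp_continuousOn (hσ.mono hcyl))
  exact ⟨Bb, Bσ, hβ, fun t ht x hx => (le_abs_self _).trans (hBb (t, x) ⟨ht, hx⟩),
    fun t ht x hx => (le_abs_self _).trans (hBσ (t, x) ⟨ht, hx⟩),
    fun t ht x hx y hy => by linarith [hLip t ht x hx y hy, matNorm_nonneg (σ t x - σ t y)],
    fun t ht x hx y hy => by linarith [hLip t ht x hx y hy, eunorm_nonneg (b t x - b t y)],
    hfα, hfβ, hfm⟩

end Comparison

theorem pvi_comparison_general {d : ℕ} {ℓ : (Fin d → ℝ) → ℝ}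
    {b : ℝ → (Fin d → ℝ) → (Fin d → ℝ)} {σ : ℝ → (Fin d → ℝ) → Matrix (Fin d) (Fin d) ℝ}
    {f : ℝ → (Fin d → ℝ) → ℝ → (Fin d → ℝ) → ℝ} {g : ℝ → (Fin d → ℝ) → ℝ → ℝ}
    {h₁ h₂ : (Fin d → ℝ) → ℝ} {φ ψ : ℝ → EReal} {m : ℝ → ℝ} {u v : ℝ → (Fin d → ℝ) → ℝ}
    (hℓ : ContDiff ℝ 2 ℓ) (hgrad : ∀ x, ℓ x = 0 → eunorm (gradVec ℓ x) = 1)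
    (hD : Bornology.IsBounded {x | ℓ x < 0})
    (hb : ContinuousOn (fun p : ℝ × (Fin d → ℝ) => b p.1 p.2) (Set.Ici 0 ×ˢ {x | ℓ x ≤ 0}))
    (hσ : ContinuousOn (fun p : ℝ × (Fin d → ℝ) => σ p.1 p.2) (Set.Ici 0 ×ˢ {x | ℓ x ≤ 0}))
    (hf : ContinuousOn
      (fun p : ℝ × (Fin d → ℝ) × ℝ × (Fin d → ℝ) => f p.1 p.2.1 p.2.2.1 p.2.2.2)
      (Set.Ici 0 ×ˢ {x | ℓ x ≤ 0} ×ˢ Set.univ ×ˢ Set.univ))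
    (hg : ContinuousOn (fun p : ℝ × (Fin d → ℝ) × ℝ => g p.1 p.2.1 p.2.2)
      (Set.Ici 0 ×ˢ {x | ℓ x = 0} ×ˢ Set.univ))
    (hq : ∀ T > 0, ∃ α β L : ℝ, 0 ≤ β ∧
      (∀ t ∈ Set.Icc 0 T, ∀ x, ℓ x ≤ 0 → ∀ y, ℓ y ≤ 0 →
        eunorm (b t x - b t y) + matNorm (σ t x - σ t y) ≤ L * eunorm (x - y)) ∧
      (∀ t ∈ Set.Icc 0 T, ∀ x, ℓ x ≤ 0 → ∀ r r' z,
        (r - r') * (f t x r z - f t x r' z) ≤ α * (r - r') ^ 2) ∧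
      (∀ t ∈ Set.Icc 0 T, ∀ x, ℓ x ≤ 0 → ∀ r z z',
        |f t x r z - f t x r z'| ≤ β * eunorm (z - z')))
    (hφ : ProperConvexLsc φ) (hψ : ProperConvexLsc ψ)
    (hgdec : ∀ t ≥ (0 : ℝ), ∀ x, ℓ x = 0 → ∀ r r' : ℝ, r ≤ r' → g t x r' ≤ g t x r)
    (hmcont : ContinuousOn m (Set.Ici 0)) (hm0 : m 0 = 0)
    (hfm : ∀ t ≥ (0 : ℝ), ∀ x, ℓ x ≤ 0 → ∀ y, ℓ y ≤ 0 → ∀ r z,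
      |f t x r z - f t y r z| ≤ m (eunorm (x - y) * (1 + eunorm z)))
    (hh : ∀ x, ℓ x ≤ 0 → h₁ x ≤ h₂ x)
    (hu : IsViscSubsolution ℓ b σ f g h₁ φ ψ u) (hv : IsViscSupersolution ℓ b σ f g h₂ φ ψ v) :
    ∀ t ≥ (0 : ℝ), ∀ x, ℓ x ≤ 0 → u t x ≤ v t x := by
  intro t₀ ht₀ x₀ hx₀
  by_contra! hlt
  have hK := isCompact_setOf_nonpos hℓ.continuous hgrad hD
  obtain ⟨α, β, L, hβ, hLip, hfα, hfβ⟩ := hq (t₀ + 1) (by linarith)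
  obtain ⟨Bb, Bσ, hS⟩ := exists_structureConditions hK hb hσ hβ hLip hfα hfβ
    fun t ht => hfm t ht.1
  obtain ⟨C, hC, hTaylor⟩ := exists_abs_sub_sub_dotp_gradVec_le hℓ hK.isBounded
  obtain ⟨B, hB⟩ := hK.exists_bound_of_continuousOn (((continuous_eunorm.comp
    (continuous_gradVec (hℓ.of_le one_le_two))).mul_const (Bb + β * Bσ)).const_add
      (C * Bσ ^ 2)).continuousOn
  obtain ⟨ρ, hρ, δ, hδ, θ, hθ, t, ht, x, hx, hpos, heq, hle⟩ := exists_touching_exp_add_mul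
    (w := fun t x => u t x - v t x) hK
    ((hu.1.sub hv.1).mono (Set.prod_mono_left fun _ ht => ht.1)) hℓ.continuous.continuousOn
    (fun _ hx => hx) (fun x hx => sub_nonpos.2 ((hu.2.1 x hx).trans_le
      ((hh x hx).trans_eq (hv.2.1 x hx).symm))) ht₀ hx₀ (sub_pos.2 hlt)
    (by positivity : 0 ≤ |α| + 1) B
  have hδB : δ * (C * Bσ ^ 2 + eunorm (gradVec ℓ x) * (Bb + β * Bσ)) ≤ δ * B :=
    mul_le_mul_of_nonneg_left ((le_abs_self _).trans (hB x hx)) hδ.le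
  have hθ0 : 0 < θ := (mul_nonneg hδ.le ((norm_nonneg _).trans (hB x hx))).trans_lt hθ
  obtain ⟨C', hquad⟩ := exists_quadratic_bound_of_touching_exp hθ0.le hδ.le
    (Set.Ioo_subset_Icc_self ht) (hTaylor x hx) heq hle
  have hθ_le := le_of_mul_exp_le_add hρ ht.1.le hθ0.le hpos.le
    (by linarith [mul_nonpos_of_nonneg_of_nonpos hδ.le hx])
    (time_slope_le_of_sub_le hu hv hℓ hK hgrad hb hσ hf hg hS hmcont hm0 hφ hψ hgdec ht hx
      (sub_pos.1 hpos) hδ (mul_nonneg hδ.le hC) hquad)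
  rw [eunorm_smul, abs_of_pos hδ] at hθ_le
  linarith

/-- **Comparison principle** (proof of Theorem 3 of Maticiuc–Răşcanu): under
the standing assumptions together with the decreasingness of `r ↦ g(t,x,r)` and
a modulus of continuity for `f` in the space variable, any viscosity
subsolution `u` lies below any viscosity supersolution `v` on `[0,T] × cl(D)`
(both starting from the same initial datum `h`). -/
theorem pvi_comparison
    {d : ℕ}
    (ℓ : (Fin d → ℝ) → ℝ)
    (b : ℝ → (Fin d → ℝ) → (Fin d → ℝ))
    (σ : ℝ → (Fin d → ℝ) → Matrix (Fin d) (Fin d) ℝ)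
    (f : ℝ → (Fin d → ℝ) → ℝ → (Fin d → ℝ) → ℝ)
    (g : ℝ → (Fin d → ℝ) → ℝ → ℝ)
    (h : (Fin d → ℝ) → ℝ)
    (φ ψ : ℝ → EReal)
    -- the domain `D = {ℓ < 0}`, with boundary `Bd(D) = {ℓ = 0}`
    (hℓreg : ContDiff ℝ 3 ℓ) (hℓbdd : ∃ C : ℝ, ∀ x, |ℓ x| ≤ C)
    (hℓnorm : ∀ x, ℓ x = 0 → eunorm (gradVec ℓ x) = 1)
    (hDconn : IsConnected {x : Fin d → ℝ | ℓ x < 0})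
    (hDbdd : Bornology.IsBounded {x : Fin d → ℝ | ℓ x < 0})
    -- continuity of the data
    (hb : ContinuousOn (fun p : ℝ × (Fin d → ℝ) => b p.1 p.2)
      (Set.Ici 0 ×ˢ Set.univ))
    (hσ : ContinuousOn (fun p : ℝ × (Fin d → ℝ) => σ p.1 p.2)
      (Set.Ici 0 ×ˢ Set.univ))
    (hf : ContinuousOn
      (fun p : ℝ × (Fin d → ℝ) × ℝ × (Fin d → ℝ) => f p.1 p.2.1 p.2.2.1 p.2.2.2)
      (Set.Ici 0 ×ˢ {x | ℓ x ≤ 0} ×ˢ Set.univ ×ˢ Set.univ))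
    (hg : ContinuousOn (fun p : ℝ × (Fin d → ℝ) × ℝ => g p.1 p.2.1 p.2.2)
      (Set.Ici 0 ×ˢ {x | ℓ x = 0} ×ˢ Set.univ))
    (hh : ContinuousOn h {x | ℓ x ≤ 0})
    -- quantitative assumptions on `b, σ, f, g`
    (hq : ∀ T > (0:ℝ), ∃ α L β γ : ℝ, 0 ≤ L ∧ 0 ≤ β ∧ 0 ≤ γ ∧
      (∀ t ∈ Set.Icc (0:ℝ) T, ∀ x x' : Fin d → ℝ,
        eunorm (b t x - b t x') + matNorm (σ t x - σ t x') ≤ L * eunorm (x - x')) ∧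
      (∀ t ∈ Set.Icc (0:ℝ) T, ∀ x, ℓ x ≤ 0 → ∀ y y' : ℝ, ∀ z : Fin d → ℝ,
        (y - y') * (f t x y z - f t x y' z) ≤ α * (y - y')^2) ∧
      (∀ t ∈ Set.Icc (0:ℝ) T, ∀ x, ℓ x ≤ 0 → ∀ y : ℝ, ∀ z z' : Fin d → ℝ,
        |f t x y z - f t x y z'| ≤ β * eunorm (z - z')) ∧
      (∀ t ∈ Set.Icc (0:ℝ) T, ∀ x, ℓ x ≤ 0 → ∀ y : ℝ,
        |f t x y 0| ≤ γ * (1 + |y|)) ∧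
      (∀ t ∈ Set.Icc (0:ℝ) T, ∀ x, ℓ x = 0 → ∀ y y' : ℝ,
        (y - y') * (g t x y - g t x y') ≤ α * (y - y')^2) ∧
      (∀ t ∈ Set.Icc (0:ℝ) T, ∀ x, ℓ x = 0 → ∀ y : ℝ,
        |g t x y| ≤ γ * (1 + |y|)))
    -- assumptions on `φ, ψ`
    (hφ : ProperConvexLsc φ) (hψ : ProperConvexLsc ψ)
    (hφ0 : φ 0 = 0) (hψ0 : ψ 0 = 0)
    (hφpos : ∀ y : ℝ, 0 ≤ φ y) (hψpos : ∀ y : ℝ, 0 ≤ ψ y)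
    (hM : ∃ M : ℝ, 0 < M ∧ (∀ x, ℓ x ≤ 0 → φ (h x) ≤ (M : EReal)) ∧
      (∀ x, ℓ x = 0 → ψ (h x) ≤ (M : EReal)))
    -- compatibility assumptions, expressed through the Yosida approximations
    -- `U = ∇φ_ε(y)`, `V = ∇ψ_ε(y)` (the unique solutions of `U ∈ ∂φ(y−εU)`,
    -- `V ∈ ∂ψ(y−εV)`)
    (hcompat : ∀ ε > (0:ℝ), ∀ t ≥ (0:ℝ), ∀ x, ℓ x = 0 → ∀ x', ℓ x' ≤ 0 →
      ∀ y : ℝ, ∀ zv : Fin d → ℝ, ∀ U V : ℝ,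
        U ∈ subd φ (y - ε * U) → V ∈ subd ψ (y - ε * V) →
        U * g t x y ≤ max 0 (V * g t x y) ∧
        V * f t x' y zv ≤ max 0 (U * f t x' y zv))
    -- additional assumptions for uniqueness
    (hgdec : ∀ t ≥ (0:ℝ), ∀ x, ℓ x = 0 → ∀ r r' : ℝ, r ≤ r' → g t x r' ≤ g t x r)
    (m : ℝ → ℝ)
    (hmcont : ContinuousOn m (Set.Ici 0)) (hm0 : m 0 = 0)
    (hmpos : ∀ r : ℝ, 0 ≤ r → 0 ≤ m r)
    (hfm : ∀ t ≥ (0:ℝ), ∀ x y : Fin d → ℝ, ℓ x ≤ 0 → ℓ y ≤ 0 →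
      ∀ r : ℝ, ∀ p : Fin d → ℝ,
        |f t x r p - f t y r p| ≤ m (eunorm (x - y) * (1 + eunorm p)))
    (T : ℝ) (hT : 0 < T)
    (u v : ℝ → (Fin d → ℝ) → ℝ)
    (hu : IsViscSubsolution ℓ b σ f g h φ ψ u)
    (hv : IsViscSupersolution ℓ b σ f g h φ ψ v) :
    ∀ t ∈ Set.Icc (0:ℝ) T, ∀ x : Fin d → ℝ, ℓ x ≤ 0 → u t x ≤ v t x := by
  intro t ht
  refine pvi_comparison_general (hℓreg.of_le (by norm_num)) hℓnorm hDbdd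
    (hb.mono (Set.prod_mono_right (Set.subset_univ _)))
    (hσ.mono (Set.prod_mono_right (Set.subset_univ _))) hf hg (fun T hT => ?_) hφ hψ hgdec hmcont
    hm0 (fun t ht x hx y hy => hfm t ht x y hx hy) (fun _ _ => le_rfl) hu hv t ht.1
  obtain ⟨α, L, β, -, -, hβ, -, hLip, hfα, hfβ, -⟩ := hq T hT
  exact ⟨α, β, L, hβ, fun t ht x _ y _ => hLip t ht x y, hfα, hfβ⟩
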